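/- Bias–variance of standard fast CUR under approximate leverage score sampling (Corollary F.2): There exist absolute constants C₀ > 0 and C' > 0 such that the following holds. Let n ≥ 3 and p ≥ 3, let X, C, R be as in the CUR model with Cᵀ C and R Rᵀ invertible, suppose every nonzero row c_i of C satisfies ‖c_i‖²/‖C‖_F² ≥ n^{−α_c} and every nonzero row ρ_j of Rᵀ satisfies ‖ρ_j‖²/‖Rᵀ‖_F² ≥ p^{−α_r} for constants α_c, α_r > 0. Let θ₋C, θ₋R ∈ [1/2,1] and θ₊C, θ₊R ≥ 1, and let the sampling distributions satisfy ℓ_i(C)/(c·θ₊C) ≤ π_C i ≤ ℓ_i(C)/(c·θ₋C) for all i and ℓ_j(Rᵀ)/(r·θ₊R) ≤ π_R j ≤ ℓ_j(Rᵀ)/(r·θ₋R) for all j. For every δ with 0 < δ ≤ min{n^{−(3+α_c)}, p^{−(3+α_r)}} and all m_c ≥ C₀ θ₊C c log(c/δ), m_r ≥ C₀ θ₊R r log(r/δ), there exists an event ζ ⊆ Ω with P(ζ) ≥ 1 − δ on which all inverted matrices in Ũ are invertible, such that the standard fast CUR estimator satisfies Bias_ζ(Ũ) ≤ ε² · L(U_CUR)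 and Var_ζ(Ũ) ≤ Δ_CUR + ε · L(U_CUR), where ε = C' · ((log n / log log n)√(θ₊C³ c³/m_c³) + ε_{θ,c} θ₊C c/m_c + (log p / log log p)√(θ₊R³ r³/m_r³) + ε_{θ,r} θ₊R r/m_r), ε_{θ,c} = max{θ₋C⁻¹ − 1, 1 − θ₊C⁻¹}, ε_{θ,r} = max{θ₋R⁻¹ − 1, 1 − θ₊R⁻¹}, Δ_CUR = (Δ₁ + Δ₂)² + √(ε · L(U_CUR)) · (Δ₁ + Δ₂), Δ₁ = ‖diag(√(ℓ_i(C)/(m_c · π_C i)))_{1≤i≤n} · (I_n − C (Cᵀ C)⁻¹ Cᵀ) · X‖_F and Δ₂ = ‖diag(√(ℓ_j(Rᵀ)/(m_r · π_R j)))_{1≤j≤p} · (I_p − Rᵀ (R Rᵀ)⁻¹ R) · Xᵀ‖_F. -/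

import Mathlib

/-!
Write `N`, `M` for the orthogonal projectors onto the column spaces of `C` and `Rᵀ`. Then
`C U_CUR R = N X M`, and by Pythagoras `L(U) - L(U_CUR) = ‖C U R - N X M‖²` for every core `U`
(`excess_loss`). The fast estimator satisfies `C Ũ R = a X bᵀ`, where `a` and `b` are the random oblique
projectors of the two sketched least squares problems (`obl`), which fix the ranges of `N` and `M`. Hence
(`error_split`)
`a X bᵀ - N X M = a (1 - N) X M + (b (1 - M) Xᵀ N)ᵀ + a (1 - N) X (1 - M) bᵀ`,
and, as the two samples are independent, everything reduces to the mean and the second moment of `a Y` for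
`N Y = 0`, conditionally on a good event (`LevSampling.one_sided`).

In an orthonormal basis, `C = Q T`, the rows of `Q` and `Y` scaled by `1/√(m π_i)` are vectors `u_i`, `v_i`
with `∑ π_i u_i u_iᵀ = m⁻¹`, `∑ π_i u_i v_iᵀ = 0` and `|u_i|² = ℓ_i / (m π_i) ≤ κ := θ₊ c / m`. One has
`a Y = Q K⁻¹ G`, where `K = ∑ u uᵀ` and `G = ∑ u vᵀ` are sums over the sample.

* Good event: `K ⪰ 1/8`. Its complement is bounded by a matrix Chernoff argument (`chernoff`) with potential
  `tr (1 + K)^{-N}`, `N = 2 ^ j` of order `1/κ`. The effect of one further draw on the potential is controlled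
  by the Sherman-Morrison formula and by the Lieb-Thirring inequality, which for exponents `2 ^ j` follows from
  Cauchy-Schwarz by induction (`lieb_thirring_two_pow`).
* Variance: `K⁻¹ G = G - K⁻¹ (K - 1) G`. The first term has second moment `∑ ℓ_i / (m π_i) |y_i|²` at most, the
  leading term `Δ²`. Since `K - 1` and `G` are centred sums over the same draws, the second one is smaller by a
  factor of order `√κ` (`Iso.product_moment`, `Iso.good_variance`).
* Bias: by exchangeability the mean of `K⁻¹ G` is `m` times that of `(K' + u uᵀ)⁻¹ u vᵀ`, with `K'` the Gram
  matrix of `m - 1` draws and `u vᵀ` an independent draw. This is `(1 + uᵀ K'⁻¹ u)⁻¹ K'⁻¹ u vᵀ` by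
  Sherman-Morrison. If the scalar factor were constant, the mean would vanish, because `∑ π_i u_i v_iᵀ = 0`.
  Its distance from a constant is governed by the spread of `|u_i|²` about `c / m`, at most `ε_θ κ`, and by
  `K' - 1`, which contributes `κ^{3/2}` (`loo_error`, `Iso.good_bias`). Replacing goodness of `K' + u uᵀ` by
  goodness of `K'` costs an event of probability `O(κ² / c)`.

The two sides are put together in `bias_combine` and `var_combine`; the doubly projected term is a product of
two independent one-sided errors. With `log n / log log n ≥ 1`, the resulting errors are below `ε`.
-/

open Matrix Finset

noncomputable section

/-- Probability of the i.i.d. sample `ω` of `m` draws from the sampling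
distribution `π` (pmf of the product measure on `Ω = Fin m → Fin n`). -/
def samplingP {n : ℕ} (π : Fin n → ℝ) {m : ℕ} (ω : Fin m → Fin n) : ℝ :=
  ∏ s, π (ω s)

/-- The sampling matrix `S(ω) ∈ ℝ^{m×n}` with `S(ω)_{s,j} = 1/√(m π_{ω s})` if
`j = ω s` and `0` otherwise. -/
def samplingS {n : ℕ} (π : Fin n → ℝ) {m : ℕ} (ω : Fin m → Fin n) :
    Matrix (Fin m) (Fin n) ℝ :=
  Matrix.of fun s j => if j = ω s then 1 / Real.sqrt (m * π (ω s)) else 0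

/-- The `i`-th leverage score `ℓ_i(X) = x_iᵀ (Xᵀ X)⁻¹ x_i`. -/
def lev {n p : ℕ} (X : Matrix (Fin n) (Fin p) ℝ) (i : Fin n) : ℝ :=
  X i ⬝ᵥ ((Xᵀ * X)⁻¹ *ᵥ X i)

/-- Maximum importance sampling approximation factor
`θ_max(X) = max_i ℓ_i(X)/(p π_i)`. -/
def thetaMax {n p : ℕ} (X : Matrix (Fin n) (Fin p) ℝ) (π : Fin n → ℝ) : ℝ :=
  ⨆ i, lev X i / (p * π i)

/-- Probability of an event `ζ` relative to the pmf `P`. -/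
def eventProb {Ω : Type*} (P : Ω → ℝ) (ζ : Finset Ω) : ℝ :=
  ∑ ω ∈ ζ, P ω

/-- Conditional expectation `E_ζ[f] = P(ζ)⁻¹ ∑_{ω ∈ ζ} P(ω) f(ω)`. -/
def condExp {Ω V : Type*} [AddCommMonoid V] [Module ℝ V]
    (P : Ω → ℝ) (ζ : Finset Ω) (f : Ω → V) : V :=
  (eventProb P ζ)⁻¹ • ∑ ω ∈ ζ, P ω • f ω

/-- Frobenius norm `‖A‖_F = √(trace (Aᵀ A))`. -/
def frobNorm {k l : ℕ} (A : Matrix (Fin k) (Fin l) ℝ) : ℝ :=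
  Real.sqrt ((Aᵀ * A).trace)

/-- Loewner order: `A ⪯ B` iff `B − A` is positive semidefinite. -/
def loewnerLE {k : ℕ} (A B : Matrix (Fin k) (Fin k) ℝ) : Prop :=
  (B - A).PosSemidef

/-- CUR reconstruction loss `L(U) = ‖C U R − X‖_F²`. -/
def lossCUR {n p c r : ℕ} (X : Matrix (Fin n) (Fin p) ℝ)
    (Cm : Matrix (Fin n) (Fin c) ℝ) (Rm : Matrix (Fin r) (Fin p) ℝ)
    (U : Matrix (Fin c) (Fin r) ℝ) : ℝ :=
  frobNorm (Cm * U * Rm - X) ^ 2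

/-- The optimal core matrix `U_CUR = (Cᵀ C)⁻¹ Cᵀ X Rᵀ (R Rᵀ)⁻¹`. -/
def optCUR {n p c r : ℕ} (X : Matrix (Fin n) (Fin p) ℝ)
    (Cm : Matrix (Fin n) (Fin c) ℝ) (Rm : Matrix (Fin r) (Fin p) ℝ) :
    Matrix (Fin c) (Fin r) ℝ :=
  (Cmᵀ * Cm)⁻¹ * Cmᵀ * X * Rmᵀ * (Rm * Rmᵀ)⁻¹

/-- Joint pmf on the CUR sample space
`Ω = (Fin m_c → Fin n) × (Fin m_r → Fin p)`. -/
def curP {n p mc mr : ℕ} (πC : Fin n → ℝ) (πR : Fin p → ℝ)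
    (ω : (Fin mc → Fin n) × (Fin mr → Fin p)) : ℝ :=
  samplingP πC ω.1 * samplingP πR ω.2

/-- The standard fast CUR estimator
`Ũ(ω) = ((S_C C)ᵀ S_C C)⁻¹ (S_C C)ᵀ (S_C X S_Rᵀ) S_R Rᵀ (R S_Rᵀ S_R Rᵀ)⁻¹`. -/
def curUtilde {n p c r mc mr : ℕ} (X : Matrix (Fin n) (Fin p) ℝ)
    (Cm : Matrix (Fin n) (Fin c) ℝ) (Rm : Matrix (Fin r) (Fin p) ℝ)
    (πC : Fin n → ℝ) (πR : Fin p → ℝ)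
    (ω : (Fin mc → Fin n) × (Fin mr → Fin p)) : Matrix (Fin c) (Fin r) ℝ :=
  ((samplingS πC ω.1 * Cm)ᵀ * (samplingS πC ω.1 * Cm))⁻¹ *
    (samplingS πC ω.1 * Cm)ᵀ *
    (samplingS πC ω.1 * X * (samplingS πR ω.2)ᵀ) *
    (samplingS πR ω.2 * Rmᵀ) *
    (Rm * (samplingS πR ω.2)ᵀ * samplingS πR ω.2 * Rmᵀ)⁻¹

/-- `Δ₁ = ‖diag(√(ℓ_i(C)/(m_c π_{C,i}))) (I_n − C (Cᵀ C)⁻¹ Cᵀ) X‖_F`. -/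
def curDelta1 {n p c : ℕ} (X : Matrix (Fin n) (Fin p) ℝ)
    (Cm : Matrix (Fin n) (Fin c) ℝ) (πC : Fin n → ℝ) (mc : ℕ) : ℝ :=
  frobNorm (Matrix.diagonal (fun i => Real.sqrt (lev Cm i / (mc * πC i))) *
    ((1 : Matrix (Fin n) (Fin n) ℝ) - Cm * (Cmᵀ * Cm)⁻¹ * Cmᵀ) * X)

/-- `Δ₂ = ‖diag(√(ℓ_j(Rᵀ)/(m_r π_{R,j}))) (I_p − Rᵀ (R Rᵀ)⁻¹ R) Xᵀ‖_F`. -/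
def curDelta2 {n p r : ℕ} (X : Matrix (Fin n) (Fin p) ℝ)
    (Rm : Matrix (Fin r) (Fin p) ℝ) (πR : Fin p → ℝ) (mr : ℕ) : ℝ :=
  frobNorm (Matrix.diagonal (fun j => Real.sqrt (lev Rmᵀ j / (mr * πR j))) *
    ((1 : Matrix (Fin p) (Fin p) ℝ) - Rmᵀ * (Rm * Rmᵀ)⁻¹ * Rm) * Xᵀ)

/-! ### Traces of powers and rank-one updates -/

/-- Cauchy-Schwarz for the trace inner product. -/
lemma trace_mul_sq_le {a b : ℕ} (A : Matrix (Fin a) (Fin b) ℝ) (B : Matrix (Fin b) (Fin a) ℝ) :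
    (A * B).trace ^ 2 ≤ (Aᵀ * A).trace * (Bᵀ * B).trace := by
  have h := Finset.sum_mul_sq_le_sq_mul_sq (Finset.univ : Finset (Fin a × Fin b))
    (fun x => A x.1 x.2) (fun x => B x.2 x.1)
  have e1 : (A * B).trace = ∑ x : Fin a × Fin b, A x.1 x.2 * B x.2 x.1 := by
    simp [Matrix.trace, Matrix.mul_apply, Fintype.sum_prod_type]
  have e2 : (Aᵀ * A).trace = ∑ x : Fin a × Fin b, A x.1 x.2 ^ 2 := by
    simp only [Matrix.trace, Matrix.mul_apply, Fintype.sum_prod_type, Matrix.diag, transpose_apply, pow_two]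
    exact Finset.sum_comm
  have e3 : (Bᵀ * B).trace = ∑ x : Fin a × Fin b, B x.2 x.1 ^ 2 := by
    simp only [Matrix.trace, Matrix.mul_apply, Fintype.sum_prod_type, Matrix.diag, transpose_apply, pow_two]
  rw [e1, e2, e3]; exact h

lemma trace_mul_pow_comm {a b : ℕ} (X : Matrix (Fin a) (Fin b) ℝ) (Y : Matrix (Fin b) (Fin a) ℝ)
    (N : ℕ) : ((X * Y) ^ (N + 1)).trace = ((Y * X) ^ (N + 1)).trace := by
  have h : ∀ N : ℕ, (X * Y) ^ N * X = X * (Y * X) ^ N := by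
    intro N
    induction N with
    | zero => simp
    | succ k ih => rw [pow_succ, Matrix.mul_assoc, Matrix.mul_assoc X Y X, ← Matrix.mul_assoc, ih,
        pow_succ, Matrix.mul_assoc]
  rw [pow_succ, ← Matrix.mul_assoc, h, Matrix.mul_assoc, Matrix.trace_mul_comm,
    pow_succ, Matrix.mul_assoc]

lemma trace_mul_pow_two_comm {a : ℕ} (X Y : Matrix (Fin a) (Fin a) ℝ) (j : ℕ) :
    ((X * Y) ^ 2 ^ j).trace = ((Y * X) ^ 2 ^ j).trace := by
  obtain ⟨N, hN⟩ : ∃ N, 2 ^ j = N + 1 :=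
    ⟨2 ^ j - 1, by have := Nat.two_pow_pos j; omega⟩
  rw [hN, trace_mul_pow_comm]

/-- Cauchy-Schwarz in the Schatten norm of order `2 ^ (j + 1)`. -/
lemma trace_mul_pow_two_sq_le {a : ℕ} (j : ℕ) : ∀ A B : Matrix (Fin a) (Fin a) ℝ,
    ((A * B) ^ 2 ^ j).trace ^ 2 ≤ ((Aᵀ * A) ^ 2 ^ j).trace * ((Bᵀ * B) ^ 2 ^ j).trace := by
  induction j with
  | zero => intro A B; simpa using trace_mul_sq_le A B
  | succ j ih =>
    intro A B
    have h1 := ih (A * B) (A * B)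
    have h2 := ih (Aᵀ * A) (B * Bᵀ)
    have e1 : (((A * B)ᵀ * (A * B)) ^ 2 ^ j).trace = ((Aᵀ * A * (B * Bᵀ)) ^ 2 ^ j).trace := by
      rw [← Matrix.mul_assoc (Aᵀ * A), trace_mul_pow_two_comm (Aᵀ * A * B) Bᵀ, transpose_mul]
      simp only [Matrix.mul_assoc]
    have e2 : ∀ M : Matrix (Fin a) (Fin a) ℝ, M ^ 2 ^ (j + 1) = (M * M) ^ 2 ^ j := by
      intro M; rw [pow_succ', pow_mul, pow_two]
    have e3 : (((B * Bᵀ)) ^ 2 ^ (j + 1)).trace = ((Bᵀ * B) ^ 2 ^ (j + 1)).trace :=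
      trace_mul_pow_two_comm _ _ _
    simp only [transpose_mul, transpose_transpose] at h2
    rw [← e2, ← e2, e3] at h2
    rw [e2 (A * B)]
    rw [e1] at h1
    nlinarith [h1, h2]

/-- The Lieb-Thirring trace inequality for exponents that are powers of two. -/
lemma lieb_thirring_two_pow {a : ℕ} (j : ℕ) : ∀ P Q : Matrix (Fin a) (Fin a) ℝ, Pᵀ = P → Qᵀ = Q →
    ((P * Q) ^ 2 ^ j).trace ≤ (P ^ 2 ^ j * Q ^ 2 ^ j).trace := by
  induction j with
  | zero => intro P Q _ _; simp
  | succ j ih =>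
    intro P Q hP hQ
    have e2 : ∀ M : Matrix (Fin a) (Fin a) ℝ, M ^ 2 ^ (j + 1) = (M * M) ^ 2 ^ j := by
      intro M; rw [pow_succ', pow_mul, pow_two]
    have h1 := trace_mul_pow_two_sq_le j (P * Q) (P * Q)
    have e1 : (((P * Q)ᵀ * (P * Q)) ^ 2 ^ j).trace = ((P * P * (Q * Q)) ^ 2 ^ j).trace := by
      rw [← Matrix.mul_assoc (P * P), trace_mul_pow_two_comm (P * P * Q) Q, transpose_mul, hP, hQ]
      simp only [Matrix.mul_assoc]
    have h2 := ih (P * P) (Q * Q) (by rw [transpose_mul, hP]) (by rw [transpose_mul, hQ])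
    have hpos : 0 ≤ (((P * Q)ᵀ * (P * Q)) ^ 2 ^ j).trace := by
      have := (posSemidef_conjTranspose_mul_self (P * Q)).pow (2 ^ j)
      rw [conjTranspose_eq_transpose_of_trivial] at this
      exact this.trace_nonneg
    rw [e2, e2 P, e2 Q]
    refine le_trans ?_ h2
    rw [← e1]
    exact (abs_le_of_sq_le_sq' (by nlinarith [h1]) hpos).2

/-- Powers of the resolvent `(1 + w wᵀ)⁻¹ = 1 - (1 + |w|²)⁻¹ w wᵀ`. -/
lemma rank_one_pow {a : ℕ} (w : Fin a → ℝ) (γ : ℝ) (hγ : w ⬝ᵥ w = γ) (h0 : 0 ≤ γ) (N : ℕ) :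
    (1 - (1 + γ)⁻¹ • vecMulVec w w) ^ N = 1 - (∑ i ∈ range N, ((1 + γ)⁻¹) ^ (i + 1)) • vecMulVec w w := by
  have hne : (1 + γ) ≠ 0 := by positivity
  have hv : vecMulVec w w * vecMulVec w w = γ • vecMulVec w w := by
    rw [vecMulVec_mul_vecMulVec, hγ, ← vecMulVec_smul]

  have hs : ∀ N : ℕ, (∑ i ∈ range N, ((1 + γ)⁻¹) ^ (i + 1)) * γ = 1 - ((1 + γ)⁻¹) ^ N := by
    intro N
    induction N with
    | zero => simp
    | succ k ih =>
      rw [sum_range_succ, add_mul, ih, pow_succ]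
      field_simp
      ring
  induction N with
  | zero => simp
  | succ k ih =>
    rw [pow_succ, ih, sum_range_succ, mul_sub, mul_one, sub_mul, one_mul, smul_mul_smul_comm, hv,
      smul_smul]
    have : (∑ i ∈ range k, ((1 + γ)⁻¹) ^ (i + 1)) * (1 + γ)⁻¹ * γ = (1 + γ)⁻¹ - ((1 + γ)⁻¹) ^ (k + 1) := by
      rw [mul_right_comm, hs]; ring
    rw [this, sub_smul, add_smul]
    abel

lemma vecMulVec_mulVec' {a b : ℕ} (u : Fin a → ℝ) (v x : Fin b → ℝ) :
    vecMulVec u v *ᵥ x = (v ⬝ᵥ x) • u := by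
  ext i; simp [vecMulVec_mulVec, mul_comm]

/-- Sherman-Morrison formula. -/
lemma inv_add_rank_one {a : ℕ} (A : Matrix (Fin a) (Fin a) ℝ) (hA : IsUnit A.det) (hs : Aᵀ = A)
    (u : Fin a → ℝ) (γ : ℝ) (hγ : u ⬝ᵥ (A⁻¹ *ᵥ u) = γ) (h0 : 0 ≤ γ) :
    (A + vecMulVec u u)⁻¹ = A⁻¹ - (1 + γ)⁻¹ • vecMulVec (A⁻¹ *ᵥ u) (A⁻¹ *ᵥ u) := by
  have hne : (1 + γ) ≠ 0 := by positivity
  apply Matrix.inv_eq_right_inv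
  have hs' : (A⁻¹)ᵀ = A⁻¹ := by rw [transpose_nonsing_inv, hs]
  have e1 : A * vecMulVec (A⁻¹ *ᵥ u) (A⁻¹ *ᵥ u) = vecMulVec u (A⁻¹ *ᵥ u) := by
    rw [mul_vecMulVec, mulVec_mulVec, Matrix.mul_nonsing_inv _ hA, one_mulVec]
  have e2 : vecMulVec u u * A⁻¹ = vecMulVec u (A⁻¹ *ᵥ u) := by
    rw [vecMulVec_mul, ← mulVec_transpose, hs']
  have e3 : vecMulVec u u * vecMulVec (A⁻¹ *ᵥ u) (A⁻¹ *ᵥ u) = γ • vecMulVec u (A⁻¹ *ᵥ u) := by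
    rw [vecMulVec_mul_vecMulVec, hγ, ← vecMulVec_smul]
  rw [mul_sub, Matrix.add_mul, Matrix.mul_nonsing_inv _ hA, e2, Matrix.mul_smul, Matrix.add_mul, e1, e3]
  have : (1 + γ)⁻¹ • (vecMulVec u (A⁻¹ *ᵥ u) + γ • vecMulVec u (A⁻¹ *ᵥ u)) = vecMulVec u (A⁻¹ *ᵥ u) := by
    rw [show vecMulVec u (A⁻¹ *ᵥ u) + γ • vecMulVec u (A⁻¹ *ᵥ u) =
      (1 + γ) • vecMulVec u (A⁻¹ *ᵥ u) by rw [add_smul, one_smul], smul_smul, inv_mul_cancel₀ hne, one_smul]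
  rw [this]; abel

lemma sum_geom_ge (q : ℝ) (h0 : 0 ≤ q) (h1 : q ≤ 1) (N : ℕ) :
    N * q ^ N ≤ ∑ i ∈ range N, q ^ (i + 1) := by
  calc (N : ℝ) * q ^ N = ∑ i ∈ range N, q ^ N := by simp
    _ ≤ _ := Finset.sum_le_sum fun i hi => pow_le_pow_of_le_one h0 h1 (by simp at hi; omega)

/-- For `A⁻¹ = Lᵀ L` and `w = L u`, the quadratic form of a power of `L Lᵀ` at `w` is the one of the
next power of `A⁻¹` at `u`, and it is nonnegative. -/
lemma dot_pow_succ_nonneg {a : ℕ} (L : Matrix (Fin a) (Fin a) ℝ) (u : Fin a → ℝ) (N : ℕ) :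
    (L *ᵥ u) ⬝ᵥ ((L * Lᵀ) ^ N *ᵥ (L *ᵥ u)) = u ⬝ᵥ ((Lᵀ * L) ^ (N + 1) *ᵥ u) ∧
    0 ≤ u ⬝ᵥ ((Lᵀ * L) ^ (N + 1) *ᵥ u) := by
  constructor
  · have h : ∀ N : ℕ, (L * Lᵀ) ^ N * L = L * (Lᵀ * L) ^ N := by
      intro N
      induction N with
      | zero => simp
      | succ k ih => rw [pow_succ, Matrix.mul_assoc, Matrix.mul_assoc L Lᵀ L, ← Matrix.mul_assoc, ih,
          pow_succ, Matrix.mul_assoc]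
    rw [mulVec_mulVec, h, pow_succ', ← mulVec_mulVec, dotProduct_comm, dotProduct_mulVec,
      ← mulVec_transpose, mulVec_mulVec, dotProduct_comm, mulVec_mulVec]
  · have := (posSemidef_conjTranspose_mul_self L).pow (N + 1)
    rw [conjTranspose_eq_transpose_of_trivial] at this
    simpa using this.dotProduct_mulVec_nonneg u

/-- A rank-one update decreases the trace of the `2 ^ j`-th power of the inverse by a definite amount.
With `A⁻¹ = Lᵀ L` and `w = L u` the updated inverse is `Lᵀ (1 + w wᵀ)⁻¹ L`, so the Lieb-Thirring inequality
separates the factor `(1 + w wᵀ)^{-2^j}`, which is explicit. -/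
lemma trace_inv_pow_update {a : ℕ} (j : ℕ) (A : Matrix (Fin a) (Fin a) ℝ) (hA : A.PosDef)
    (u : Fin a → ℝ) (κ : ℝ) (hκ : u ⬝ᵥ (A⁻¹ *ᵥ u) ≤ κ) (hN : (2 : ℝ) ^ j * κ ≤ 1 / 2) :
    (((A + vecMulVec u u)⁻¹) ^ 2 ^ j).trace ≤
      ((A⁻¹) ^ 2 ^ j).trace - 2 ^ j / 2 * (u ⬝ᵥ ((A⁻¹) ^ (2 ^ j + 1) *ᵥ u)) := by
  obtain ⟨L, hL⟩ : ∃ L : Matrix (Fin a) (Fin a) ℝ, A⁻¹ = Lᵀ * L := by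
    have h := hA.inv.posSemidef
    open scoped MatrixOrder in
    have h' := (CStarAlgebra.nonneg_iff_eq_star_mul_self (a := A⁻¹)).1 h.nonneg
    obtain ⟨L, hL⟩ := h'
    exact ⟨L, by rw [hL, star_eq_conjTranspose, conjTranspose_eq_transpose_of_trivial]⟩
  set w := L *ᵥ u with hw
  have hw' : A⁻¹ *ᵥ u = Lᵀ *ᵥ w := by rw [hL, hw, mulVec_mulVec]
  set γ := w ⬝ᵥ w with hγ
  have hγu : u ⬝ᵥ (A⁻¹ *ᵥ u) = γ := by
    rw [hw', dotProduct_mulVec, ← mulVec_transpose, transpose_transpose]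
  have h0 : 0 ≤ γ := by rw [hγ]; exact Finset.sum_nonneg fun i _ => mul_self_nonneg _
  have hs : Aᵀ = A := by simpa using hA.isHermitian.eq
  have hu : IsUnit A.det := (Matrix.isUnit_iff_isUnit_det A).1 hA.isUnit
  rw [inv_add_rank_one A hu hs u γ hγu h0]
  have e1 : A⁻¹ - (1 + γ)⁻¹ • vecMulVec (A⁻¹ *ᵥ u) (A⁻¹ *ᵥ u) =
      Lᵀ * ((1 - (1 + γ)⁻¹ • vecMulVec w w) * L) := by
    rw [Matrix.sub_mul, one_mul, Matrix.mul_sub, ← hL, hw', smul_mul_assoc, Matrix.mul_smul,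
      vecMulVec_mul, mul_vecMulVec, ← mulVec_transpose]
  rw [e1, trace_mul_pow_two_comm, Matrix.mul_assoc]
  refine (lieb_thirring_two_pow j _ _ ?_ ?_).trans ?_
  · simp [transpose_vecMulVec]
  · simp
  rw [rank_one_pow w γ rfl h0, Matrix.sub_mul, one_mul, trace_sub, trace_mul_pow_two_comm, ← hL,
    smul_mul_assoc, trace_smul, vecMulVec_mul, trace_vecMulVec, ← mulVec_transpose,
    transpose_pow, transpose_mul, transpose_transpose, (dot_pow_succ_nonneg L u _).1]
  have hp := (dot_pow_succ_nonneg L u (2 ^ j)).2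
  rw [← hL] at hp ⊢
  rw [smul_eq_mul]
  refine sub_le_sub_left (mul_le_mul_of_nonneg_right ?_ hp) _
  have hq0 : 0 ≤ (1 + γ)⁻¹ := by positivity
  have hq1 : (1 + γ)⁻¹ ≤ 1 := inv_le_one_of_one_le₀ (by linarith)
  refine le_trans ?_ (sum_geom_ge _ hq0 hq1 _)
  have hγκ : γ ≤ κ := hγu ▸ hκ
  have hN' : (2 : ℝ) ^ j * γ ≤ 1 / 2 := le_trans (by gcongr) hN
  have h1j : (1 : ℝ) ≤ 2 ^ j := one_le_pow₀ (by norm_num)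
  have hγ1 : γ ≤ 1 / 2 := by nlinarith
  have hb := one_add_mul_le_pow (a := -γ) (by linarith) (2 ^ j)
  have hq2 : 1 + -γ ≤ (1 + γ)⁻¹ := by
    rw [le_inv_comm₀ (by linarith) (by linarith), ← one_div, le_div_iff₀ (by linarith)]
    nlinarith
  have hq3 : (1 + -γ) ^ 2 ^ j ≤ ((1 + γ)⁻¹) ^ 2 ^ j := pow_le_pow_left₀ (by linarith) hq2 _
  push_cast at hb ⊢
  have : (1 : ℝ) / 2 ≤ ((1 + γ)⁻¹) ^ 2 ^ j := by nlinarith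
  nlinarith

/-! ### Expectations over i.i.d. draws, and trace inequalities -/

/-- Expectation of `f` over `k` i.i.d. draws from `π`. -/
def EE {n k : ℕ} {V : Type*} [AddCommGroup V] [Module ℝ V] (π : Fin n → ℝ)
    (f : (Fin k → Fin n) → V) : V := ∑ ω, samplingP π ω • f ω

/-- The random sum `∑ t, u_{ω t} v_{ω t}ᵀ`. -/
def sg {n k a b : ℕ} (u : Matrix (Fin n) (Fin a) ℝ) (v : Matrix (Fin n) (Fin b) ℝ)
    (ω : Fin k → Fin n) : Matrix (Fin a) (Fin b) ℝ := ∑ t, vecMulVec (u (ω t)) (v (ω t))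

/-- Exchangeability: any one of the `k + 1` draws can be integrated out first. -/
lemma EE_succ {n k : ℕ} {V : Type*} [AddCommGroup V] [Module ℝ V] (π : Fin n → ℝ)
    (f : (Fin (k + 1) → Fin n) → V) (s : Fin (k + 1)) :
    EE π f = ∑ i, π i • EE π (fun ω : Fin k → Fin n => f (s.insertNth i ω)) := by
  unfold EE
  simp_rw [smul_sum, smul_smul]
  rw [← Fintype.sum_prod_type' (f := fun (i : Fin n) (ω : Fin k → Fin n) =>
    (π i * samplingP π ω) • f (s.insertNth i ω))]
  rw [← (Fin.insertNthEquiv (fun _ => Fin n) s).sum_comp]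
  refine Finset.sum_congr rfl fun x _ => ?_
  simp [Fin.insertNthEquiv, samplingP, Fin.prod_univ_succAbove _ s]

lemma sg_insertNth {n k a b : ℕ} (u : Matrix (Fin n) (Fin a) ℝ) (v : Matrix (Fin n) (Fin b) ℝ)
    (s : Fin (k + 1)) (i : Fin n) (ω : Fin k → Fin n) :
    sg u v (s.insertNth i ω : Fin (k + 1) → Fin n) = sg u v ω + vecMulVec (u i) (v i) := by
  simp [sg, Fin.sum_univ_succAbove _ s, add_comm]

lemma samplingP_nonneg {n k : ℕ} {π : Fin n → ℝ} (h : ∀ i, 0 ≤ π i) (ω : Fin k → Fin n) :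
    0 ≤ samplingP π ω := Finset.prod_nonneg fun _ _ => h _

lemma EE_mono {n k : ℕ} {π : Fin n → ℝ} (h : ∀ i, 0 ≤ π i) {f g : (Fin k → Fin n) → ℝ}
    (hfg : ∀ ω, f ω ≤ g ω) : EE π f ≤ EE π g :=
  Finset.sum_le_sum fun ω _ => mul_le_mul_of_nonneg_left (hfg ω) (samplingP_nonneg h ω)

lemma EE_nonneg {n k : ℕ} {π : Fin n → ℝ} (h : ∀ i, 0 ≤ π i) {f : (Fin k → Fin n) → ℝ}
    (hf : ∀ ω, 0 ≤ f ω) : 0 ≤ EE π f :=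
  Finset.sum_nonneg fun ω _ => mul_nonneg (samplingP_nonneg h ω) (hf ω)

lemma EE_add {n k : ℕ} {V : Type*} [AddCommGroup V] [Module ℝ V] (π : Fin n → ℝ)
    (f g : (Fin k → Fin n) → V) : EE π (fun ω => f ω + g ω) = EE π f + EE π g := by
  simp [EE, sum_add_distrib]

lemma EE_sub {n k : ℕ} {V : Type*} [AddCommGroup V] [Module ℝ V] (π : Fin n → ℝ)
    (f g : (Fin k → Fin n) → V) : EE π (fun ω => f ω - g ω) = EE π f - EE π g := by
  simp [EE, smul_sub]

lemma EE_mul_left {n k : ℕ} (π : Fin n → ℝ) (a : ℝ)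
    (f : (Fin k → Fin n) → ℝ) : EE π (fun ω => a * f ω) = a * EE π f := by
  simp [EE, mul_sum, mul_left_comm]

lemma EE_sum {n k : ℕ} {ι : Type*} (s : Finset ι) {V : Type*} [AddCommGroup V] [Module ℝ V] (π : Fin n → ℝ)
    (f : ι → (Fin k → Fin n) → V) : EE π (fun ω => ∑ i ∈ s, f i ω) = ∑ i ∈ s, EE π (f i) := by
  simp only [EE, smul_sum]; exact sum_comm

lemma EE_smul {n k : ℕ} {V : Type*} [AddCommGroup V] [Module ℝ V] (π : Fin n → ℝ) (a : ℝ)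
    (f : (Fin k → Fin n) → V) : EE π (fun ω => a • f ω) = a • EE π f := by
  simp only [EE, smul_sum]; exact sum_congr rfl fun ω _ => smul_comm _ _ _

lemma EE_const {n k : ℕ} {π : Fin n → ℝ} (h1 : ∑ i, π i = 1) {V : Type*} [AddCommGroup V] [Module ℝ V]
    (v : V) : EE π (fun _ : Fin k → Fin n => v) = v := by
  simp only [EE, ← sum_smul, samplingP]
  rw [show (∑ ω : Fin k → Fin n, ∏ s, π (ω s)) = ∏ _s : Fin k, ∑ i, π i from
    (Fintype.prod_sum (fun (_ : Fin k) i => π i)).symm]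
  simp [h1]

lemma dot_self_nonneg {a : ℕ} (x : Fin a → ℝ) : 0 ≤ x ⬝ᵥ x :=
  Finset.sum_nonneg fun i _ => mul_self_nonneg _

lemma dot_sq_le {a : ℕ} (x y : Fin a → ℝ) : (x ⬝ᵥ y) ^ 2 ≤ (x ⬝ᵥ x) * (y ⬝ᵥ y) := by
  have := Finset.sum_mul_sq_le_sq_mul_sq Finset.univ x y
  simpa [dotProduct, pow_two] using this

lemma exists_gram {a : ℕ} {B : Matrix (Fin a) (Fin a) ℝ} (h : B.PosSemidef) :
    ∃ L : Matrix (Fin a) (Fin a) ℝ, B = Lᵀ * L := by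
  open scoped MatrixOrder in
  have h' := (CStarAlgebra.nonneg_iff_eq_star_mul_self (a := B)).1 h.nonneg
  obtain ⟨L, hL⟩ := h'
  exact ⟨L, by rw [hL, star_eq_conjTranspose, conjTranspose_eq_transpose_of_trivial]⟩

lemma dot_gram {a b : ℕ} (L : Matrix (Fin b) (Fin a) ℝ) (x y : Fin a → ℝ) :
    x ⬝ᵥ ((Lᵀ * L) *ᵥ y) = (L *ᵥ x) ⬝ᵥ (L *ᵥ y) := by
  rw [← mulVec_mulVec, dotProduct_mulVec, ← mulVec_transpose, transpose_transpose]

/-- `(xᵀBx)^N ≤ tr(B^N) |x|^{2N}` for `N = 2 ^ j`: the trace of a power dominates the power of the largest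
eigenvalue. Proved by repeated Cauchy-Schwarz. -/
lemma pow_dot_le_trace {a : ℕ} (j : ℕ) (x : Fin a → ℝ) : ∀ B : Matrix (Fin a) (Fin a) ℝ, B.PosSemidef →
    (x ⬝ᵥ (B *ᵥ x)) ^ 2 ^ j ≤ (B ^ 2 ^ j).trace * (x ⬝ᵥ x) ^ 2 ^ j := by
  induction j with
  | zero =>
    intro B hB
    obtain ⟨L, rfl⟩ := exists_gram hB
    simp only [pow_zero, pow_one]
    rw [dot_gram, trace_mul_comm]
    simp only [Matrix.trace, Matrix.diag, Matrix.mul_apply, transpose_apply, sum_mul]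
    refine Finset.sum_le_sum fun i _ => ?_
    have := dot_sq_le (L i) x
    rw [pow_two] at this
    rw [← sum_mul]
    exact this
  | succ j ih =>
    intro B hB
    have hs : Bᵀ = B := by simpa using hB.isHermitian.eq
    have h2 := ih (B ^ 2) (hB.pow 2)
    have h1 : (x ⬝ᵥ (B *ᵥ x)) ^ 2 ≤ (x ⬝ᵥ x) * (x ⬝ᵥ (B ^ 2 *ᵥ x)) := by
      have := dot_sq_le x (B *ᵥ x)
      rwa [← dot_gram, hs, ← pow_two] at this
    rw [pow_succ', pow_mul, pow_mul, pow_mul]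
    calc ((x ⬝ᵥ (B *ᵥ x)) ^ 2) ^ 2 ^ j ≤ ((x ⬝ᵥ x) * (x ⬝ᵥ (B ^ 2 *ᵥ x))) ^ 2 ^ j :=
          pow_le_pow_left₀ (by positivity) h1 _
      _ = (x ⬝ᵥ x) ^ 2 ^ j * (x ⬝ᵥ (B ^ 2 *ᵥ x)) ^ 2 ^ j := mul_pow _ _ _
      _ ≤ (x ⬝ᵥ x) ^ 2 ^ j * (((B ^ 2) ^ 2 ^ j).trace * (x ⬝ᵥ x) ^ 2 ^ j) :=
          mul_le_mul_of_nonneg_left h2 (pow_nonneg (dot_self_nonneg x) _)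
      _ = _ := by rw [pow_two (x ⬝ᵥ x), mul_pow]; ring

lemma young_scalar (x y : ℝ) (hx : 0 ≤ x) (hy : 0 ≤ y) (N : ℕ) :
    (N + 1) * (y * x ^ N) ≤ N * x ^ (N + 1) + y ^ (N + 1) := by
  induction N with
  | zero => simp
  | succ N ih =>
    have h1 := mul_le_mul_of_nonneg_left ih hy
    have h2 : 0 ≤ (N + 1) * (x ^ N * (x - y) ^ 2) := by positivity
    push_cast
    have e : (N + 1 : ℝ) * x ^ (N + 1 + 1) + y ^ (N + 1 + 1) - (N + 1 + 1) * (y * x ^ (N + 1)) =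
      y * (N * x ^ (N + 1) + y ^ (N + 1)) - y * ((N + 1) * (y * x ^ N)) + (N + 1) * (x ^ N * (x - y) ^ 2) := by
      ring
    linarith

lemma trace_pow_eq {a : ℕ} {B : Matrix (Fin a) (Fin a) ℝ} (hB : B.IsHermitian) (N : ℕ) :
    (B ^ N).trace = ∑ i, hB.eigenvalues i ^ N := by
  conv_lhs => rw [hB.spectral_theorem]
  rw [← map_pow, diagonal_pow, Unitary.conjStarAlgAut_apply, trace_mul_comm, ← mul_assoc]
  simp [trace_diagonal]

/-- Young's inequality `(N + 1) y x^N ≤ N x^{N+1} + y^{N+1}`, summed over the spectrum of `B`. -/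
lemma young_trace {a : ℕ} {B : Matrix (Fin a) (Fin a) ℝ} (hB : B.PosSemidef) (y : ℝ) (hy : 0 ≤ y)
    (N : ℕ) : (N + 1) * (y * (B ^ N).trace) ≤ N * (B ^ (N + 1)).trace + a * y ^ (N + 1) := by
  rw [trace_pow_eq hB.isHermitian, trace_pow_eq hB.isHermitian, mul_sum, mul_sum, mul_sum]
  have : (a : ℝ) * y ^ (N + 1) = ∑ i : Fin a, y ^ (N + 1) := by simp
  rw [this, ← sum_add_distrib]
  exact sum_le_sum fun i _ => young_scalar _ _ (hB.eigenvalues_nonneg i) hy N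

/-! ### A matrix Chernoff bound for the lower tail -/

/-- `A ⪰ (1/8) I`, as a quadratic-form inequality. -/
def IsGood {a : ℕ} (A : Matrix (Fin a) (Fin a) ℝ) : Prop :=
  ∀ x : Fin a → ℝ, (1 / 8) * (x ⬝ᵥ x) ≤ x ⬝ᵥ (A *ᵥ x)

lemma sg_posSemidef {n k a : ℕ} (u : Matrix (Fin n) (Fin a) ℝ) (ω : Fin k → Fin n) :
    (sg u u ω).PosSemidef := by
  unfold sg
  exact posSemidef_sum _ fun t _ => by simpa using posSemidef_vecMulVec_self_star (u (ω t))

lemma one_add_posDef {a : ℕ} {K : Matrix (Fin a) (Fin a) ℝ} (hK : K.PosSemidef) :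
    (1 + K).PosDef := PosDef.one.add_posSemidef hK

lemma dot_inv_one_add_le {a : ℕ} {K : Matrix (Fin a) (Fin a) ℝ} (hK : K.PosSemidef) (x : Fin a → ℝ) :
    x ⬝ᵥ ((1 + K)⁻¹ *ᵥ x) ≤ x ⬝ᵥ x := by
  have hu : IsUnit (1 + K).det := (Matrix.isUnit_iff_isUnit_det _).1 (one_add_posDef hK).isUnit
  set y := (1 + K)⁻¹ *ᵥ x with hy
  have hx : x = y + K *ᵥ y := by
    have : (1 + K) *ᵥ y = x := by rw [hy, mulVec_mulVec, Matrix.mul_nonsing_inv _ hu, one_mulVec]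
    rw [← this, add_mulVec, one_mulVec]
  have h1 : 0 ≤ y ⬝ᵥ (K *ᵥ y) := by simpa using hK.dotProduct_mulVec_nonneg y
  have h2 := dot_self_nonneg (K *ᵥ y)
  rw [hx]
  simp only [add_dotProduct, dotProduct_add]
  rw [dotProduct_comm (K *ᵥ y) y]
  linarith

/-- If `K` is not good then `(1 + K)⁻¹` has an eigenvalue above `8/9`, so the Chernoff potential is at least
`(8/9)^{2^j}`. -/
lemma trace_ge_of_not_isGood {a : ℕ} (j : ℕ) {K : Matrix (Fin a) (Fin a) ℝ} (hK : K.PosSemidef)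
    (h : ¬ IsGood K) : (8 / 9 : ℝ) ^ 2 ^ j ≤ (((1 + K)⁻¹) ^ 2 ^ j).trace := by
  unfold IsGood at h
  push Not at h
  obtain ⟨x, hx⟩ := h
  have hA := one_add_posDef hK
  have hu : IsUnit (1 + K).det := (Matrix.isUnit_iff_isUnit_det _).1 hA.isUnit
  have hK0 : 0 ≤ x ⬝ᵥ (K *ᵥ x) := by simpa using hK.dotProduct_mulVec_nonneg x
  have hx0 : 0 < x ⬝ᵥ x := by linarith
  have hAx : x ⬝ᵥ ((1 + K) *ᵥ x) ≤ 9 / 8 * (x ⬝ᵥ x) := by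
    rw [add_mulVec, one_mulVec, dotProduct_add]; linarith
  obtain ⟨L, hL⟩ := exists_gram hA.inv.posSemidef
  have hcs := dot_sq_le (L *ᵥ x) (L *ᵥ ((1 + K) *ᵥ x))
  rw [← dot_gram, ← dot_gram, ← dot_gram, ← hL, mulVec_mulVec, Matrix.nonsing_inv_mul _ hu, one_mulVec,
    dotProduct_comm ((1 + K) *ᵥ x) x] at hcs
  have hB0 : 0 ≤ x ⬝ᵥ ((1 + K)⁻¹ *ᵥ x) := by
    simpa using hA.inv.posSemidef.dotProduct_mulVec_nonneg x
  have hB : 8 / 9 * (x ⬝ᵥ x) ≤ x ⬝ᵥ ((1 + K)⁻¹ *ᵥ x) := by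
    have : (x ⬝ᵥ x) ^ 2 ≤ (x ⬝ᵥ ((1 + K)⁻¹ *ᵥ x)) * (9 / 8 * (x ⬝ᵥ x)) :=
      hcs.trans (mul_le_mul_of_nonneg_left hAx hB0)
    nlinarith
  have h1 := pow_dot_le_trace j x _ hA.inv.posSemidef
  have h2 : (8 / 9 * (x ⬝ᵥ x)) ^ 2 ^ j ≤ (x ⬝ᵥ ((1 + K)⁻¹ *ᵥ x)) ^ 2 ^ j :=
    pow_le_pow_left₀ (by positivity) hB _
  rw [mul_pow] at h2
  exact le_of_mul_le_mul_right (h2.trans h1) (by positivity)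

/-- The `u_i` are isotropic for `π`: the weighted second moment is `m⁻¹ I`, and `|u_i|² ≤ κ`. -/
structure Iso {n a : ℕ} (π : Fin n → ℝ) (u : Matrix (Fin n) (Fin a) ℝ) (m κ : ℝ) : Prop where
  nonneg : ∀ i, 0 ≤ π i
  sum_one : ∑ i, π i = 1
  m_pos : 0 < m
  iso : ∑ i, π i • vecMulVec (u i) (u i) = m⁻¹ • (1 : Matrix (Fin a) (Fin a) ℝ)
  bound : ∀ i, u i ⬝ᵥ u i ≤ κ
  inv_le : m⁻¹ ≤ κ
  κ_le : κ ≤ 1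

lemma Iso.sum_dot {n a : ℕ} {π : Fin n → ℝ} {u : Matrix (Fin n) (Fin a) ℝ} {m κ : ℝ}
    (h : Iso π u m κ) (A : Matrix (Fin a) (Fin a) ℝ) :
    ∑ i, π i * (u i ⬝ᵥ (A *ᵥ u i)) = m⁻¹ * A.trace := by
  have := congrArg (fun M => (A * M).trace) h.iso
  simpa [Matrix.mul_sum, trace_sum, mul_vecMulVec, trace_vecMulVec, dotProduct_comm] using this

/-- Matrix Chernoff potential: for `N = 2 ^ j ≤ 1/(2κ)`, the expectation of `tr (1 + ∑ u uᵀ)^{-N}` over `k`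
draws is at most `a (1 + k/(2m))^{-N}`. -/
lemma chernoff_potential {n a : ℕ} {π : Fin n → ℝ} {u : Matrix (Fin n) (Fin a) ℝ} {m κ : ℝ}
    (h : Iso π u m κ) (j : ℕ) (hN : (2 : ℝ) ^ j * κ ≤ 1 / 2) (k : ℕ) :
    EE π (fun ω : Fin k → Fin n => (((1 + sg u u ω)⁻¹) ^ 2 ^ j).trace) ≤
      a * ((1 + k / (2 * m))⁻¹) ^ 2 ^ j := by
  have hm := h.m_pos
  induction k with
  | zero => simp [EE, samplingP, sg]
  | succ k ih =>
    set y : ℝ := (1 + k / (2 * m))⁻¹ with hy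
    have hd : 1 ≤ 1 + k / (2 * m) := by have : 0 ≤ k / (2 * m) := by positivity
                                        linarith
    have hy0 : 0 < y := by positivity
    have hy1 : y ≤ 1 := inv_le_one_of_one_le₀ hd
    set N : ℝ := 2 ^ j with hNdef
    have hN1 : 1 ≤ N := one_le_pow₀ (by norm_num)
    have hNm : N * m⁻¹ ≤ 1 / 2 := le_trans (mul_le_mul_of_nonneg_left h.inv_le (by positivity)) hN
    have hm1 : 0 < m⁻¹ := by positivity
    rw [EE_succ π _ 0]
    simp_rw [sg_insertNth]
    have step : ∀ ω : Fin k → Fin n,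
        ∑ i, π i * (((1 + (sg u u ω + vecMulVec (u i) (u i)))⁻¹) ^ 2 ^ j).trace ≤
          (1 - (N + 1) / 2 * m⁻¹ * y) * (((1 + sg u u ω)⁻¹) ^ 2 ^ j).trace +
            m⁻¹ / 2 * (a * y ^ (2 ^ j + 1)) := by
      intro ω
      have hK := sg_posSemidef u ω
      have hA := one_add_posDef hK
      have h1 : ∀ i, π i * (((1 + (sg u u ω + vecMulVec (u i) (u i)))⁻¹) ^ 2 ^ j).trace ≤
          π i * (((1 + sg u u ω)⁻¹) ^ 2 ^ j).trace -
            N / 2 * (π i * (u i ⬝ᵥ (((1 + sg u u ω)⁻¹) ^ (2 ^ j + 1) *ᵥ u i))) := by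
        intro i
        rw [← add_assoc]
        have := trace_inv_pow_update j _ hA (u i) κ ((dot_inv_one_add_le hK _).trans (h.bound i)) hN
        have := mul_le_mul_of_nonneg_left this (h.nonneg i)
        rw [mul_sub] at this
        linarith
      have h2 := Finset.sum_le_sum fun i (_ : i ∈ Finset.univ) => h1 i
      rw [sum_sub_distrib, ← sum_mul, ← mul_sum, h.sum_dot, h.sum_one, one_mul] at h2
      have h3 := young_trace hA.inv.posSemidef y hy0.le (2 ^ j)
      push_cast at h3
      rw [← hNdef] at h3
      have h4 := mul_le_mul_of_nonneg_left h3 (show 0 ≤ m⁻¹ / 2 by positivity)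
      linarith
    have e : ∑ i, π i • EE π (fun ω : Fin k → Fin n =>
        (((1 + (sg u u ω + vecMulVec (u i) (u i)))⁻¹) ^ 2 ^ j).trace) =
        EE π (fun ω : Fin k → Fin n => ∑ i, π i * (((1 + (sg u u ω + vecMulVec (u i) (u i)))⁻¹) ^ 2 ^ j).trace) := by
      rw [EE_sum]
      simp_rw [EE_mul_left, smul_eq_mul]
    rw [e]
    refine (EE_mono h.nonneg step).trans ?_
    rw [EE_add, EE_mul_left, EE_const h.sum_one]
    have hc : 0 ≤ 1 - (N + 1) / 2 * m⁻¹ * y := by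
      have : (N + 1) / 2 * m⁻¹ * y ≤ (N + 1) / 2 * m⁻¹ * 1 := by gcongr
      nlinarith
    have h5 := mul_le_mul_of_nonneg_left ih hc
    refine (add_le_add_left h5 _).trans ?_
    have e2 : (1 - (N + 1) / 2 * m⁻¹ * y) * (a * y ^ 2 ^ j) + m⁻¹ / 2 * (a * y ^ (2 ^ j + 1)) =
        a * (y ^ 2 ^ j * (1 - N * (m⁻¹ / 2 * y))) := by ring
    rw [e2]
    refine mul_le_mul_of_nonneg_left ?_ (by positivity)
    have hx0 : 0 ≤ m⁻¹ / 2 * y := by positivity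
    have hx1 : m⁻¹ / 2 * y ≤ 1 := by nlinarith
    have hb := one_add_mul_le_pow (a := -(m⁻¹ / 2 * y)) (by linarith) (2 ^ j)
    push_cast at hb
    rw [← hNdef] at hb
    have e3 : (1 + ((k + 1 : ℕ) : ℝ) / (2 * m))⁻¹ = y * (1 + m⁻¹ / 2 * y)⁻¹ := by
      rw [hy, ← mul_inv]
      congr 1
      push_cast
      field_simp
      ring
    rw [e3, mul_pow]
    refine mul_le_mul_of_nonneg_left ?_ (by positivity)
    have e4 : 1 + -(m⁻¹ / 2 * y) ≤ (1 + m⁻¹ / 2 * y)⁻¹ := by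
      rw [inv_eq_one_div (1 + m⁻¹ / 2 * y), le_div_iff₀ (by linarith)]
      nlinarith
    have e5 := pow_le_pow_left₀ (by nlinarith) e4 (2 ^ j)
    linarith

/-- Matrix Chernoff bound for the lower tail. -/
lemma chernoff {n a : ℕ} {π : Fin n → ℝ} {u : Matrix (Fin n) (Fin a) ℝ} {m κ : ℝ}
    (h : Iso π u m κ) (j : ℕ) (hN : (2 : ℝ) ^ j * κ ≤ 1 / 2) (k : ℕ) (hk : m ≤ 2 * k)
    [DecidablePred (fun ω : Fin k → Fin n => IsGood (sg u u ω))] :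
    EE π (fun ω : Fin k → Fin n => if IsGood (sg u u ω) then (0 : ℝ) else 1) ≤ a * (9 / 10) ^ 2 ^ j := by
  have hm := h.m_pos
  have h1 := chernoff_potential h j hN k
  have h2 : EE π (fun ω : Fin k → Fin n => (8 / 9 : ℝ) ^ 2 ^ j * if IsGood (sg u u ω) then (0 : ℝ) else 1) ≤
      EE π (fun ω : Fin k → Fin n => (((1 + sg u u ω)⁻¹) ^ 2 ^ j).trace) := by
    refine EE_mono h.nonneg fun ω => ?_
    split_ifs with hg
    · rw [mul_zero]
      exact ((one_add_posDef (sg_posSemidef u ω)).inv.posSemidef.pow _).trace_nonneg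
    · rw [mul_one]; exact trace_ge_of_not_isGood j (sg_posSemidef u ω) hg
  rw [EE_mul_left] at h2
  have h3 : (1 + k / (2 * m))⁻¹ ≤ 4 / 5 := by
    rw [inv_le_comm₀ (by positivity) (by norm_num)]
    have : 1 / 4 ≤ k / (2 * m) := by rw [div_le_div_iff₀ (by norm_num) (by positivity)]; linarith
    norm_num; linarith
  have h4 : ((1 + k / (2 * m))⁻¹) ^ 2 ^ j ≤ (4 / 5 : ℝ) ^ 2 ^ j := pow_le_pow_left₀ (by positivity) h3 _
  have h5 := (h2.trans h1).trans (mul_le_mul_of_nonneg_left h4 (Nat.cast_nonneg a))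
  rw [show (4 / 5 : ℝ) = 8 / 9 * (9 / 10) by norm_num, mul_pow] at h5
  have : (0 : ℝ) < (8 / 9) ^ 2 ^ j := by positivity
  nlinarith

/-! ### Frobenius norm and well-conditioned Gram matrices -/

/-- Squared Frobenius norm, as a sum of squared entries. -/
def fsq {a b : ℕ} (A : Matrix (Fin a) (Fin b) ℝ) : ℝ := ∑ i, ∑ j, A i j ^ 2

/-- Frobenius inner product. -/
def ip {a b : ℕ} (A B : Matrix (Fin a) (Fin b) ℝ) : ℝ := ∑ i, ∑ j, A i j * B i j

lemma fsq_nonneg {a b : ℕ} (A : Matrix (Fin a) (Fin b) ℝ) : 0 ≤ fsq A :=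
  sum_nonneg fun _ _ => sum_nonneg fun _ _ => sq_nonneg _

lemma fsq_zero {a b : ℕ} : fsq (0 : Matrix (Fin a) (Fin b) ℝ) = 0 := by simp [fsq]

lemma fsq_transpose {a b : ℕ} (A : Matrix (Fin a) (Fin b) ℝ) : fsq Aᵀ = fsq A := by
  unfold fsq; rw [sum_comm]; rfl

lemma fsq_neg {a b : ℕ} (A : Matrix (Fin a) (Fin b) ℝ) : fsq (-A) = fsq A := by
  simp [fsq]

lemma fsq_smul {a b : ℕ} (t : ℝ) (A : Matrix (Fin a) (Fin b) ℝ) : fsq (t • A) = t ^ 2 * fsq A := by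
  simp [fsq, mul_sum, mul_pow]

lemma fsq_rows {a b : ℕ} (A : Matrix (Fin a) (Fin b) ℝ) : fsq A = ∑ i, A i ⬝ᵥ A i := by
  simp [fsq, dotProduct, pow_two]

lemma fsq_eq_trace {a b : ℕ} (A : Matrix (Fin a) (Fin b) ℝ) : fsq A = (Aᵀ * A).trace := by
  rw [← fsq_transpose, fsq_rows]; rfl

lemma fsq_eq_trace' {a b : ℕ} (A : Matrix (Fin a) (Fin b) ℝ) : fsq A = (A * Aᵀ).trace := by
  rw [fsq_eq_trace, trace_mul_comm]

lemma frobNorm_sq {a b : ℕ} (A : Matrix (Fin a) (Fin b) ℝ) : frobNorm A ^ 2 = fsq A := by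
  unfold frobNorm; rw [← fsq_eq_trace, Real.sq_sqrt (fsq_nonneg A)]

lemma frobNorm_eq {a b : ℕ} (A : Matrix (Fin a) (Fin b) ℝ) : frobNorm A = √(fsq A) := by
  unfold frobNorm; rw [← fsq_eq_trace]

lemma fsq_add {a b : ℕ} (A B : Matrix (Fin a) (Fin b) ℝ) :
    fsq (A + B) = fsq A + 2 * ip A B + fsq B := by
  simp only [fsq, ip, mul_sum, ← sum_add_distrib, Matrix.add_apply]
  exact sum_congr rfl fun i _ => sum_congr rfl fun j _ => by ring

lemma ip_sum {ι : Type*} {a b : ℕ} (s : Finset ι) (A : Matrix (Fin a) (Fin b) ℝ)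
    (w : ι → ℝ) (F : ι → Matrix (Fin a) (Fin b) ℝ) :
    ip A (∑ t ∈ s, w t • F t) = ∑ t ∈ s, w t * ip A (F t) := by
  simp only [ip, Matrix.sum_apply, mul_sum, Matrix.smul_apply, smul_eq_mul]
  rw [sum_comm]
  simp_rw [sum_comm (s := s)]
  rw [sum_comm]
  exact sum_congr rfl fun i _ => sum_congr rfl fun j _ => sum_congr rfl fun t _ => by ring

lemma ip_self {a b : ℕ} (A : Matrix (Fin a) (Fin b) ℝ) : ip A A = fsq A := by
  simp [ip, fsq, pow_two]

lemma ip_vecMulVec {a b : ℕ} (A : Matrix (Fin a) (Fin b) ℝ) (x : Fin a → ℝ) (y : Fin b → ℝ) :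
    ip A (vecMulVec x y) = (x ᵥ* A) ⬝ᵥ y := by
  simp only [ip, vecMulVec_apply, dotProduct, vecMul, sum_mul]
  rw [sum_comm]
  exact sum_congr rfl fun i _ => sum_congr rfl fun j _ => by ring

lemma fsq_vecMulVec {a b : ℕ} (x : Fin a → ℝ) (y : Fin b → ℝ) :
    fsq (vecMulVec x y) = (x ⬝ᵥ x) * (y ⬝ᵥ y) := by
  simp only [fsq, vecMulVec_apply, dotProduct, sum_mul_sum]
  exact sum_congr rfl fun i _ => sum_congr rfl fun j _ => by ring

lemma fsq_sub_eq {a b : ℕ} (A B : Matrix (Fin a) (Fin b) ℝ) :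
    fsq (A - B) = fsq A - 2 * ip A B + fsq B := by
  simp only [fsq, ip, mul_sum, ← sum_add_distrib, ← sum_sub_distrib, Matrix.sub_apply]
  exact sum_congr rfl fun i _ => sum_congr rfl fun j _ => by ring

lemma fsq_add_le {a b : ℕ} (A B : Matrix (Fin a) (Fin b) ℝ) :
    fsq (A + B) ≤ 2 * (fsq A + fsq B) := by
  have := fsq_nonneg (A - B)
  rw [fsq_sub_eq] at this
  rw [fsq_add]; linarith

lemma fsq_add3_le {a b : ℕ} (A B C : Matrix (Fin a) (Fin b) ℝ) :
    fsq (A + B + C) ≤ 3 * (fsq A + fsq B + fsq C) := by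
  simp only [fsq, mul_sum, ← sum_add_distrib]
  refine sum_le_sum fun i _ => sum_le_sum fun j _ => ?_
  simp only [Matrix.add_apply]
  nlinarith [sq_nonneg (A i j - B i j), sq_nonneg (A i j - C i j), sq_nonneg (B i j - C i j)]

/-- Bias–variance split for one weighted average, in inequality form. -/
lemma sum_fsq_add_le {n a b : ℕ} {π : Fin n → ℝ} (hs : ∑ i, π i = 1)
    (A M : Matrix (Fin a) (Fin b) ℝ) (F : Fin n → Matrix (Fin a) (Fin b) ℝ)
    (hM : ∑ i, π i • F i = M) :
    ∑ i, π i * fsq (A + F i) ≤ fsq (A + M) + ∑ i, π i * fsq (F i) := by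
  simp_rw [fsq_add, mul_add, sum_add_distrib, ← sum_mul, hs]
  have : ip A M = ∑ i, π i * ip A (F i) := by rw [← hM, ip_sum]
  have h2 : ∑ i, π i * (2 * ip A (F i)) = 2 * ip A M := by
    rw [this, mul_sum]; exact sum_congr rfl fun i _ => by ring
  rw [h2]
  have := fsq_nonneg M
  linarith

/-- Jensen's inequality for the squared Frobenius norm, with weights of arbitrary mass. -/
lemma fsq_sum_le {ι : Type*} {a b : ℕ} (s : Finset ι) {w : ι → ℝ} (hw : ∀ t ∈ s, 0 ≤ w t)
    (F : ι → Matrix (Fin a) (Fin b) ℝ) :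
    fsq (∑ t ∈ s, w t • F t) ≤ (∑ t ∈ s, w t) * ∑ t ∈ s, w t * fsq (F t) := by
  have e : ∑ t ∈ s, w t * fsq (F t) = ∑ i, ∑ j, ∑ t ∈ s, w t * F t i j ^ 2 := by
    simp only [fsq, mul_sum]
    rw [sum_comm]
    exact sum_congr rfl fun i _ => sum_comm
  rw [e, mul_sum]
  refine sum_le_sum fun i _ => ?_
  rw [mul_sum]
  refine sum_le_sum fun j _ => ?_
  simp only [Matrix.sum_apply, Matrix.smul_apply, smul_eq_mul]
  refine sum_sq_le_sum_mul_sum_of_sq_le_mul s hw (fun t ht => mul_nonneg (hw t ht) (sq_nonneg _)) fun t _ => le_of_eq ?_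
  ring

lemma fsq_sum_vecMulVec_le {ι : Type*} {a b : ℕ} (s : Finset ι) {w : ι → ℝ} (hw : ∀ t ∈ s, 0 ≤ w t)
    (x : ι → Fin a → ℝ) (y : ι → Fin b → ℝ) :
    fsq (∑ t ∈ s, w t • vecMulVec (x t) (y t)) ≤
      (∑ t ∈ s, w t * (x t ⬝ᵥ x t)) * ∑ t ∈ s, w t * (y t ⬝ᵥ y t) := by
  have e1 : ∑ t ∈ s, w t * (x t ⬝ᵥ x t) = ∑ i, ∑ t ∈ s, w t * x t i ^ 2 := by
    simp only [dotProduct, mul_sum]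
    rw [sum_comm]
    exact sum_congr rfl fun i _ => sum_congr rfl fun t _ => by ring
  have e2 : ∑ t ∈ s, w t * (y t ⬝ᵥ y t) = ∑ i, ∑ t ∈ s, w t * y t i ^ 2 := by
    simp only [dotProduct, mul_sum]
    rw [sum_comm]
    exact sum_congr rfl fun i _ => sum_congr rfl fun t _ => by ring
  rw [e1, e2, sum_mul_sum]
  refine sum_le_sum fun i _ => sum_le_sum fun j _ => ?_
  simp only [Matrix.sum_apply, Matrix.smul_apply, smul_eq_mul, vecMulVec_apply]
  refine sum_sq_le_sum_mul_sum_of_sq_le_mul s (fun t ht => mul_nonneg (hw t ht) (sq_nonneg _))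
    (fun t ht => mul_nonneg (hw t ht) (sq_nonneg _)) fun t _ => le_of_eq ?_
  ring

/-- Minkowski's inequality for the weighted `L²` norm of matrix-valued functions. -/
lemma minkowski {ι : Type*} {a b : ℕ} (s : Finset ι) {w : ι → ℝ} (hw : ∀ t ∈ s, 0 ≤ w t)
    (F G : ι → Matrix (Fin a) (Fin b) ℝ) :
    √(∑ t ∈ s, w t * fsq (F t + G t)) ≤
      √(∑ t ∈ s, w t * fsq (F t)) + √(∑ t ∈ s, w t * fsq (G t)) := by
  set f := ∑ t ∈ s, w t * fsq (F t) with hf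
  set g := ∑ t ∈ s, w t * fsq (G t) with hg
  have hf0 : 0 ≤ f := sum_nonneg fun t ht => mul_nonneg (hw t ht) (fsq_nonneg _)
  have hg0 : 0 ≤ g := sum_nonneg fun t ht => mul_nonneg (hw t ht) (fsq_nonneg _)
  have key : ∑ t ∈ s, w t * ip (F t) (G t) ≤ √f * √g := by
    -- Cauchy–Schwarz through `2 s t ip ≤ t² f + s² g` for all real `s, t`
    have hq : ∀ x y : ℝ, 2 * (x * y) * ∑ t ∈ s, w t * ip (F t) (G t) ≤ x ^ 2 * f + y ^ 2 * g := by
      intro x y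
      have : 0 ≤ ∑ t ∈ s, w t * fsq (x • F t - y • G t) :=
        sum_nonneg fun t ht => mul_nonneg (hw t ht) (fsq_nonneg _)
      have e : ∑ t ∈ s, w t * fsq (x • F t - y • G t) =
          x ^ 2 * f - 2 * (x * y) * ∑ t ∈ s, w t * ip (F t) (G t) + y ^ 2 * g := by
        rw [hf, hg, mul_sum, mul_sum, mul_sum, ← sum_sub_distrib, ← sum_add_distrib]
        refine sum_congr rfl fun t _ => ?_
        rw [fsq_sub_eq, fsq_smul, fsq_smul]
        have : ip (x • F t) (y • G t) = x * y * ip (F t) (G t) := by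
          simp only [ip, mul_sum, Matrix.smul_apply, smul_eq_mul]
          exact sum_congr rfl fun i _ => sum_congr rfl fun j _ => by ring
        rw [this]; ring
      linarith
    have h1 := Real.sq_sqrt hf0
    have h2 := Real.sq_sqrt hg0
    have p1 := Real.sqrt_nonneg f
    have p2 := Real.sqrt_nonneg g
    by_contra! hlt
    have hd : ∀ e : ℝ, 0 < e → ∑ t ∈ s, w t * ip (F t) (G t) ≤ (√f + e) * (√g + e) := by
      intro e he
      have := hq (√g + e) (√f + e)
      have h3 : (√g + e) ^ 2 * f ≤ (√g + e) ^ 2 * (√f + e) ^ 2 :=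
        mul_le_mul_of_nonneg_left (by nlinarith) (sq_nonneg _)
      have h4 : (√f + e) ^ 2 * g ≤ (√f + e) ^ 2 * (√g + e) ^ 2 :=
        mul_le_mul_of_nonneg_left (by nlinarith) (sq_nonneg _)
      have hpos : 0 < (√g + e) * (√f + e) := by positivity
      have : (√g + e) * (√f + e) * ∑ t ∈ s, w t * ip (F t) (G t) ≤
          (√g + e) * (√f + e) * ((√f + e) * (√g + e)) := by nlinarith
      exact le_of_mul_le_mul_left this hpos
    have hl : Filter.Tendsto (fun e : ℝ => (√f + e) * (√g + e)) (nhdsWithin 0 (Set.Ioi 0))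
        (nhds ((√f + 0) * (√g + 0))) :=
      ((Continuous.tendsto (by fun_prop) 0).mono_left nhdsWithin_le_nhds)
    have := ge_of_tendsto hl (Filter.eventually_of_mem self_mem_nhdsWithin fun e he => hd e he)
    simp only [add_zero] at this
    linarith
  refine Real.sqrt_le_iff.2 ⟨by positivity, ?_⟩
  have e : ∑ t ∈ s, w t * fsq (F t + G t) = f + 2 * (∑ t ∈ s, w t * ip (F t) (G t)) + g := by
    rw [hf, hg, mul_sum, ← sum_add_distrib, ← sum_add_distrib]
    exact sum_congr rfl fun t _ => by rw [fsq_add]; ring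
  rw [e, add_sq, Real.sq_sqrt hf0, Real.sq_sqrt hg0]
  linarith

lemma minkowski_fsq {a b : ℕ} (A B : Matrix (Fin a) (Fin b) ℝ) :
    √(fsq (A + B)) ≤ √(fsq A) + √(fsq B) := by
  simpa using minkowski ({0} : Finset ℕ) (w := fun _ => 1) (by simp) (fun _ => A) (fun _ => B)

section good
variable {a : ℕ} {K : Matrix (Fin a) (Fin a) ℝ}

lemma IsGood.dot_le (h : IsGood K) (x : Fin a → ℝ) : x ⬝ᵥ x ≤ 64 * ((K *ᵥ x) ⬝ᵥ (K *ᵥ x)) := by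
  have h1 := h x
  have h2 := dot_sq_le x (K *ᵥ x)
  have h3 := dot_self_nonneg x
  rcases h3.eq_or_lt with h0 | h0
  · rw [← h0]; have := dot_self_nonneg (K *ᵥ x); linarith
  have : ((1 / 8) * (x ⬝ᵥ x)) ^ 2 ≤ (x ⬝ᵥ (K *ᵥ x)) ^ 2 := pow_le_pow_left₀ (by positivity) h1 2
  have h4 : (x ⬝ᵥ x) * (x ⬝ᵥ x) ≤ (x ⬝ᵥ x) * (64 * ((K *ᵥ x) ⬝ᵥ (K *ᵥ x))) := by nlinarith
  exact le_of_mul_le_mul_left h4 h0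

lemma IsGood.isUnit_det (h : IsGood K) : IsUnit K.det := by
  rw [← Matrix.isUnit_iff_isUnit_det, ← Matrix.mulVec_injective_iff_isUnit]
  intro x y hxy
  have h1 := h.dot_le (x - y)
  have h2 : K *ᵥ (x - y) = 0 := by rw [mulVec_sub]; simpa [sub_eq_zero] using hxy
  rw [h2] at h1
  simp only [dotProduct_zero, mul_zero] at h1
  have h3 : (x - y) ⬝ᵥ (x - y) = 0 := le_antisymm h1 (dot_self_nonneg _)
  exact sub_eq_zero.1 (dotProduct_self_eq_zero.1 h3)

lemma IsGood.inv_dot_le (h : IsGood K) (x : Fin a → ℝ) :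
    (K⁻¹ *ᵥ x) ⬝ᵥ (K⁻¹ *ᵥ x) ≤ 64 * (x ⬝ᵥ x) := by
  have := h.dot_le (K⁻¹ *ᵥ x)
  rwa [mulVec_mulVec, Matrix.mul_nonsing_inv _ h.isUnit_det, one_mulVec] at this

lemma IsGood.fsq_inv_mul_le (h : IsGood K) {b : ℕ} (B : Matrix (Fin a) (Fin b) ℝ) :
    fsq (K⁻¹ * B) ≤ 64 * fsq B := by
  rw [← fsq_transpose, ← fsq_transpose B, fsq_rows, fsq_rows, mul_sum]
  refine sum_le_sum fun j _ => ?_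
  have := h.inv_dot_le (Bᵀ j)
  exact this

lemma IsGood.add (h : IsGood K) (u : Fin a → ℝ) : IsGood (K + vecMulVec u u) := by
  intro x
  have := h x
  rw [add_mulVec, dotProduct_add, vecMulVec_mulVec', dotProduct_smul, dotProduct_comm x u, smul_eq_mul]
  nlinarith [mul_self_nonneg (u ⬝ᵥ x)]

end good

section iso
variable {n a b : ℕ} {π : Fin n → ℝ} {u : Matrix (Fin n) (Fin a) ℝ} {m κ : ℝ}

lemma Iso.sum_vecMul (h : Iso π u m κ) (W : Matrix (Fin a) (Fin b) ℝ) :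
    ∑ i, π i * ((u i ᵥ* W) ⬝ᵥ (u i ᵥ* W)) = m⁻¹ * fsq W := by
  rw [fsq_eq_trace', ← h.sum_dot]
  refine sum_congr rfl fun i _ => ?_
  have := dot_gram Wᵀ (u i) (u i)
  rw [transpose_transpose] at this
  rw [this, mulVec_transpose]

/-- Bessel's inequality for the frame `u`. -/
lemma Iso.bessel (h : Iso π u m κ) (w : Fin n → Fin b → ℝ) :
    fsq (∑ i, π i • vecMulVec (u i) (w i)) ≤ m⁻¹ * ∑ i, π i * (w i ⬝ᵥ w i) := by
  set M := ∑ i, π i • vecMulVec (u i) (w i) with hM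
  have hm := h.m_pos
  have h1 : fsq M = ∑ i, π i * ((u i ᵥ* M) ⬝ᵥ w i) := by
    conv_lhs => rw [← ip_self]
    conv_lhs => enter [2]; rw [hM]
    rw [ip_sum]; simp_rw [ip_vecMulVec]
  have h2 : ∀ x y : Fin b → ℝ, 2 * (x ⬝ᵥ y) ≤ m * (x ⬝ᵥ x) + m⁻¹ * (y ⬝ᵥ y) := by
    intro x y
    simp only [dotProduct, mul_sum, ← sum_add_distrib]
    refine sum_le_sum fun i _ => ?_
    have : 0 ≤ m⁻¹ * (m * x i - y i) ^ 2 := by positivity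
    have e : m⁻¹ * (m * x i - y i) ^ 2 = m * (x i * x i) - 2 * (x i * y i) + m⁻¹ * (y i * y i) := by
      field_simp
      ring
    linarith
  have h3 : ∑ i, π i * (2 * ((u i ᵥ* M) ⬝ᵥ w i)) ≤ ∑ i, π i * (m * ((u i ᵥ* M) ⬝ᵥ (u i ᵥ* M)) + m⁻¹ * (w i ⬝ᵥ w i)) :=
    sum_le_sum fun i _ => mul_le_mul_of_nonneg_left (h2 _ _) (h.nonneg i)
  simp_rw [mul_add, sum_add_distrib, mul_left_comm (π _), ← mul_sum, h.sum_vecMul, ← h1] at h3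
  rw [mul_inv_cancel_left₀ hm.ne'] at h3
  linarith

/-- Variance of `(K_k - k/m) W` for the random sum `K_k` of `k` draws of `u uᵀ`. -/
lemma Iso.second_moment (h : Iso π u m κ) (W : Matrix (Fin a) (Fin b) ℝ) (k : ℕ) :
    EE π (fun ω : Fin k → Fin n => fsq ((sg u u ω - (k / m : ℝ) • 1) * W)) ≤ k * (κ * m⁻¹ * fsq W) := by
  induction k with
  | zero => simp [EE, samplingP, sg, fsq_zero]
  | succ k ih =>
    rw [EE_succ π _ 0]
    simp_rw [sg_insertNth, smul_eq_mul, ← EE_mul_left, ← EE_sum]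
    have : ∀ ω : Fin k → Fin n,
        ∑ i, π i * fsq ((sg u u ω + vecMulVec (u i) (u i) - (((k + 1 : ℕ) : ℝ) / m) • 1) * W) ≤
        fsq ((sg u u ω - (k / m : ℝ) • 1) * W) + κ * m⁻¹ * fsq W := by
      intro ω
      have e : ∀ i, (sg u u ω + vecMulVec (u i) (u i) - (((k + 1 : ℕ) : ℝ) / m) • 1) * W =
          ((sg u u ω - (k / m : ℝ) • 1) * W - m⁻¹ • W) + vecMulVec (u i) (u i) * W := by
        intro i
        have : (((k + 1 : ℕ) : ℝ) / m) = k / m + m⁻¹ := by push_cast; ring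
        rw [this]
        simp only [Matrix.add_mul, Matrix.sub_mul, Matrix.smul_mul, Matrix.one_mul, add_smul]
        abel
      simp_rw [e]
      refine (sum_fsq_add_le h.sum_one _ (m⁻¹ • W) _ ?_).trans ?_
      · simp_rw [← Matrix.smul_mul]
        rw [← Matrix.sum_mul, h.iso, Matrix.smul_mul, Matrix.one_mul]
      · rw [sub_add_cancel]
        refine (add_le_add_iff_left _).2 ?_
        rw [mul_assoc, ← h.sum_vecMul, mul_sum]
        refine sum_le_sum fun i _ => ?_
        rw [vecMulVec_mul, fsq_vecMulVec, mul_left_comm]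
        exact mul_le_mul_of_nonneg_right (h.bound i) (mul_nonneg (h.nonneg i) (dot_self_nonneg _))
    refine (EE_mono h.nonneg this).trans ?_
    rw [EE_add, EE_const h.sum_one]
    push_cast
    linarith

end iso

/-! ### Second moments of centred random sums -/

section cross
variable {n a b : ℕ} {π : Fin n → ℝ} {u : Matrix (Fin n) (Fin a) ℝ} {m κ : ℝ}
  {v : Matrix (Fin n) (Fin b) ℝ}

/-- The weighted sum `∑ π_i |u_i|² |v_i|²`, the second moment of one increment `u vᵀ`. -/
def sig (π : Fin n → ℝ) (u : Matrix (Fin n) (Fin a) ℝ) (v : Matrix (Fin n) (Fin b) ℝ) : ℝ :=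
  ∑ i, π i * ((u i ⬝ᵥ u i) * (v i ⬝ᵥ v i))

lemma Iso.sig_nonneg (h : Iso π u m κ) (v : Matrix (Fin n) (Fin b) ℝ) : 0 ≤ sig π u v :=
  sum_nonneg fun i _ => mul_nonneg (h.nonneg i) (mul_nonneg (dot_self_nonneg _) (dot_self_nonneg _))

lemma Iso.κ_pos (h : Iso π u m κ) : 0 < κ := (inv_pos.2 h.m_pos).trans_le h.inv_le

lemma Iso.sig_le (h : Iso π u m κ) (v : Matrix (Fin n) (Fin b) ℝ) :
    sig π u v ≤ κ * ∑ i, π i * (v i ⬝ᵥ v i) := by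
  unfold sig
  rw [mul_sum]
  refine sum_le_sum fun i _ => ?_
  rw [mul_left_comm]
  exact mul_le_mul_of_nonneg_right (h.bound i) (mul_nonneg (h.nonneg i) (dot_self_nonneg _))

/-- The increments `u vᵀ` are centred, so the second moment of `G_k = ∑ u vᵀ` grows linearly in `k`. -/
lemma Iso.cross_moment (h : Iso π u m κ) (hv : ∑ i, π i • vecMulVec (u i) (v i) = 0) (k : ℕ) :
    EE π (fun ω : Fin k → Fin n => fsq (sg u v ω)) ≤ k * sig π u v := by
  induction k with
  | zero => simp [EE, samplingP, sg, fsq_zero]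
  | succ k ih =>
    rw [EE_succ π _ 0]
    simp_rw [sg_insertNth, smul_eq_mul, ← EE_mul_left, ← EE_sum]
    have : ∀ ω : Fin k → Fin n,
        ∑ i, π i * fsq (sg u v ω + vecMulVec (u i) (v i)) ≤ fsq (sg u v ω) + sig π u v := by
      intro ω
      refine (sum_fsq_add_le h.sum_one _ 0 _ hv).trans ?_
      simp_rw [fsq_vecMulVec, add_zero]
      rfl
    refine (EE_mono h.nonneg this).trans ?_
    rw [EE_add, EE_const h.sum_one]
    push_cast
    linarith

/-- `∑ π_i |u_i|² u_i v_iᵀ`, the mean increment of `(K_k - k/m) G_k`. -/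
def eZero (π : Fin n → ℝ) (u : Matrix (Fin n) (Fin a) ℝ) (v : Matrix (Fin n) (Fin b) ℝ) :
    Matrix (Fin a) (Fin b) ℝ := ∑ i, π i • vecMulVec (u i) ((u i ⬝ᵥ u i) • v i)

lemma Iso.eZero_le (h : Iso π u m κ) (v : Matrix (Fin n) (Fin b) ℝ) :
    fsq (eZero π u v) ≤ m⁻¹ * (κ * sig π u v) := by
  have hm := h.m_pos
  refine (h.bessel _).trans (mul_le_mul_of_nonneg_left ?_ (by positivity))
  unfold sig
  rw [mul_sum]
  refine sum_le_sum fun i _ => ?_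
  simp only [smul_dotProduct, dotProduct_smul, smul_eq_mul]
  have := h.bound i
  have h1 := dot_self_nonneg (u i)
  have h2 := mul_nonneg (h.nonneg i) (mul_nonneg h1 (dot_self_nonneg (v i)))
  nlinarith

/-- Second moment of the product of the centred random sums `K_k - k/m` and `G_k`, itself centred by its mean
`k ∑ π_i |u_i|² u_i v_iᵀ`. -/
lemma Iso.product_moment (h : Iso π u m κ) (hv : ∑ i, π i • vecMulVec (u i) (v i) = 0) (k : ℕ)
    (hk : (k : ℝ) ≤ m) :
    EE π (fun ω : Fin k → Fin n =>
      fsq ((sg u u ω - (k / m : ℝ) • 1) * sg u v ω - (k : ℝ) • eZero π u v)) ≤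
      k * (9 * κ * sig π u v) := by
  have hm := h.m_pos
  have hs := h.sig_nonneg v
  have hκ := h.κ_pos
  induction k with
  | zero => simp [EE, samplingP, sg, fsq_zero]
  | succ k ih =>
    have hk' : (k : ℝ) ≤ m := by push_cast at hk; linarith
    have ih := ih hk'
    have hkm : (k : ℝ) * m⁻¹ ≤ 1 := by
      rw [← div_eq_mul_inv, div_le_one hm]; exact hk'
    rw [EE_succ π _ 0]
    simp_rw [sg_insertNth, smul_eq_mul, ← EE_mul_left, ← EE_sum]
    set H : (Fin k → Fin n) → Matrix (Fin a) (Fin a) ℝ := fun ω => sg u u ω - (k / m : ℝ) • 1 with hH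
    have : ∀ ω : Fin k → Fin n,
        ∑ i, π i * fsq ((sg u u ω + vecMulVec (u i) (u i) - (((k + 1 : ℕ) : ℝ) / m) • 1) *
          (sg u v ω + vecMulVec (u i) (v i)) - ((k + 1 : ℕ) : ℝ) • eZero π u v) ≤
        (fsq (H ω * sg u v ω - (k : ℝ) • eZero π u v) +
          3 * ((∑ i, π i * fsq (H ω * vecMulVec (u i) (v i))) + κ * m⁻¹ * fsq (sg u v ω))) +
            3 * κ * sig π u v := by
      intro ω
      have e : ∀ i, (sg u u ω + vecMulVec (u i) (u i) - (((k + 1 : ℕ) : ℝ) / m) • 1) *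
          (sg u v ω + vecMulVec (u i) (v i)) - ((k + 1 : ℕ) : ℝ) • eZero π u v =
          ((H ω * sg u v ω - (k : ℝ) • eZero π u v) - eZero π u v) +
            (H ω * vecMulVec (u i) (v i) + (vecMulVec (u i) (u i) * sg u v ω - m⁻¹ • sg u v ω) +
              (u i ⬝ᵥ u i - m⁻¹) • vecMulVec (u i) (v i)) := by
        intro i
        have h1 : (((k + 1 : ℕ) : ℝ) / m) = k / m + m⁻¹ := by push_cast; ring
        have h2 : vecMulVec (u i) (u i) * vecMulVec (u i) (v i) =
            (u i ⬝ᵥ u i) • vecMulVec (u i) (v i) := by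
          rw [vecMulVec_mul_vecMulVec, vecMulVec_smul]
        rw [h1, hH]
        push_cast
        simp only [Matrix.add_mul, Matrix.sub_mul, Matrix.mul_add, Matrix.smul_mul, Matrix.one_mul, add_smul,
          sub_smul, h2, one_smul]
        abel
      simp_rw [e]
      refine (sum_fsq_add_le h.sum_one _ (eZero π u v) _ ?_).trans ?_
      · simp_rw [smul_add, smul_sub, sum_add_distrib, sum_sub_distrib]
        have a1 : ∑ i, π i • (H ω * vecMulVec (u i) (v i)) = 0 := by
          simp_rw [← Matrix.mul_smul]
          rw [← Matrix.mul_sum, hv, Matrix.mul_zero]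
        have a2 : ∑ i, π i • (vecMulVec (u i) (u i) * sg u v ω) = m⁻¹ • sg u v ω := by
          simp_rw [← Matrix.smul_mul]
          rw [← Matrix.sum_mul, h.iso, Matrix.smul_mul, Matrix.one_mul]
        have a3 : ∑ i, π i • (m⁻¹ • sg u v ω) = m⁻¹ • sg u v ω := by
          rw [← sum_smul, h.sum_one, one_smul]
        have a4 : ∑ i, π i • ((u i ⬝ᵥ u i - m⁻¹) • vecMulVec (u i) (v i)) = eZero π u v := by
          simp_rw [sub_smul, smul_sub, sum_sub_distrib, smul_comm (π _) m⁻¹, ← smul_sum, hv, smul_zero, sub_zero]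
          unfold eZero
          simp_rw [vecMulVec_smul]
        rw [a1, a2, a3, a4]; simp
      · rw [sub_add_cancel, add_assoc, add_le_add_iff_left]
        have b1 : ∑ i, π i * fsq (vecMulVec (u i) (u i) * sg u v ω - m⁻¹ • sg u v ω) ≤
            κ * m⁻¹ * fsq (sg u v ω) := by
          have c1 := sum_fsq_add_le h.sum_one (-(m⁻¹ • sg u v ω)) (m⁻¹ • sg u v ω)
            (fun i => vecMulVec (u i) (u i) * sg u v ω) (by
              simp_rw [← Matrix.smul_mul]
              rw [← Matrix.sum_mul, h.iso, Matrix.smul_mul, Matrix.one_mul])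
          rw [neg_add_cancel, fsq_zero, zero_add] at c1
          simp_rw [neg_add_eq_sub] at c1
          refine c1.trans ?_
          rw [mul_assoc, ← h.sum_vecMul, mul_sum]
          refine sum_le_sum fun i _ => ?_
          rw [vecMulVec_mul, fsq_vecMulVec, mul_left_comm]
          exact mul_le_mul_of_nonneg_right (h.bound i) (mul_nonneg (h.nonneg i) (dot_self_nonneg _))
        have b2 : ∑ i, π i * fsq ((u i ⬝ᵥ u i - m⁻¹) • vecMulVec (u i) (v i)) ≤ κ * sig π u v := by
          unfold sig
          rw [mul_sum]
          refine sum_le_sum fun i _ => ?_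
          rw [fsq_smul, fsq_vecMulVec, mul_left_comm]
          refine mul_le_mul_of_nonneg_right ?_
            (mul_nonneg (h.nonneg i) (mul_nonneg (dot_self_nonneg _) (dot_self_nonneg _)))
          have d1 := h.bound i
          have d2 := dot_self_nonneg (u i)
          have d3 : 0 < m⁻¹ := inv_pos.2 hm
          have d4 := h.inv_le
          have d5 := h.κ_le
          have : (u i ⬝ᵥ u i - m⁻¹) ^ 2 ≤ κ ^ 2 := sq_le_sq' (by linarith) (by linarith)
          nlinarith
        have b3 : ∑ i, π i * fsq (H ω * vecMulVec (u i) (v i) +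
            (vecMulVec (u i) (u i) * sg u v ω - m⁻¹ • sg u v ω) +
              (u i ⬝ᵥ u i - m⁻¹) • vecMulVec (u i) (v i)) ≤
            ∑ i, 3 * (π i * fsq (H ω * vecMulVec (u i) (v i)) +
              π i * fsq (vecMulVec (u i) (u i) * sg u v ω - m⁻¹ • sg u v ω) +
              π i * fsq ((u i ⬝ᵥ u i - m⁻¹) • vecMulVec (u i) (v i))) :=
          sum_le_sum fun i _ =>
            (mul_le_mul_of_nonneg_left (fsq_add3_le _ _ _) (h.nonneg i)).trans (le_of_eq (by ring))
        rw [← mul_sum, sum_add_distrib, sum_add_distrib] at b3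
        linarith
    refine (EE_mono h.nonneg this).trans ?_
    rw [EE_add, EE_add, EE_mul_left, EE_add, EE_mul_left, EE_const h.sum_one, EE_sum]
    simp_rw [EE_mul_left]
    have f1 : ∑ i, π i * EE π (fun ω => fsq (H ω * vecMulVec (u i) (v i))) ≤ κ * sig π u v := by
      unfold sig
      rw [mul_sum]
      refine sum_le_sum fun i _ => ?_
      rw [mul_left_comm]
      refine mul_le_mul_of_nonneg_left ?_ (h.nonneg i)
      refine (h.second_moment _ k).trans ?_
      rw [fsq_vecMulVec]
      have : 0 ≤ κ * ((u i ⬝ᵥ u i) * (v i ⬝ᵥ v i)) :=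
        mul_nonneg hκ.le (mul_nonneg (dot_self_nonneg _) (dot_self_nonneg _))
      nlinarith
    have f2 := h.cross_moment hv k
    have f3 : κ * m⁻¹ * EE π (fun ω : Fin k → Fin n => fsq (sg u v ω)) ≤ κ * sig π u v := by
      have g1 : 0 ≤ κ * m⁻¹ := by positivity
      have g2 := mul_le_mul_of_nonneg_left f2 g1
      have g3 : 0 ≤ κ * sig π u v := by positivity
      nlinarith
    push_cast
    linarith

/-- For a full sample, `(K - 1) G` has second moment of order `κ · m σ`. -/
lemma Iso.product_moment_full (h : Iso π u m κ) (hv : ∑ i, π i • vecMulVec (u i) (v i) = 0) (k : ℕ)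
    (hk : (k : ℝ) = m) :
    EE π (fun ω : Fin k → Fin n => fsq ((sg u u ω - 1) * sg u v ω)) ≤ 20 * κ * (m * sig π u v) := by
  have hm := h.m_pos
  have h1 := h.product_moment hv k hk.le
  have h2 := h.eZero_le v
  have e : ∀ ω : Fin k → Fin n, fsq ((sg u u ω - 1) * sg u v ω) ≤
      2 * fsq ((sg u u ω - (k / m : ℝ) • 1) * sg u v ω - (k : ℝ) • eZero π u v) +
        2 * (m ^ 2 * fsq (eZero π u v)) := by
    intro ω
    have : (sg u u ω - 1) * sg u v ω =
        ((sg u u ω - (k / m : ℝ) • 1) * sg u v ω - (k : ℝ) • eZero π u v) + (k : ℝ) • eZero π u v := by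
      rw [sub_add_cancel, hk, div_self hm.ne', one_smul]
    rw [this]
    refine (fsq_add_le _ _).trans (le_of_eq ?_)
    rw [fsq_smul, hk]; ring
  refine (EE_mono h.nonneg e).trans ?_
  rw [EE_add, EE_mul_left, EE_const h.sum_one]
  have h3 : m ^ 2 * fsq (eZero π u v) ≤ m ^ 2 * (m⁻¹ * (κ * sig π u v)) :=
    mul_le_mul_of_nonneg_left h2 (by positivity)
  have h4 : m ^ 2 * (m⁻¹ * (κ * sig π u v)) = κ * (m * sig π u v) := by field_simp
  rw [hk] at h1
  rw [hk]
  nlinarith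

end cross

/-! ### The inverse Gram matrix: variance and bias -/

open scoped Classical in
/-- Indicator of `IsGood`. -/
def gd {a : ℕ} (A : Matrix (Fin a) (Fin a) ℝ) : ℝ := if IsGood A then 1 else 0

lemma gd_of {a : ℕ} {A : Matrix (Fin a) (Fin a) ℝ} (h : IsGood A) : gd A = 1 := if_pos h
lemma gd_of_not {a : ℕ} {A : Matrix (Fin a) (Fin a) ℝ} (h : ¬ IsGood A) : gd A = 0 := if_neg h
lemma gd_nonneg {a : ℕ} (A : Matrix (Fin a) (Fin a) ℝ) : 0 ≤ gd A := by
  unfold gd; split_ifs <;> norm_num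
lemma gd_le {a : ℕ} (A : Matrix (Fin a) (Fin a) ℝ) : gd A ≤ 1 := by
  unfold gd; split_ifs <;> norm_num

/-- Probability that the random Gram matrix of `k` draws is not good. -/
def badP {n a : ℕ} (π : Fin n → ℝ) (u : Matrix (Fin n) (Fin a) ℝ) (k : ℕ) : ℝ :=
  EE π (fun ω : Fin k → Fin n => 1 - gd (sg u u ω))

section onesided
variable {n a b : ℕ} {π : Fin n → ℝ} {u : Matrix (Fin n) (Fin a) ℝ} {m κ : ℝ}
  {v : Matrix (Fin n) (Fin b) ℝ}

lemma sum_samplingP (h1 : ∑ i, π i = 1) (k : ℕ) : ∑ ω : Fin k → Fin n, samplingP π ω = 1 := by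
  simpa [EE] using EE_const (k := k) h1 (1 : ℝ)

lemma Iso.badP_nonneg (h : Iso π u m κ) (k : ℕ) : 0 ≤ badP π u k :=
  EE_nonneg h.nonneg fun ω => by linarith [gd_le (sg u u ω)]

lemma Iso.badP_le (h : Iso π u m κ) (j : ℕ) (hN : (2 : ℝ) ^ j * κ ≤ 1 / 2) (k : ℕ) (hk : m ≤ 2 * k) :
    badP π u k ≤ a * (9 / 10) ^ 2 ^ j := by
  classical
  refine le_trans (le_of_eq ?_) (chernoff h j hN k hk)
  unfold badP
  congr 1
  ext ω
  by_cases hg : IsGood (sg u u ω)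
  · rw [gd_of hg, if_pos hg]; norm_num
  · rw [gd_of_not hg, if_neg hg]; norm_num

/-- Second moment of `K⁻¹ G` on the good event. -/
lemma Iso.good_variance (h : Iso π u m κ) (hv : ∑ i, π i • vecMulVec (u i) (v i) = 0) (k : ℕ)
    (hk : (k : ℝ) = m) (ζ : Finset (Fin k → Fin n)) (hζ : ∀ ω ∈ ζ, IsGood (sg u u ω)) :
    √(∑ ω ∈ ζ, samplingP π ω * fsq ((sg u u ω)⁻¹ * sg u v ω)) ≤
      (1 + 36 * √κ) * √(m * sig π u v) := by
  have hm := h.m_pos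
  have hκ := h.κ_pos
  have hs := h.sig_nonneg v
  have hP := fun ω (_ : ω ∈ ζ) => samplingP_nonneg (k := k) h.nonneg ω
  have mono : ∀ f : (Fin k → Fin n) → ℝ, (∀ ω, 0 ≤ f ω) →
      ∑ ω ∈ ζ, samplingP π ω * f ω ≤ EE π f := fun f hf =>
    sum_le_univ_sum_of_nonneg fun ω => mul_nonneg (samplingP_nonneg h.nonneg ω) (hf ω)
  have e : ∑ ω ∈ ζ, samplingP π ω * fsq ((sg u u ω)⁻¹ * sg u v ω) =
      ∑ ω ∈ ζ, samplingP π ω * fsq (sg u v ω + -((sg u u ω)⁻¹ * ((sg u u ω - 1) * sg u v ω))) := by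
    refine sum_congr rfl fun ω hω => ?_
    rw [Matrix.sub_mul, Matrix.one_mul, Matrix.mul_sub, Matrix.nonsing_inv_mul_cancel_left _ _ (hζ ω hω).isUnit_det]
    congr 2
    abel
  rw [e]
  refine (minkowski ζ hP _ _).trans ?_
  have h1 : ∑ ω ∈ ζ, samplingP π ω * fsq (sg u v ω) ≤ m * sig π u v :=
    (mono _ fun ω => fsq_nonneg _).trans (by rw [← hk]; exact h.cross_moment hv k)
  have h2 : ∑ ω ∈ ζ, samplingP π ω * fsq (-((sg u u ω)⁻¹ * ((sg u u ω - 1) * sg u v ω))) ≤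
      36 ^ 2 * κ * (m * sig π u v) := by
    have a1 : ∑ ω ∈ ζ, samplingP π ω * fsq (-((sg u u ω)⁻¹ * ((sg u u ω - 1) * sg u v ω))) ≤
        ∑ ω ∈ ζ, 64 * (samplingP π ω * fsq ((sg u u ω - 1) * sg u v ω)) := by
      refine sum_le_sum fun ω hω => ?_
      rw [fsq_neg, mul_left_comm]
      exact mul_le_mul_of_nonneg_left ((hζ ω hω).fsq_inv_mul_le _) (hP ω hω)
    rw [← mul_sum] at a1
    have a2 := (mono _ fun ω => fsq_nonneg ((sg u u ω - 1) * sg u v ω)).trans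
      (h.product_moment_full hv k hk)
    have : 0 ≤ κ * (m * sig π u v) := by positivity
    nlinarith
  calc _ ≤ √(m * sig π u v) + √(36 ^ 2 * κ * (m * sig π u v)) :=
        add_le_add (Real.sqrt_le_sqrt h1) (Real.sqrt_le_sqrt h2)
    _ = _ := by
      rw [Real.sqrt_mul (by positivity) (m * sig π u v), Real.sqrt_mul (by positivity) κ, Real.sqrt_sq (by norm_num)]
      ring

/-- Leave-one-out expansion: `K⁻¹ G` is the sum over draws `t` of `K⁻¹ u_t v_tᵀ`, all of the same law, and `K`
is a rank-one update of the Gram matrix of the other `k` draws. -/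
lemma EE_inverse_expand (π : Fin n → ℝ) (u : Matrix (Fin n) (Fin a) ℝ) (v : Matrix (Fin n) (Fin b) ℝ) (k : ℕ) :
    EE π (fun ω : Fin (k + 1) → Fin n => gd (sg u u ω) • ((sg u u ω)⁻¹ * sg u v ω)) =
      ((k : ℝ) + 1) • EE π (fun ω : Fin k → Fin n => ∑ i, π i •
        (gd (sg u u ω + vecMulVec (u i) (u i)) •
          vecMulVec ((sg u u ω + vecMulVec (u i) (u i))⁻¹ *ᵥ u i) (v i))) := by
  have : ∀ ω : Fin (k + 1) → Fin n, gd (sg u u ω) • ((sg u u ω)⁻¹ * sg u v ω) =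
      ∑ t, gd (sg u u ω) • vecMulVec ((sg u u ω)⁻¹ *ᵥ (u (ω t))) (v (ω t)) := by
    intro ω
    conv_lhs => enter [2]; unfold sg
    rw [Matrix.mul_sum, smul_sum]
    simp_rw [mul_vecMulVec]
    rfl
  simp_rw [this]
  rw [EE_sum]
  have h2 : ∀ t : Fin (k + 1), EE π (fun ω : Fin (k + 1) → Fin n =>
      gd (sg u u ω) • vecMulVec ((sg u u ω)⁻¹ *ᵥ (u (ω t))) (v (ω t))) =
      EE π (fun ω : Fin k → Fin n => ∑ i, π i •
        (gd (sg u u ω + vecMulVec (u i) (u i)) •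
          vecMulVec ((sg u u ω + vecMulVec (u i) (u i))⁻¹ *ᵥ u i) (v i))) := by
    intro t
    rw [EE_succ π _ t, EE_sum]
    simp_rw [EE_smul, sg_insertNth, Fin.insertNth_apply_same]
  simp_rw [h2]
  rw [sum_const, card_univ, Fintype.card_fin, ← Nat.cast_smul_eq_nsmul ℝ]
  push_cast
  rfl

/-- Leave-one-out error: `(1 + uᵀK⁻¹u)⁻¹` is close to the constant `(1 + γ)⁻¹`. -/
lemma loo_error {K : Matrix (Fin a) (Fin a) ℝ} (hK : K.PosSemidef) (hg : IsGood K) (x : Fin a → ℝ)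
    {γ η : ℝ} (hγ : 0 ≤ γ) (hη : |x ⬝ᵥ x - γ| ≤ η) :
    ((1 + x ⬝ᵥ (K⁻¹ *ᵥ x))⁻¹ - (1 + γ)⁻¹) ^ 2 ≤
      2 * η ^ 2 + 128 * (x ⬝ᵥ x) * (((K - 1) *ᵥ x) ⬝ᵥ ((K - 1) *ᵥ x)) := by
  set z := x ⬝ᵥ (K⁻¹ *ᵥ x) with hz
  have hz0 : 0 ≤ z := by simpa using hK.inv.dotProduct_mulVec_nonneg x
  have hs : (K⁻¹)ᵀ = K⁻¹ := by simpa using hK.inv.isHermitian.eq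
  have e1 : ((1 + z)⁻¹ - (1 + γ)⁻¹) ^ 2 ≤ (z - γ) ^ 2 := by
    have : (1 + z)⁻¹ - (1 + γ)⁻¹ = (γ - z) * ((1 + z) * (1 + γ))⁻¹ := by field_simp; ring
    rw [this, mul_pow]
    have h1 : ((1 + z) * (1 + γ))⁻¹ ≤ 1 := inv_le_one_of_one_le₀ (by nlinarith)
    have h2 : 0 ≤ ((1 + z) * (1 + γ))⁻¹ := by positivity
    have : (((1 + z) * (1 + γ))⁻¹) ^ 2 ≤ 1 := pow_le_one₀ h2 h1
    nlinarith [sq_nonneg (γ - z)]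
  have e2 : z = x ⬝ᵥ x - (K⁻¹ *ᵥ x) ⬝ᵥ ((K - 1) *ᵥ x) := by
    rw [sub_mulVec, one_mulVec, dotProduct_sub]
    have : (K⁻¹ *ᵥ x) ⬝ᵥ (K *ᵥ x) = x ⬝ᵥ x := by
      rw [dotProduct_mulVec, ← mulVec_transpose, show Kᵀ = K by simpa using hK.isHermitian.eq, mulVec_mulVec,
        Matrix.mul_nonsing_inv _ hg.isUnit_det, one_mulVec]
    rw [this, hz, dotProduct_comm x]; ring
  have e3 := dot_sq_le (K⁻¹ *ᵥ x) ((K - 1) *ᵥ x)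
  have e4 := mul_le_mul_of_nonneg_right (hg.inv_dot_le x) (dot_self_nonneg ((K - 1) *ᵥ x))
  have e5 : (x ⬝ᵥ x - γ) ^ 2 ≤ η ^ 2 := sq_le_sq' (by linarith [neg_abs_le (x ⬝ᵥ x - γ)])
    ((le_abs_self _).trans hη)
  refine e1.trans ?_
  rw [e2]
  set y := (K⁻¹ *ᵥ x) ⬝ᵥ ((K - 1) *ᵥ x)
  nlinarith [sq_nonneg (x ⬝ᵥ x - γ + y)]

/-- The mean of `K⁻¹ G` on the good event is of order `η + κ^{3/2}`, where `η` bounds the spread of `|u_i|²`. The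
leave-one-out expansion is split into a part `F₁` on the event that the remaining draws are good, and a part
`F₂` on the event that only the full sample is. -/
lemma Iso.good_bias (h : Iso π u m κ) (hv : ∑ i, π i • vecMulVec (u i) (v i) = 0) (k : ℕ)
    (hk : (k : ℝ) + 1 = m) {γ η τ A : ℝ} (hγ : 0 ≤ γ)
    (hη : ∀ i, π i ≠ 0 → |u i ⬝ᵥ u i - γ| ≤ η) (hτ : m * ∑ i, π i * (v i ⬝ᵥ v i) ≤ τ)
    (hp : a * badP π u k ≤ A * κ ^ 2) (ha : 1 ≤ a) :
    fsq (EE π (fun ω : Fin (k + 1) → Fin n => gd (sg u u ω) • ((sg u u ω)⁻¹ * sg u v ω))) ≤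
      (65536 + 128 * A ^ 2) * (η ^ 2 + κ ^ 3) * τ := by
  have hm := h.m_pos
  have hκ := h.κ_pos
  have hκ1 := h.κ_le
  have hV0 : 0 ≤ ∑ i, π i * (v i ⬝ᵥ v i) := sum_nonneg fun i _ => mul_nonneg (h.nonneg i) (dot_self_nonneg _)
  have hτ0 : 0 ≤ τ := le_trans (by positivity) hτ
  set δ : (Fin k → Fin n) → Fin n → ℝ := fun ω i =>
    (1 + u i ⬝ᵥ ((sg u u ω)⁻¹ *ᵥ u i))⁻¹ - (1 + γ)⁻¹ with hδ
  set F₁ : (Fin k → Fin n) → Matrix (Fin a) (Fin b) ℝ := fun ω =>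
    gd (sg u u ω) • ((sg u u ω)⁻¹ * ∑ i, π i • vecMulVec (u i) (δ ω i • v i)) with hF₁
  set F₂ : (Fin k → Fin n) → Matrix (Fin a) (Fin b) ℝ := fun ω =>
    ∑ i, (π i * (gd (sg u u ω + vecMulVec (u i) (u i)) - gd (sg u u ω))) •
      vecMulVec ((sg u u ω + vecMulVec (u i) (u i))⁻¹ *ᵥ u i) (v i) with hF₂
  have hind : ∀ ω i, 0 ≤ gd (sg u u ω + vecMulVec (u i) (u i)) - gd (sg (k := k) u u ω) := by
    intro ω i
    by_cases hg : IsGood (sg u u ω)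
    · rw [gd_of hg, gd_of (hg.add (u i))]; norm_num
    · rw [gd_of_not hg, sub_zero]; exact gd_nonneg _
  have split : ∀ ω : Fin k → Fin n, ∑ i, π i • (gd (sg u u ω + vecMulVec (u i) (u i)) •
          vecMulVec ((sg u u ω + vecMulVec (u i) (u i))⁻¹ *ᵥ u i) (v i)) = F₁ ω + F₂ ω := by
    intro ω
    have : F₁ ω = ∑ i, (π i * gd (sg u u ω)) •
        vecMulVec ((sg u u ω + vecMulVec (u i) (u i))⁻¹ *ᵥ u i) (v i) := by
      by_cases hg : IsGood (sg u u ω)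
      · have hK := sg_posSemidef u ω
        have hsm : ∀ i, vecMulVec ((sg u u ω + vecMulVec (u i) (u i))⁻¹ *ᵥ u i) (v i) =
            (sg u u ω)⁻¹ * (vecMulVec (u i) (δ ω i • v i) + (1 + γ)⁻¹ • vecMulVec (u i) (v i)) := by
          intro i
          have hz0 : 0 ≤ u i ⬝ᵥ ((sg u u ω)⁻¹ *ᵥ u i) := by
            simpa using hK.inv.dotProduct_mulVec_nonneg (u i)
          have hx : (sg u u ω + vecMulVec (u i) (u i))⁻¹ *ᵥ u i =
              (1 + u i ⬝ᵥ ((sg u u ω)⁻¹ *ᵥ u i))⁻¹ • ((sg u u ω)⁻¹ *ᵥ u i) := by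
            rw [inv_add_rank_one (sg u u ω) hg.isUnit_det (by simpa using hK.isHermitian.eq) (u i) _ rfl hz0,
              sub_mulVec, smul_mulVec, vecMulVec_mulVec', dotProduct_comm _ (u i), smul_smul]
            ext l
            simp only [Pi.sub_apply, Pi.smul_apply, smul_eq_mul]
            field_simp
            ring
          have hy : δ ω i • v i + (1 + γ)⁻¹ • v i = (1 + u i ⬝ᵥ ((sg u u ω)⁻¹ *ᵥ u i))⁻¹ • v i := by
            rw [← add_smul, hδ, sub_add_cancel]
          rw [hx, ← vecMulVec_smul, ← vecMulVec_add, hy, mul_vecMulVec, vecMulVec_smul, smul_vecMulVec]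
        simp_rw [hsm, gd_of hg, mul_one, hF₁, gd_of hg, one_smul, ← Matrix.mul_smul, ← Matrix.mul_sum,
          smul_add, sum_add_distrib, smul_comm (π _) (1 + γ)⁻¹, ← smul_sum, hv, smul_zero, add_zero]
      · simp [hF₁, gd_of_not hg]
    rw [this, hF₂, ← sum_add_distrib]
    refine sum_congr rfl fun i _ => ?_
    rw [← add_smul, smul_smul]
    congr 1; ring
  rw [EE_inverse_expand]
  simp_rw [split]
  rw [EE_add, fsq_smul, hk]
  have hPs := sum_samplingP h.sum_one k
  -- the smooth part, through Bessel and the leave-one-out error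
  have b1 : fsq (EE π F₁) ≤ 64 * m⁻¹ * ((2 * η ^ 2 + 512 * κ ^ 3) * ∑ i, π i * (v i ⬝ᵥ v i)) := by
    have j1 := fsq_sum_le univ (fun ω _ => samplingP_nonneg h.nonneg ω) F₁
    rw [hPs, one_mul] at j1
    refine j1.trans ?_
    have j2 : ∀ ω, fsq (F₁ ω) ≤ 64 * m⁻¹ * ∑ i, π i * (2 * η ^ 2 * (v i ⬝ᵥ v i) +
        128 * κ * fsq ((sg u u ω - 1) * vecMulVec (u i) (v i))) := by
      intro ω
      by_cases hg : IsGood (sg u u ω)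
      · rw [hF₁]
        simp only [gd_of hg, one_smul]
        refine (hg.fsq_inv_mul_le _).trans ?_
        rw [mul_assoc]
        refine mul_le_mul_of_nonneg_left ((h.bessel _).trans ?_) (by norm_num)
        refine mul_le_mul_of_nonneg_left (sum_le_sum fun i _ => ?_) (by positivity)
        rcases eq_or_ne (π i) 0 with h0 | h0
        · simp [h0]
        refine mul_le_mul_of_nonneg_left ?_ (h.nonneg i)
        rw [mul_vecMulVec, fsq_vecMulVec]
        simp only [smul_dotProduct, dotProduct_smul, smul_eq_mul]
        have q1 := loo_error (sg_posSemidef u ω) hg (u i) hγ (hη i h0)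
        have q2 := mul_le_mul_of_nonneg_right q1 (dot_self_nonneg (v i))
        have q3 := mul_le_mul_of_nonneg_right (h.bound i)
          (mul_nonneg (dot_self_nonneg ((sg u u ω - 1) *ᵥ u i)) (dot_self_nonneg (v i)))
        simp only [hδ]
        nlinarith
      · have : F₁ ω = 0 := by simp [hF₁, gd_of_not hg]
        rw [this, fsq_zero]
        exact mul_nonneg (by positivity) (sum_nonneg fun i _ => mul_nonneg (h.nonneg i)
          (add_nonneg (mul_nonneg (by positivity) (dot_self_nonneg _)) (mul_nonneg (by positivity) (fsq_nonneg _))))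
    have j3 := EE_mono h.nonneg j2
    rw [EE_mul_left, EE_sum] at j3
    refine j3.trans ?_
    refine mul_le_mul_of_nonneg_left ?_ (by positivity)
    rw [mul_sum]
    refine sum_le_sum fun i _ => ?_
    rw [EE_mul_left, EE_add, EE_const h.sum_one, EE_mul_left, mul_left_comm]
    refine mul_le_mul_of_nonneg_left ?_ (h.nonneg i)
    have sm := h.second_moment (vecMulVec (u i) (v i)) k
    have pw : ∀ ω : Fin k → Fin n, fsq ((sg u u ω - 1) * vecMulVec (u i) (v i)) ≤
        2 * fsq ((sg u u ω - (k / m : ℝ) • 1) * vecMulVec (u i) (v i)) +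
          2 * (m⁻¹ ^ 2 * fsq (vecMulVec (u i) (v i))) := by
      intro ω
      have : (sg u u ω - 1) * vecMulVec (u i) (v i) =
          (sg u u ω - (k / m : ℝ) • 1) * vecMulVec (u i) (v i) + (-m⁻¹) • vecMulVec (u i) (v i) := by
        have : (1 : Matrix (Fin a) (Fin a) ℝ) = (k / m : ℝ) • 1 + m⁻¹ • 1 := by
          rw [← add_smul, div_eq_mul_inv, ← add_one_mul, hk, mul_inv_cancel₀ hm.ne', one_smul]
        conv_lhs => rw [this]
        simp only [Matrix.sub_mul, Matrix.add_mul, Matrix.smul_mul, Matrix.one_mul, neg_smul]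
        abel
      rw [this]
      refine (fsq_add_le _ _).trans (le_of_eq ?_)
      rw [fsq_smul]; ring
    have pw2 := EE_mono h.nonneg pw
    rw [EE_add, EE_mul_left, EE_const h.sum_one] at pw2
    rw [fsq_vecMulVec] at pw2 sm
    have hU := dot_self_nonneg (u i)
    have hVi := dot_self_nonneg (v i)
    have hUV := mul_nonneg hU hVi
    have hmi : 0 < m⁻¹ := inv_pos.2 hm
    have r1 : k * (κ * m⁻¹ * ((u i ⬝ᵥ u i) * (v i ⬝ᵥ v i))) ≤ κ * ((u i ⬝ᵥ u i) * (v i ⬝ᵥ v i)) := by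
      have : (k : ℝ) * m⁻¹ ≤ 1 := by rw [← div_eq_mul_inv, div_le_one hm]; linarith
      have : 0 ≤ κ * ((u i ⬝ᵥ u i) * (v i ⬝ᵥ v i)) := by positivity
      nlinarith
    have r2 : m⁻¹ ^ 2 * ((u i ⬝ᵥ u i) * (v i ⬝ᵥ v i)) ≤ κ * ((u i ⬝ᵥ u i) * (v i ⬝ᵥ v i)) := by
      refine mul_le_mul_of_nonneg_right ?_ hUV
      have := h.inv_le
      nlinarith
    have r3 : κ * ((u i ⬝ᵥ u i) * (v i ⬝ᵥ v i)) ≤ κ * (κ * (v i ⬝ᵥ v i)) :=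
      mul_le_mul_of_nonneg_left (mul_le_mul_of_nonneg_right (h.bound i) hVi) hκ.le
    have r4 : EE π (fun ω : Fin k → Fin n => fsq ((sg u u ω - 1) * vecMulVec (u i) (v i))) ≤
        4 * (κ * (κ * (v i ⬝ᵥ v i))) := by linarith
    have r5 := mul_le_mul_of_nonneg_left r4 (show 0 ≤ 128 * κ by positivity)
    nlinarith
  -- the part where leaving one draw out destroys goodness has tiny probability
  have b2 : fsq (EE π F₂) ≤ 64 * (m⁻¹ * (a * badP π u k)) * (badP π u k * ∑ i, π i * (v i ⬝ᵥ v i)) := by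
    set w : (Fin k → Fin n) × Fin n → ℝ := fun t =>
      samplingP π t.1 * (π t.2 * (gd (sg u u t.1 + vecMulVec (u t.2) (u t.2)) - gd (sg u u t.1))) with hw
    have hw0 : ∀ t, 0 ≤ w t := fun t =>
      mul_nonneg (samplingP_nonneg h.nonneg _) (mul_nonneg (h.nonneg _) (hind _ _))
    have e : EE π F₂ = ∑ t, w t • vecMulVec ((sg u u t.1 + vecMulVec (u t.2) (u t.2))⁻¹ *ᵥ u t.2) (v t.2) := by
      rw [Fintype.sum_prod_type]
      simp only [EE, hF₂, smul_sum, smul_smul, hw]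
    rw [e]
    refine (fsq_sum_vecMulVec_le univ (fun t _ => hw0 t) _ _).trans ?_
    have hle : ∀ ω i, gd (sg u u ω + vecMulVec (u i) (u i)) - gd (sg (k := k) u u ω) ≤ 1 - gd (sg u u ω) :=
      fun ω i => sub_le_sub_right (gd_le _) _
    have c1 : ∑ t, w t * (((sg u u t.1 + vecMulVec (u t.2) (u t.2))⁻¹ *ᵥ u t.2) ⬝ᵥ
        ((sg u u t.1 + vecMulVec (u t.2) (u t.2))⁻¹ *ᵥ u t.2)) ≤ 64 * (m⁻¹ * (a * badP π u k)) := by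
      have d1 : ∀ t, w t * (((sg u u t.1 + vecMulVec (u t.2) (u t.2))⁻¹ *ᵥ u t.2) ⬝ᵥ
        ((sg u u t.1 + vecMulVec (u t.2) (u t.2))⁻¹ *ᵥ u t.2)) ≤
          64 * ((samplingP π t.1 * (1 - gd (sg u u t.1))) * (π t.2 * (u t.2 ⬝ᵥ u t.2))) := by
        intro t
        by_cases hg : IsGood (sg u u t.1 + vecMulVec (u t.2) (u t.2))
        · have f1 := hg.inv_dot_le (u t.2)
          have f2 := mul_le_mul_of_nonneg_left f1 (hw0 t)
          refine f2.trans ?_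
          have f3 : w t ≤ samplingP π t.1 * (π t.2 * (1 - gd (sg u u t.1))) :=
            mul_le_mul_of_nonneg_left (mul_le_mul_of_nonneg_left (hle _ _) (h.nonneg _)) (samplingP_nonneg h.nonneg _)
          have f4 := mul_le_mul_of_nonneg_right f3 (mul_nonneg (show (0:ℝ) ≤ 64 by norm_num) (dot_self_nonneg (u t.2)))
          refine f4.trans (le_of_eq ?_)
          ring
        · have f1 := hind t.1 t.2
          rw [gd_of_not hg] at f1
          have f2 : gd (sg u u t.1) = 0 := by linarith [gd_nonneg (sg u u t.1)]
          have : w t = 0 := by simp only [hw]; rw [gd_of_not hg, f2]; ring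
          rw [this, zero_mul]
          exact mul_nonneg (by norm_num) (mul_nonneg (mul_nonneg (samplingP_nonneg h.nonneg _)
            (by linarith [gd_le (sg u u t.1)])) (mul_nonneg (h.nonneg _) (dot_self_nonneg _)))
      refine (sum_le_sum fun t _ => d1 t).trans (le_of_eq ?_)
      rw [← mul_sum, Fintype.sum_prod_type]
      dsimp only
      rw [← sum_mul_sum]
      have := h.sum_dot 1
      simp only [one_mulVec, Matrix.trace_one, Fintype.card_fin] at this
      rw [this]
      unfold badP EE
      simp only [smul_eq_mul]
      ring
    have c2 : ∑ t, w t * (v t.2 ⬝ᵥ v t.2) ≤ badP π u k * ∑ i, π i * (v i ⬝ᵥ v i) := by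
      have d1 : ∀ t, w t * (v t.2 ⬝ᵥ v t.2) ≤
          (samplingP π t.1 * (1 - gd (sg u u t.1))) * (π t.2 * (v t.2 ⬝ᵥ v t.2)) := by
        intro t
        have f3 : w t ≤ samplingP π t.1 * (π t.2 * (1 - gd (sg u u t.1))) :=
          mul_le_mul_of_nonneg_left (mul_le_mul_of_nonneg_left (hle _ _) (h.nonneg _)) (samplingP_nonneg h.nonneg _)
        refine (mul_le_mul_of_nonneg_right f3 (dot_self_nonneg _)).trans (le_of_eq ?_)
        ring
      refine (sum_le_sum fun t _ => d1 t).trans (le_of_eq ?_)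
      rw [Fintype.sum_prod_type]
      dsimp only
      rw [← sum_mul_sum]
      rfl
    exact mul_le_mul c1 c2 (sum_nonneg fun t _ => mul_nonneg (hw0 t) (dot_self_nonneg _))
      (mul_nonneg (by norm_num) (mul_nonneg (by positivity) (mul_nonneg (by positivity) (h.badP_nonneg k))))
  have hadd := fsq_add_le (EE π F₁) (EE π F₂)
  have s1 : m ^ 2 * fsq (EE π F₁) ≤ 64 * (2 * η ^ 2 + 512 * κ ^ 3) * τ := by
    calc m ^ 2 * fsq (EE π F₁) ≤ m ^ 2 * (64 * m⁻¹ * ((2 * η ^ 2 + 512 * κ ^ 3) * ∑ i, π i * (v i ⬝ᵥ v i))) :=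
          mul_le_mul_of_nonneg_left b1 (by positivity)
      _ = 64 * (2 * η ^ 2 + 512 * κ ^ 3) * (m * ∑ i, π i * (v i ⬝ᵥ v i)) := by field_simp
      _ ≤ _ := mul_le_mul_of_nonneg_left hτ (by positivity)
  have hb0 := h.badP_nonneg k
  have hb1 : badP π u k ≤ A * κ ^ 2 := by
    have : (1 : ℝ) ≤ a := by exact_mod_cast ha
    nlinarith
  have s2 : m ^ 2 * fsq (EE π F₂) ≤ 64 * (A ^ 2 * κ ^ 3) * τ := by
    calc m ^ 2 * fsq (EE π F₂) ≤ m ^ 2 * (64 * (m⁻¹ * (a * badP π u k)) * (badP π u k * ∑ i, π i * (v i ⬝ᵥ v i))) :=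
          mul_le_mul_of_nonneg_left b2 (by positivity)
      _ = 64 * ((a * badP π u k) * badP π u k) * (m * ∑ i, π i * (v i ⬝ᵥ v i)) := by field_simp
      _ ≤ 64 * ((A * κ ^ 2) * (A * κ ^ 2)) * τ := by
          have : (a * badP π u k) * badP π u k ≤ (A * κ ^ 2) * (A * κ ^ 2) :=
            mul_le_mul hp hb1 hb0 (le_trans (by positivity) hp)
          have hA : 0 ≤ (a * badP π u k) * badP π u k := by positivity
          exact mul_le_mul (by linarith) hτ (by positivity) (by nlinarith)
      _ ≤ _ := by
          refine mul_le_mul_of_nonneg_right ?_ hτ0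
          have : κ ^ 4 ≤ κ ^ 3 := pow_le_pow_of_le_one hκ.le hκ1 (by norm_num)
          nlinarith [sq_nonneg A]
  have s3 := mul_le_mul_of_nonneg_left hadd (show 0 ≤ m ^ 2 by positivity)
  have hη0 : 0 ≤ η ^ 2 * τ := by positivity
  have : 0 ≤ A ^ 2 * η ^ 2 * τ := by positivity
  nlinarith

end onesided

/-! ### Choice of the exponent, and the oblique projector -/

/-- Choice of the exponent: for `2 ^ j` the power of two with `1/4 < 2 ^ j κ ≤ 1/2`, the Chernoff bound
`a (9/10)^{2^j}` is below `δ/2`, and even after multiplication by the dimension `a` it is `O(κ²)`. -/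
lemma tail_choice {a : ℕ} (ha : 1 ≤ a) {κ δ : ℝ} (hκ : 0 < κ) (hδ : 0 < δ) (hδ1 : δ ≤ 1 / 27)
    (hL : 320 * Real.log (a / δ) ≤ κ⁻¹) :
    κ ≤ 1 / 2 ∧ ∃ j : ℕ, (2 : ℝ) ^ j * κ ≤ 1 / 2 ∧ a * (9 / 10 : ℝ) ^ 2 ^ j ≤ δ / 2 ∧
      a * (a * (9 / 10 : ℝ) ^ 2 ^ j) ≤ 12800 * κ ^ 2 := by
  have ha' : (1 : ℝ) ≤ a := by exact_mod_cast ha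
  have hr : 27 ≤ a / δ := by rw [le_div_iff₀ hδ]; linarith
  have hr0 : 0 < a / δ := by linarith
  have hL1 : 1 ≤ Real.log (a / δ) := by
    rw [Real.le_log_iff_exp_le hr0]
    have := Real.exp_one_lt_d9
    linarith
  have hκinv : 320 ≤ κ⁻¹ := by linarith
  have hκ2 : κ ≤ 1 / 320 := by
    rw [le_div_iff₀ (by norm_num)]
    have := mul_le_mul_of_nonneg_left hκinv hκ.le
    rw [mul_inv_cancel₀ hκ.ne'] at this
    linarith
  refine ⟨by linarith, ?_⟩
  obtain ⟨j, hj1, hj2⟩ := exists_nat_pow_near (x := (2 * κ)⁻¹) (y := 2)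
    (by rw [one_le_inv₀ (by positivity)]; linarith) (by norm_num)
  have hx : (40 * κ)⁻¹ ≤ (2 : ℝ) ^ j / 10 := by
    rw [mul_inv] at hj2 ⊢
    rw [pow_succ] at hj2
    linarith
  have hexp : (9 / 10 : ℝ) ^ 2 ^ j ≤ Real.exp (-(40 * κ)⁻¹) := by
    have h1 : (9 / 10 : ℝ) ≤ Real.exp (-(1 / 10)) := by
      have := Real.add_one_le_exp (-(1 / 10 : ℝ)); linarith
    refine (pow_le_pow_left₀ (by norm_num) h1 _).trans ?_
    rw [← Real.exp_nat_mul, Real.exp_le_exp]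
    push_cast
    linarith
  set x := (40 * κ)⁻¹ with hxdef
  have hx0 : 0 < x := by positivity
  have hx8 : 8 * Real.log (a / δ) ≤ x := by
    rw [hxdef, mul_inv]; linarith
  have hsplit : Real.exp (-x) = Real.exp (-(x / 2)) * Real.exp (-(x / 2)) := by
    rw [← Real.exp_add]; congr 1; ring
  have h4 : Real.exp (-(x / 2)) ≤ (δ / a) ^ 4 := by
    have : (δ / a) ^ 4 = Real.exp (-(4 * Real.log (a / δ))) := by
      rw [Real.exp_neg, mul_comm, Real.exp_mul, Real.exp_log hr0]
      norm_cast
      rw [← inv_pow, inv_div]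
    rw [this, Real.exp_le_exp]; linarith
  have hq : Real.exp (-(x / 2)) ≤ 12800 * κ ^ 2 := by
    have h1 := Real.quadratic_le_exp_of_nonneg (x := x / 2) (by positivity)
    rw [Real.exp_neg]
    have h2 : 0 < (x / 2) ^ 2 / 2 := by positivity
    have h3 : (x / 2) ^ 2 / 2 ≤ Real.exp (x / 2) := by linarith
    refine (inv_anti₀ h2 h3).trans (le_of_eq ?_)
    rw [hxdef]; field_simp; norm_num
  have h1 : Real.exp (-(x / 2)) ≤ 1 := Real.exp_le_one_iff.2 (by linarith)
  have hp := Real.exp_pos (-(x / 2))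
  have ha0 : (0 : ℝ) < a := by linarith
  have hda : (a : ℝ) ^ 2 * (δ / a) ^ 4 ≤ δ ^ 4 := by
    have : (a : ℝ) ^ 2 * (δ / a) ^ 4 = δ ^ 4 * (1 / a) ^ 2 := by field_simp
    rw [this]
    have : (1 / a : ℝ) ^ 2 ≤ 1 := pow_le_one₀ (by positivity) (by rw [div_le_one ha0]; exact ha')
    have : 0 < δ ^ 4 := by positivity
    nlinarith
  have hδ4 : δ ^ 4 ≤ δ / 2 := by
    have : δ ^ 3 ≤ (1 / 27) ^ 3 := pow_le_pow_left₀ hδ.le hδ1 3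
    have e : δ ^ 4 = δ * δ ^ 3 := by ring
    rw [e]; nlinarith
  refine ⟨j, ?_, ?_, ?_⟩
  · have := mul_le_mul_of_nonneg_right hj1 hκ.le
    rw [mul_inv, mul_assoc, inv_mul_cancel₀ hκ.ne'] at this
    linarith
  · calc a * (9 / 10 : ℝ) ^ 2 ^ j ≤ a * (Real.exp (-(x / 2)) * Real.exp (-(x / 2))) := by
          rw [← hsplit]; exact mul_le_mul_of_nonneg_left hexp (by positivity)
      _ ≤ a * ((δ / a) ^ 4 * 1) := by gcongr
      _ ≤ a * (a * (δ / a) ^ 4) := by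
          rw [mul_one]
          have : 0 ≤ (δ / a) ^ 4 := by positivity
          refine mul_le_mul_of_nonneg_left ?_ (by positivity)
          nlinarith
      _ ≤ δ / 2 := by rw [← mul_assoc, ← pow_two]; linarith
  · calc a * (a * (9 / 10 : ℝ) ^ 2 ^ j) ≤ a * (a * (Real.exp (-(x / 2)) * Real.exp (-(x / 2)))) := by
          rw [← hsplit]; gcongr
      _ ≤ a * (a * ((δ / a) ^ 4 * (12800 * κ ^ 2))) := by gcongr
      _ = (a ^ 2 * (δ / a) ^ 4) * (12800 * κ ^ 2) := by ring
      _ ≤ 1 * (12800 * κ ^ 2) := by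
          refine mul_le_mul_of_nonneg_right ?_ (by positivity)
          linarith
      _ = _ := one_mul _

/-- Weighted sum `∑ (ℓ_i / (m π_i)) |y_i|²`, the square of the `Δ`-terms. -/
def dsum {n c q : ℕ} (C : Matrix (Fin n) (Fin c) ℝ) (π : Fin n → ℝ) (m : ℕ)
    (Y : Matrix (Fin n) (Fin q) ℝ) : ℝ := ∑ i, lev C i / (m * π i) * (Y i ⬝ᵥ Y i)

/-- Oblique projector `C ((SC)ᵀ SC)⁻¹ (SC)ᵀ S` of sketched least squares. -/
def obl {n c m : ℕ} (C : Matrix (Fin n) (Fin c) ℝ) (π : Fin n → ℝ) (ω : Fin m → Fin n) :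
    Matrix (Fin n) (Fin n) ℝ :=
  C * ((samplingS π ω * C)ᵀ * (samplingS π ω * C))⁻¹ * (samplingS π ω * C)ᵀ * samplingS π ω

/-- Rows rescaled by `1/√(m π_i)`. -/
def scaled {n q : ℕ} (π : Fin n → ℝ) (m : ℕ) (Y : Matrix (Fin n) (Fin q) ℝ) : Matrix (Fin n) (Fin q) ℝ :=
  fun i => (1 / √(m * π i)) • Y i

lemma samplingS_mul {n q m : ℕ} (π : Fin n → ℝ) (ω : Fin m → Fin n) (Y : Matrix (Fin n) (Fin q) ℝ) (t : Fin m) :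
    (samplingS π ω * Y) t = scaled π m Y (ω t) := by
  ext j
  simp [samplingS, scaled, Matrix.mul_apply]

/-- A sketched cross-Gram matrix is a random sum of outer products of scaled rows. -/
lemma gram_eq_sg {n a b m : ℕ} (π : Fin n → ℝ) (ω : Fin m → Fin n) (A : Matrix (Fin n) (Fin a) ℝ)
    (B : Matrix (Fin n) (Fin b) ℝ) :
    (samplingS π ω * A)ᵀ * (samplingS π ω * B) = sg (scaled π m A) (scaled π m B) ω := by
  ext i j
  rw [Matrix.mul_apply]
  simp only [transpose_apply, sg, Matrix.sum_apply, vecMulVec_apply, samplingS_mul]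

section setup
variable {n c m : ℕ} {π : Fin n → ℝ}

lemma scaled_dot {q : ℕ} (hπ : ∀ i, 0 ≤ π i) (Y : Matrix (Fin n) (Fin q) ℝ) (i : Fin n) :
    scaled π m Y i ⬝ᵥ scaled π m Y i = (Y i ⬝ᵥ Y i) / (m * π i) := by
  have h : 0 ≤ m * π i := mul_nonneg (Nat.cast_nonneg _) (hπ i)
  simp only [scaled, smul_dotProduct, dotProduct_smul, smul_eq_mul]
  have : (1 / √(m * π i)) * (1 / √(m * π i)) = 1 / (m * π i) := by
    rw [div_mul_div_comm, Real.mul_self_sqrt h, one_mul]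
  rw [← mul_assoc, this]; ring

/-- Orthonormal basis of the column space: `C = Q T` with `QᵀQ = 1`. -/
lemma exists_orthonormal (C : Matrix (Fin n) (Fin c) ℝ) (hC : IsUnit (Cᵀ * C).det) :
    ∃ (Q : Matrix (Fin n) (Fin c) ℝ) (T : Matrix (Fin c) (Fin c) ℝ), IsUnit T.det ∧ C = Q * T ∧
      Qᵀ * Q = 1 ∧ ∀ i, lev C i = Q i ⬝ᵥ Q i := by
  obtain ⟨T, hT⟩ := exists_gram (B := Cᵀ * C) (by simpa using posSemidef_conjTranspose_mul_self C)
  have hTd : IsUnit T.det := by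
    rw [hT, det_mul] at hC
    exact isUnit_of_mul_isUnit_right hC
  refine ⟨C * T⁻¹, T, hTd, ?_, ?_, ?_⟩
  · rw [Matrix.nonsing_inv_mul_cancel_right _ _ hTd]
  · rw [transpose_mul, Matrix.mul_assoc, ← Matrix.mul_assoc Cᵀ, hT, transpose_nonsing_inv,
      Matrix.mul_assoc Tᵀ, Matrix.mul_nonsing_inv _ hTd, Matrix.mul_one,
      Matrix.nonsing_inv_mul _ (by rwa [det_transpose])]
  · intro i
    have h1 : (Cᵀ * C)⁻¹ = ((T⁻¹)ᵀ)ᵀ * (T⁻¹)ᵀ := by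
      rw [hT, Matrix.mul_inv_rev, transpose_transpose, transpose_nonsing_inv]
    unfold lev
    rw [h1, dot_gram, mulVec_transpose]
    rfl

/-- The oblique projector depends on the column space only, not on the basis. -/
lemma obl_eq {C Q : Matrix (Fin n) (Fin c) ℝ} {T : Matrix (Fin c) (Fin c) ℝ} (hT : IsUnit T.det)
    (h : C = Q * T) (ω : Fin m → Fin n) : obl C π ω = obl Q π ω := by
  unfold obl
  subst h
  set S := samplingS π ω
  have e : (S * (Q * T))ᵀ * (S * (Q * T)) = Tᵀ * ((S * Q)ᵀ * (S * Q)) * T := by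
    rw [← Matrix.mul_assoc S, transpose_mul]
    simp only [Matrix.mul_assoc]
  rw [e, Matrix.mul_inv_rev, Matrix.mul_inv_rev, ← Matrix.mul_assoc S, transpose_mul (S * Q) T]
  have hT' : IsUnit Tᵀ.det := by rwa [det_transpose]
  simp only [Matrix.mul_assoc]
  rw [Matrix.mul_nonsing_inv_cancel_left _ _ hT, Matrix.nonsing_inv_mul_cancel_left _ _ hT']

lemma obl_mul {q : ℕ} (Q : Matrix (Fin n) (Fin c) ℝ) (ω : Fin m → Fin n) (Y : Matrix (Fin n) (Fin q) ℝ) :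
    obl Q π ω * Y = Q * ((sg (scaled π m Q) (scaled π m Q) ω)⁻¹ * sg (scaled π m Q) (scaled π m Y) ω) := by
  unfold obl
  rw [← gram_eq_sg, ← gram_eq_sg]
  simp only [Matrix.mul_assoc]

lemma fsq_orthonormal_mul {q : ℕ} {Q : Matrix (Fin n) (Fin c) ℝ} (hQ : Qᵀ * Q = 1) (A : Matrix (Fin c) (Fin q) ℝ) :
    fsq (Q * A) = fsq A := by
  rw [fsq_eq_trace, fsq_eq_trace, transpose_mul, Matrix.mul_assoc, ← Matrix.mul_assoc Qᵀ, hQ, Matrix.one_mul]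

end setup

/-! ### One-sided sketching under leverage score sampling -/

/-- Absolute constant in the one-sided sketching bounds. -/
def K₁ : ℝ := 480000

/-- Approximate leverage-score sampling: `π` is a pmf within the factors `θ₋, θ₊` of the leverage
scores, and the sample size is at least `320 θ₊ c log (c/δ)`. -/
structure LevSampling {n c : ℕ} (C : Matrix (Fin n) (Fin c) ℝ) (π : Fin n → ℝ) (m : ℕ) (θm θp δ : ℝ) :
    Prop where
  unit : IsUnit (Cᵀ * C).det
  hm : 1 / 2 ≤ θm
  hm1 : θm ≤ 1
  hp : 1 ≤ θp
  nonneg : ∀ i, 0 ≤ π i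
  sum_one : ∑ i, π i = 1
  approx : ∀ i, lev C i / (c * θp) ≤ π i ∧ π i ≤ lev C i / (c * θm)
  δ_pos : 0 < δ
  δ_le : δ ≤ 1 / 27
  size : 320 * θp * c * Real.log (c / δ) ≤ m

/-- The sampling-quality factor `ε_θ`. -/
def epsθ (θm θp : ℝ) : ℝ := max (θm⁻¹ - 1) (1 - θp⁻¹)

section leverage
variable {n c m : ℕ} {C : Matrix (Fin n) (Fin c) ℝ} {π : Fin n → ℝ} {θm θp δ : ℝ}

lemma LevSampling.c_pos (h : LevSampling C π m θm θp δ) : 1 ≤ c := by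
  by_contra hc
  have hc : c = 0 := by omega
  subst hc
  have : ∀ i, π i = 0 := fun i => le_antisymm (by simpa using (h.approx i).2) (h.nonneg i)
  have h1 := h.sum_one
  simp [this] at h1

lemma LevSampling.log_ge (h : LevSampling C π m θm θp δ) : 1 ≤ Real.log (c / δ) := by
  have hc : (1 : ℝ) ≤ c := by exact_mod_cast h.c_pos
  have h1 := h.δ_le
  have hδ := h.δ_pos
  have hr : 27 ≤ c / δ := by rw [le_div_iff₀ hδ]; linarith
  rw [Real.le_log_iff_exp_le (by linarith)]
  have := Real.exp_one_lt_d9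
  linarith

lemma LevSampling.m_ge (h : LevSampling C π m θm θp δ) : (320 : ℝ) ≤ m := by
  have hc : (1 : ℝ) ≤ c := by exact_mod_cast h.c_pos
  have hp := h.hp
  have h1 := h.log_ge
  have h2 : 1 ≤ θp * c := by nlinarith
  have h3 : 1 ≤ θp * c * Real.log (c / δ) := by nlinarith
  have := h.size
  nlinarith

/-- The scaled orthonormal rows form an isotropic family. -/
lemma LevSampling.iso (h : LevSampling C π m θm θp δ) {Q : Matrix (Fin n) (Fin c) ℝ} (hQ : Qᵀ * Q = 1)
    (hl : ∀ i, lev C i = Q i ⬝ᵥ Q i) (hκ : θp * c / m ≤ 1) :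
    Iso π (scaled π m Q) m (θp * c / m) ∧
    (∀ {q : ℕ} (Y : Matrix (Fin n) (Fin q) ℝ),
      ∑ i, π i • vecMulVec (scaled π m Q i) (scaled π m Y i) = (m : ℝ)⁻¹ • (Qᵀ * Y)) ∧
    ∀ i, π i ≠ 0 → |scaled π m Q i ⬝ᵥ scaled π m Q i - c / m| ≤ epsθ θm θp * (θp * c / m) := by
  have hc : (1 : ℝ) ≤ c := by exact_mod_cast h.c_pos
  have hm : (0 : ℝ) < m := by have := h.m_ge; linarith
  have hp := h.hp
  have hm0 := h.hm
  have hm1 := h.hm1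
  have hcp : 0 < c * θp := by positivity
  have hcm : 0 < c * θm := by have : 0 < θm := by linarith
                              positivity
  have key : ∀ {q : ℕ} (Y : Matrix (Fin n) (Fin q) ℝ),
      ∑ i, π i • vecMulVec (scaled π m Q i) (scaled π m Y i) = (m : ℝ)⁻¹ • (Qᵀ * Y) := by
    intro q Y
    ext s t
    simp only [Matrix.sum_apply, Matrix.smul_apply, vecMulVec_apply, Matrix.mul_apply, smul_eq_mul,
      transpose_apply, mul_sum, scaled, Pi.smul_apply]
    refine sum_congr rfl fun i _ => ?_
    have hi := h.nonneg i
    rcases hi.eq_or_lt with h0 | h0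
    · have h1 := (h.approx i).1
      rw [← h0, div_le_iff₀ hcp, zero_mul, hl i] at h1
      have h2 : Q i = 0 := dotProduct_self_eq_zero.1 (le_antisymm h1 (dot_self_nonneg _))
      simp [h2]
    · have h1 : (1 / √(m * π i)) * (1 / √(m * π i)) = 1 / (m * π i) := by
        rw [div_mul_div_comm, Real.mul_self_sqrt (by positivity), one_mul]
      calc _ = π i * ((1 / √(m * π i)) * (1 / √(m * π i))) * (Q i s * Y i t) := by ring
        _ = _ := by rw [h1]; field_simp
  refine ⟨⟨h.nonneg, h.sum_one, hm, by rw [key, hQ], ?_, ?_, hκ⟩, key, ?_⟩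
  · intro i
    rw [scaled_dot h.nonneg, ← hl]
    have h1 := (h.approx i).1
    rcases (h.nonneg i).eq_or_lt with h0 | h0
    · rw [← h0, mul_zero, div_zero]; positivity
    · rw [div_le_div_iff₀ (by positivity) hm]
      rw [div_le_iff₀ hcp] at h1
      nlinarith
  · rw [inv_eq_one_div]
    gcongr
    nlinarith
  · intro i hi
    have h0 : 0 < π i := lt_of_le_of_ne (h.nonneg i) (Ne.symm hi)
    rw [scaled_dot h.nonneg, ← hl]
    obtain ⟨h1, h2⟩ := h.approx i
    rw [div_le_iff₀ hcp] at h1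
    rw [le_div_iff₀ hcm] at h2
    have e1 : θp - 1 ≤ epsθ θm θp * θp := by
      have : 1 - θp⁻¹ ≤ epsθ θm θp := le_max_right _ _
      calc θp - 1 = (1 - θp⁻¹) * θp := by field_simp
        _ ≤ _ := mul_le_mul_of_nonneg_right this (by linarith)
    have e2 : 1 - θm ≤ epsθ θm θp * θp := by
      have h3 : θm⁻¹ - 1 ≤ epsθ θm θp := le_max_left _ _
      have h4 : 1 - θm ≤ θm⁻¹ - 1 := by
        have : (θm⁻¹ - 1) - (1 - θm) = (1 - θm) ^ 2 * θm⁻¹ := by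
          field_simp
        have : 0 ≤ (1 - θm) ^ 2 * θm⁻¹ := by positivity
        linarith
      have h5 : 0 ≤ epsθ θm θp := by linarith
      nlinarith
    have e : lev C i / (m * π i) - c / m = (lev C i / π i - c) / m := by
      field_simp
    rw [e, abs_div, abs_of_pos hm, ← mul_div_assoc]
    refine div_le_div_of_nonneg_right ?_ hm.le
    have f1 : lev C i / π i ≤ c * θp := by rw [div_le_iff₀ h0]; linarith
    have f2 : c * θm ≤ lev C i / π i := by rw [le_div_iff₀ h0]; linarith
    rw [abs_le]
    constructor <;> nlinarith

/-- Passing from the unnormalised mean on the good event to the conditional one. -/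
lemma bias_arith {P κ η f g : ℝ} (hP0 : 0 < P) (hP : 1 / 2 ≤ P) (hκ : 0 ≤ κ) (hη : 0 ≤ η) (hf : 0 ≤ f)
    (hg : 0 ≤ g) (h : g ≤ (65536 + 128 * 12800 ^ 2) * (η ^ 2 + κ ^ 3) * f) :
    √(P⁻¹ ^ 2 * g) ≤ K₁ * (√(κ ^ 3) + η) * √f := by
  have hs := Real.sqrt_nonneg (κ ^ 3)
  have hs2 := Real.sq_sqrt (show 0 ≤ κ ^ 3 by positivity)
  have hK : 0 ≤ K₁ := by unfold K₁; norm_num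
  refine Real.sqrt_le_iff.2 ⟨by positivity, ?_⟩
  have i1 : P⁻¹ ^ 2 ≤ 4 := by
    have h2 : P⁻¹ ≤ 2 := by rw [inv_le_comm₀ hP0 (by norm_num)]; linarith
    have h0 : 0 < P⁻¹ := by positivity
    nlinarith
  have i2 : η ^ 2 + κ ^ 3 ≤ (√(κ ^ 3) + η) ^ 2 := by nlinarith
  rw [mul_pow, mul_pow, Real.sq_sqrt hf]
  calc P⁻¹ ^ 2 * g ≤ 4 * ((65536 + 128 * 12800 ^ 2) * (η ^ 2 + κ ^ 3) * f) := mul_le_mul i1 h hg (by norm_num)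
    _ = (4 * (65536 + 128 * 12800 ^ 2)) * ((η ^ 2 + κ ^ 3) * f) := by ring
    _ ≤ K₁ ^ 2 * ((√(κ ^ 3) + η) ^ 2 * f) :=
        mul_le_mul (by unfold K₁; norm_num) (mul_le_mul_of_nonneg_right i2 hf) (by positivity) (by positivity)
    _ = _ := by ring

/-- Passing from the unnormalised second moment on the good event to the conditional one. -/
lemma var_arith {P b κ d f V : ℝ} (hP0 : 0 < P) (hb0 : 0 ≤ b) (hb : b ≤ 1 / 2) (hb2 : b ≤ 12800 * κ ^ 2)
    (hκ : 0 ≤ κ) (hκ1 : κ ≤ 1) (hds : d ≤ κ * f) (hV : √V ≤ (1 + 36 * √κ) * √d)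
    (hPb : 1 - b ≤ P) : √P⁻¹ * √V ≤ √d + K₁ * κ * √f := by
  have hsκ := Real.sq_sqrt hκ
  have hsκ0 := Real.sqrt_nonneg κ
  have hsκ1 : √κ ≤ 1 := Real.sqrt_le_one.2 hκ1
  have hs0 := Real.sqrt_nonneg d
  have hy0 := Real.sqrt_nonneg f
  have i1 : √P⁻¹ ≤ 1 + b := by
    refine Real.sqrt_le_iff.2 ⟨by positivity, ?_⟩
    rw [inv_le_iff_one_le_mul₀ hP0]
    have : (1 + b) ^ 2 * (1 - b) ≤ (1 + b) ^ 2 * P := mul_le_mul_of_nonneg_left hPb (by positivity)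
    nlinarith [mul_nonneg hb0 (by linarith : 0 ≤ 1 / 2 - b), mul_nonneg hb0 (mul_nonneg hb0 (by linarith : 0 ≤ 1 / 2 - b))]
  have i2 : √d ≤ √κ * √f := by
    rw [← Real.sqrt_mul hκ]; exact Real.sqrt_le_sqrt hds
  refine (mul_le_mul i1 hV (Real.sqrt_nonneg _) (by positivity)).trans ?_
  have hbs : b ≤ 12800 * √κ := by
    have : κ ^ 2 ≤ √κ := by
      calc κ ^ 2 = √κ * (√κ * κ) := by rw [← mul_assoc, ← pow_two, hsκ]; ring
        _ ≤ √κ * 1 := mul_le_mul_of_nonneg_left (by nlinarith) hsκ0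
        _ = _ := mul_one _
    linarith
  have j2 : 36 * √κ + b + 36 * b * √κ ≤ K₁ * √κ := by
    have : 36 * b * √κ ≤ 36 * b := by nlinarith
    unfold K₁; linarith
  have hK : 0 ≤ K₁ * √κ := by unfold K₁; positivity
  have j3 : (36 * √κ + b + 36 * b * √κ) * √d ≤ K₁ * √κ * (√κ * √f) := mul_le_mul j2 i2 hs0 hK
  calc (1 + b) * ((1 + 36 * √κ) * √d) = √d + (36 * √κ + b + 36 * b * √κ) * √d := by ring
    _ ≤ √d + K₁ * √κ * (√κ * √f) := by linarith
    _ = √d + K₁ * (√κ ^ 2) * √f := by ring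
    _ = _ := by rw [hsκ]

/-- One-sided sketched least squares: with high probability the oblique projector is well defined, and
on the good event its mean and second moment on the orthogonal complement are controlled. -/
lemma LevSampling.one_sided (h : LevSampling C π m θm θp δ) :
    0 < θp * c / m ∧ θp * c / m ≤ 1 ∧ 0 ≤ epsθ θm θp ∧
    ∃ ζ : Finset (Fin m → Fin n), 1 - δ / 2 ≤ eventProb (samplingP π) ζ ∧
      (∀ ω ∈ ζ, IsUnit ((samplingS π ω * C)ᵀ * (samplingS π ω * C)).det) ∧
      ∀ {q : ℕ} (Y : Matrix (Fin n) (Fin q) ℝ), Cᵀ * Y = 0 →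
        √(fsq (condExp (samplingP π) ζ fun ω => obl C π ω * Y)) ≤
          K₁ * (√((θp * c / m) ^ 3) + epsθ θm θp * (θp * c / m)) * √(fsq Y) ∧
        √(condExp (samplingP π) ζ fun ω => fsq (obl C π ω * Y)) ≤
          √(dsum C π m Y) + K₁ * (θp * c / m) * √(fsq Y) ∧
        dsum C π m Y ≤ θp * c / m * fsq Y := by
  classical
  have hc := h.c_pos
  have hc' : (1 : ℝ) ≤ c := by exact_mod_cast hc
  have hm320 := h.m_ge
  have hm : (0 : ℝ) < m := by linarith
  have hp := h.hp
  have hκ : 0 < θp * c / m := by positivity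
  have hL : 320 * Real.log (c / δ) ≤ (θp * c / m)⁻¹ := by
    rw [inv_div, le_div_iff₀ (by positivity)]
    linarith [h.size]
  obtain ⟨hκ2, j, hj, hp1, hp2⟩ := tail_choice hc hκ h.δ_pos h.δ_le hL
  have hε : 0 ≤ epsθ θm θp := by
    refine le_trans ?_ (le_max_right _ _)
    have := inv_le_one_of_one_le₀ hp
    linarith
  obtain ⟨Q, T, hT, hCQ, hQ, hl⟩ := exists_orthonormal C h.unit
  obtain ⟨hI, hkey, hη⟩ := h.iso hQ hl (by linarith)
  set κ := θp * c / m with hκdef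
  set u := scaled π m Q with hu
  refine ⟨hκ, by linarith, hε, univ.filter (fun ω => IsGood (sg u u ω)), ?_⟩
  set ζ : Finset (Fin m → Fin n) := univ.filter (fun ω => IsGood (sg u u ω)) with hζ
  have hgd : ∀ {V : Type} [AddCommGroup V] [Module ℝ V] (F : (Fin m → Fin n) → V),
      ∑ ω ∈ ζ, samplingP π ω • F ω = EE π fun ω => gd (sg u u ω) • F ω := by
    intro V _ _ F
    rw [hζ, sum_filter]
    unfold EE
    refine sum_congr rfl fun ω _ => ?_
    show _ = samplingP π ω • (gd (sg u u ω) • F ω)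
    by_cases hg : IsGood (sg u u ω)
    · rw [if_pos hg, gd_of hg, one_smul]
    · rw [if_neg hg, gd_of_not hg, zero_smul, smul_zero]
  have hprob : eventProb (samplingP π) ζ = 1 - badP π u m := by
    have h1 := hgd (fun _ => (1 : ℝ))
    simp only [smul_eq_mul, mul_one] at h1
    unfold eventProb badP
    rw [h1, EE_sub, EE_const h.sum_one]
    ring
  have hb0 := hI.badP_nonneg m
  have hbm : badP π u m ≤ c * (9 / 10) ^ 2 ^ j := hI.badP_le j hj m (by linarith)
  have hδ := h.δ_le
  have hP1 : 1 - δ / 2 ≤ eventProb (samplingP π) ζ := by rw [hprob]; linarith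
  have hPhalf : 1 / 2 ≤ eventProb (samplingP π) ζ := by linarith
  have hP0 : 0 < eventProb (samplingP π) ζ := by linarith
  have hgood : ∀ ω ∈ ζ, IsGood (sg u u ω) := fun ω hω => (mem_filter.1 hω).2
  refine ⟨hP1, ?_, ?_⟩
  · intro ω hω
    have h1 := (hgood ω hω).isUnit_det
    rw [hu, ← gram_eq_sg] at h1
    have e : (samplingS π ω * C)ᵀ * (samplingS π ω * C) =
        Tᵀ * ((samplingS π ω * Q)ᵀ * (samplingS π ω * Q)) * T := by
      rw [hCQ, ← Matrix.mul_assoc (samplingS π ω), transpose_mul]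
      simp only [Matrix.mul_assoc]
    rw [e, det_mul, det_mul, det_transpose]
    exact (hT.mul h1).mul hT
  intro q Y hY
  set v := scaled π m Y with hv
  have hQY : Qᵀ * Y = 0 := by
    rw [hCQ, transpose_mul, Matrix.mul_assoc] at hY
    have hT' : IsUnit Tᵀ.det := by rwa [det_transpose]
    rw [← Matrix.nonsing_inv_mul_cancel_left Tᵀ (Qᵀ * Y) hT', hY, Matrix.mul_zero]
  have hv0 : ∑ i, π i • vecMulVec (u i) (v i) = 0 := by rw [hkey Y, hQY, smul_zero]
  have hsig : m * sig π u v = dsum C π m Y := by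
    unfold sig dsum
    rw [mul_sum]
    refine sum_congr rfl fun i _ => ?_
    rw [hu, hv, scaled_dot h.nonneg, scaled_dot h.nonneg, ← hl]
    rcases (h.nonneg i).eq_or_lt with h0 | h0
    · rw [← h0]; simp
    · field_simp
  have hτ : m * ∑ i, π i * (v i ⬝ᵥ v i) ≤ fsq Y := by
    rw [fsq_rows, mul_sum]
    refine sum_le_sum fun i _ => ?_
    rw [hv, scaled_dot h.nonneg]
    rcases (h.nonneg i).eq_or_lt with h0 | h0
    · rw [← h0]; simp [dot_self_nonneg]
    · exact le_of_eq (by field_simp)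
  have hds : dsum C π m Y ≤ κ * fsq Y := by
    rw [← hsig]
    have := hI.sig_le v
    calc m * sig π u v ≤ m * (κ * ∑ i, π i * (v i ⬝ᵥ v i)) := mul_le_mul_of_nonneg_left this hm.le
      _ = κ * (m * ∑ i, π i * (v i ⬝ᵥ v i)) := by ring
      _ ≤ _ := mul_le_mul_of_nonneg_left hτ hκ.le
  have hobl : ∀ ω : Fin m → Fin n, obl C π ω * Y = Q * ((sg u u ω)⁻¹ * sg u v ω) := by
    intro ω; rw [obl_eq hT hCQ, obl_mul]
  have hfY := fsq_nonneg Y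
  refine ⟨?_, ?_, hds⟩
  · obtain ⟨k, rfl⟩ : ∃ k, m = k + 1 := ⟨m - 1, by
      have : (1 : ℝ) ≤ m := by linarith
      have : 1 ≤ m := by exact_mod_cast this
      omega⟩
    have hbk : badP π u k ≤ c * (9 / 10) ^ 2 ^ j := hI.badP_le j hj k (by push_cast at hm320 ⊢; linarith)
    have hb := hI.good_bias hv0 k (by push_cast; rfl) (γ := c / ((k + 1 : ℕ) : ℝ)) (by positivity) hη hτ (A := 12800)
      ((mul_le_mul_of_nonneg_left hbk (by positivity)).trans hp2) hc
    have e : (condExp (samplingP π) ζ fun ω => obl C π ω * Y) = (eventProb (samplingP π) ζ)⁻¹ •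
        (Q * EE π (fun ω : Fin (k + 1) → Fin n => gd (sg u u ω) • ((sg u u ω)⁻¹ * sg u v ω))) := by
      unfold condExp
      rw [hgd]
      simp_rw [hobl]
      congr 1
      unfold EE
      simp_rw [Matrix.mul_sum, Matrix.mul_smul]
    rw [e, fsq_smul, fsq_orthonormal_mul hQ]
    exact bias_arith hP0 hPhalf hκ.le (mul_nonneg hε hκ.le) hfY (fsq_nonneg _) hb
  · have hV := hI.good_variance hv0 m rfl ζ hgood
    rw [hsig] at hV
    have e : (condExp (samplingP π) ζ fun ω => fsq (obl C π ω * Y)) =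
        (eventProb (samplingP π) ζ)⁻¹ * ∑ ω ∈ ζ, samplingP π ω * fsq ((sg u u ω)⁻¹ * sg u v ω) := by
      unfold condExp
      simp_rw [hobl, fsq_orthonormal_mul hQ, smul_eq_mul]
    rw [e, Real.sqrt_mul (by positivity)]
    refine var_arith hP0 hb0 (by linarith) ?_ hκ.le (by linarith) hds hV (by linarith)
    refine le_trans ?_ (le_trans (mul_le_mul_of_nonneg_left hbm (by positivity : (0 : ℝ) ≤ c)) hp2)
    nlinarith

end leverage

/-! ### Combining the two sides -/

/-- An orthogonal projector. -/
structure IsProj {n : ℕ} (N : Matrix (Fin n) (Fin n) ℝ) : Prop where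
  symm : Nᵀ = N
  idem : N * N = N

lemma IsProj.compl {n : ℕ} {N : Matrix (Fin n) (Fin n) ℝ} (h : IsProj N) : IsProj (1 - N) :=
  ⟨by rw [transpose_sub, transpose_one, h.symm],
    by rw [sub_mul, mul_sub, mul_sub, one_mul, mul_one, one_mul, h.idem, sub_self, sub_zero]⟩

lemma IsProj.mul_compl {n : ℕ} {N : Matrix (Fin n) (Fin n) ℝ} (h : IsProj N) : N * (1 - N) = 0 := by
  rw [mul_sub, mul_one, h.idem, sub_self]

lemma ip_eq_trace {a b : ℕ} (A B : Matrix (Fin a) (Fin b) ℝ) : ip A B = (Aᵀ * B).trace := by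
  unfold ip Matrix.trace
  rw [sum_comm]
  rfl

/-- Pythagoras for a projector. -/
lemma IsProj.pythagoras {n q : ℕ} {N : Matrix (Fin n) (Fin n) ℝ} (h : IsProj N)
    (Z W : Matrix (Fin n) (Fin q) ℝ) : fsq (N * Z + (1 - N) * W) = fsq (N * Z) + fsq ((1 - N) * W) := by
  rw [fsq_add, ip_eq_trace, transpose_mul, h.symm, Matrix.mul_assoc, ← Matrix.mul_assoc N, h.mul_compl]
  simp

lemma IsProj.fsq_mul_le {n q : ℕ} {N : Matrix (Fin n) (Fin n) ℝ} (h : IsProj N)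
    (Z : Matrix (Fin n) (Fin q) ℝ) : fsq (N * Z) ≤ fsq Z := by
  have := h.pythagoras Z Z
  rw [← Matrix.add_mul, add_sub_cancel, Matrix.one_mul] at this
  have := fsq_nonneg ((1 - N) * Z)
  linarith

lemma IsProj.fsq_mul_le' {n q : ℕ} {M : Matrix (Fin q) (Fin q) ℝ} (h : IsProj M)
    (Z : Matrix (Fin n) (Fin q) ℝ) : fsq (Z * M) ≤ fsq Z := by
  rw [← fsq_transpose, transpose_mul, h.symm, ← fsq_transpose Z]
  exact h.fsq_mul_le _

/-- A row-weighted squared Frobenius norm. -/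
def wsum {n q : ℕ} (d : Fin n → ℝ) (Y : Matrix (Fin n) (Fin q) ℝ) : ℝ := ∑ i, d i * (Y i ⬝ᵥ Y i)

lemma wsum_eq {n q : ℕ} {d : Fin n → ℝ} (hd : ∀ i, 0 ≤ d i) (Y : Matrix (Fin n) (Fin q) ℝ) :
    wsum d Y = fsq (diagonal (fun i => √(d i)) * Y) := by
  unfold wsum fsq
  refine sum_congr rfl fun i _ => ?_
  simp only [diagonal_mul, mul_pow, Real.sq_sqrt (hd i), dotProduct, mul_sum]
  exact sum_congr rfl fun j _ => by ring

lemma wsum_mul_le {n q : ℕ} {d : Fin n → ℝ} (hd : ∀ i, 0 ≤ d i) (Y : Matrix (Fin n) (Fin q) ℝ)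
    {M : Matrix (Fin q) (Fin q) ℝ} (h : IsProj M) : wsum d (Y * M) ≤ wsum d Y := by
  rw [wsum_eq hd, wsum_eq hd, ← Matrix.mul_assoc]
  exact h.fsq_mul_le' _

/-- Moment bounds for a random oblique projector `a` onto the range of the projector `N`, under the
weights `w` (a probability vector on `ζ`): on the orthogonal complement
of the range, `β` bounds the mean, and the root mean square is at most its main term, the norm weighted
by `d`, plus a correction of order `κ`. -/
structure SketchBounds {n : ℕ} {Ω : Type} (N : Matrix (Fin n) (Fin n) ℝ) (ζ : Finset Ω) (w : Ω → ℝ)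
    (a : Ω → Matrix (Fin n) (Fin n) ℝ) (d : Fin n → ℝ) (β κ : ℝ) : Prop where
  proj : IsProj N
  w_nonneg : ∀ ω ∈ ζ, 0 ≤ w ω
  w_sum : ∑ ω ∈ ζ, w ω = 1
  fix : ∀ ω ∈ ζ, a ω * N = N
  d_nonneg : ∀ i, 0 ≤ d i
  β_nonneg : 0 ≤ β
  κ_nonneg : 0 ≤ κ
  κ_le : κ ≤ 1
  bias : ∀ {q : ℕ} (Y : Matrix (Fin n) (Fin q) ℝ), N * Y = 0 →
    √(fsq (∑ ω ∈ ζ, w ω • (a ω * Y))) ≤ β * √(fsq Y)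
  var : ∀ {q : ℕ} (Y : Matrix (Fin n) (Fin q) ℝ), N * Y = 0 →
    √(∑ ω ∈ ζ, w ω * fsq (a ω * Y)) ≤ √(wsum d Y) + K₁ * κ * √(fsq Y)
  d_le : ∀ {q : ℕ} (Y : Matrix (Fin n) (Fin q) ℝ), N * Y = 0 → wsum d Y ≤ κ * fsq Y

section combine
variable {n p : ℕ} {N : Matrix (Fin n) (Fin n) ℝ} {M : Matrix (Fin p) (Fin p) ℝ}
  {Ω₁ Ω₂ : Type} {ζ₁ : Finset Ω₁} {ζ₂ : Finset Ω₂} {w₁ : Ω₁ → ℝ} {w₂ : Ω₂ → ℝ}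
  {a : Ω₁ → Matrix (Fin n) (Fin n) ℝ} {b : Ω₂ → Matrix (Fin p) (Fin p) ℝ}
  {d₁ : Fin n → ℝ} {d₂ : Fin p → ℝ} {β₁ κ₁ β₂ κ₂ : ℝ}

lemma K₁_pos : 0 < K₁ := by unfold K₁; norm_num

/-- Exact splitting of the two-sided sketching error. -/
lemma error_split {A : Matrix (Fin n) (Fin n) ℝ} {B : Matrix (Fin p) (Fin p) ℝ} (hM : IsProj M)
    (hA : A * N = N) (hB : B * M = M) (X : Matrix (Fin n) (Fin p) ℝ) :
    A * X * Bᵀ - N * X * M = A * ((1 - N) * X * M) + (B * ((1 - M) * Xᵀ * Nᵀ))ᵀ +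
      A * ((1 - N) * X * (1 - M)) * Bᵀ := by
  have hB' : M * Bᵀ = M := by
    have := congrArg Matrix.transpose hB
    rwa [transpose_mul, hM.symm] at this
  have e : (B * ((1 - M) * Xᵀ * Nᵀ))ᵀ = N * X * (1 - M) * Bᵀ := by
    simp only [transpose_mul, transpose_transpose, hM.compl.symm, Matrix.mul_assoc]
  rw [e]
  have h1 : A * X * Bᵀ = A * ((N + (1 - N)) * X * (M + (1 - M))) * Bᵀ := by
    simp [Matrix.mul_assoc]
  have h2 : A * (N * X * M) * Bᵀ = N * X * M := by
    rw [Matrix.mul_assoc A, Matrix.mul_assoc (N * X), hB', Matrix.mul_assoc N, ← Matrix.mul_assoc A, hA]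
  have h3 : A * (N * X * (1 - M)) * Bᵀ = N * X * (1 - M) * Bᵀ := by
    rw [Matrix.mul_assoc N, ← Matrix.mul_assoc A, hA]
  have h4 : A * ((1 - N) * X * M) * Bᵀ = A * ((1 - N) * X * M) := by
    rw [Matrix.mul_assoc A, Matrix.mul_assoc _ M, hB']
  have h5 : (N + (1 - N)) * X * (M + (1 - M)) = N * X * M + N * X * (1 - M) + (1 - N) * X * M +
      (1 - N) * X * (1 - M) := by
    simp only [Matrix.add_mul, Matrix.mul_add]; abel
  rw [h1, h5]
  simp only [Matrix.mul_add, Matrix.add_mul, h2, h3, h4]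
  abel

/-- The residual of the optimal core dominates each piece of the splitting. -/
lemma residual_bounds (hN : IsProj N) (hM : IsProj M) (X : Matrix (Fin n) (Fin p) ℝ) :
    fsq ((1 - N) * X * M) ≤ fsq (N * X * M - X) ∧ fsq ((1 - M) * Xᵀ * Nᵀ) ≤ fsq (N * X * M - X) ∧
    fsq ((1 - N) * X * (1 - M)) ≤ fsq (N * X * M - X) := by
  have e0 : fsq (N * X * M - X) = fsq (X - N * X * M) := by rw [← fsq_neg, neg_sub]
  have hN0 : (1 - N) * N = 0 := by rw [sub_mul, one_mul, hN.idem, sub_self]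
  have hNN : N * N = N := hN.idem
  refine ⟨?_, ?_, ?_⟩
  · have e : (1 - N) * X * M = (1 - N) * (X - N * X * M) * M := by
      rw [Matrix.mul_sub, ← Matrix.mul_assoc (1 - N), ← Matrix.mul_assoc (1 - N), hN0]; simp
    rw [e, e0]
    exact (hM.fsq_mul_le' _).trans (hN.compl.fsq_mul_le _)
  · have e : ((1 - M) * Xᵀ * Nᵀ)ᵀ = N * (X - N * X * M) * (1 - M) := by
      simp only [transpose_mul, transpose_transpose, hM.compl.symm]
      rw [Matrix.mul_sub N, Matrix.sub_mul (N * X), Matrix.mul_assoc N (N * X * M),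
        Matrix.mul_assoc (N * X) M, hM.mul_compl]
      simp [Matrix.mul_assoc]
    rw [← fsq_transpose, e, e0]
    exact (hM.compl.fsq_mul_le' _).trans (hN.fsq_mul_le _)
  · have e : (1 - N) * X * (1 - M) = (1 - N) * (X - N * X * M) * (1 - M) := by
      rw [Matrix.mul_sub (1 - N), ← Matrix.mul_assoc (1 - N), ← Matrix.mul_assoc (1 - N), hN0]; simp
    rw [e, e0]
    exact (hM.compl.fsq_mul_le' _).trans (hN.compl.fsq_mul_le _)

/-- Pythagoras: excess loss over the projected approximation. -/
lemma excess_eq (hN : IsProj N) (hM : IsProj M) (X Z : Matrix (Fin n) (Fin p) ℝ) (hZ : N * Z * M = Z) :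
    fsq (Z - X) = fsq (Z - N * X * M) + fsq (N * X * M - X) := by
  have e : Z - X = (Z - N * X * M) + (N * X * M - X) := by abel
  have e2 : Z - N * X * M = N * (Z - N * X * M) * M := by
    rw [Matrix.mul_sub, Matrix.sub_mul, hZ]
    congr 1
    rw [← Matrix.mul_assoc N, ← Matrix.mul_assoc N, hN.idem, Matrix.mul_assoc _ M, hM.idem]
  have e3 : N * (N * X * M - X) * M = 0 := by
    rw [Matrix.mul_sub, Matrix.sub_mul, ← Matrix.mul_assoc N, ← Matrix.mul_assoc N, hN.idem,
      Matrix.mul_assoc _ M, hM.idem, sub_self]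
  have e4 : ip (Z - N * X * M) (N * X * M - X) = 0 := by
    rw [e2, ip_eq_trace, transpose_mul, transpose_mul, hN.symm, hM.symm, Matrix.mul_assoc,
      trace_mul_comm, Matrix.mul_assoc, Matrix.mul_assoc, ← Matrix.mul_assoc N, e3]
    simp
  rw [e, fsq_add, e4]; ring

lemma SketchBounds.mean_fix (h : SketchBounds N ζ₁ w₁ a d₁ β₁ κ₁) : (∑ ω ∈ ζ₁, w₁ ω • a ω) * N = N := by
  rw [Matrix.sum_mul, sum_congr rfl fun ω hω => by rw [Matrix.smul_mul, h.fix ω hω], ← sum_smul, h.w_sum,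
    one_smul]

lemma SketchBounds.mean_bias (h : SketchBounds N ζ₁ w₁ a d₁ β₁ κ₁) {q : ℕ} (Y : Matrix (Fin n) (Fin q) ℝ)
    (hY : N * Y = 0) : √(fsq ((∑ ω ∈ ζ₁, w₁ ω • a ω) * Y)) ≤ β₁ * √(fsq Y) := by
  rw [Matrix.sum_mul]
  simp_rw [Matrix.smul_mul]
  exact h.bias Y hY

/-- Mean error of the two-sided sketch. As the two samples are independent, the mean of `a X bᵀ` is the
product of the means, to which the exact splitting applies. -/
lemma bias_combine (h₁ : SketchBounds N ζ₁ w₁ a d₁ β₁ κ₁) (h₂ : SketchBounds M ζ₂ w₂ b d₂ β₂ κ₂)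
    (X : Matrix (Fin n) (Fin p) ℝ) :
    √(fsq ((∑ ω ∈ ζ₁, w₁ ω • a ω) * X * (∑ ω ∈ ζ₂, w₂ ω • b ω)ᵀ - N * X * M)) ≤
      (β₁ + β₂ + β₁ * β₂) * √(fsq (N * X * M - X)) := by
  obtain ⟨r1, r2, r3⟩ := residual_bounds h₁.proj h₂.proj X
  rw [error_split h₂.proj h₁.mean_fix h₂.mean_fix]
  set A := ∑ ω ∈ ζ₁, w₁ ω • a ω with hA
  set B := ∑ ω ∈ ζ₂, w₂ ω • b ω with hB
  set L := fsq (N * X * M - X)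
  have hβ1 := h₁.β_nonneg
  have hβ2 := h₂.β_nonneg
  have hN := h₁.proj
  have hM := h₂.proj
  have s1 := Real.sqrt_le_sqrt r1
  have s2 := Real.sqrt_le_sqrt r2
  have s3 := Real.sqrt_le_sqrt r3
  have t1 := h₁.mean_bias ((1 - N) * X * M) (by
    rw [Matrix.mul_assoc, ← Matrix.mul_assoc N, hN.mul_compl, Matrix.zero_mul])
  have t2 := h₂.mean_bias ((1 - M) * Xᵀ * Nᵀ) (by
    rw [Matrix.mul_assoc, ← Matrix.mul_assoc M, hM.mul_compl, Matrix.zero_mul])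
  have t3 : √(fsq (A * ((1 - N) * X * (1 - M)) * Bᵀ)) ≤ β₁ * (β₂ * √(fsq ((1 - N) * X * (1 - M)))) := by
    rw [Matrix.mul_assoc]
    refine (h₁.mean_bias _ (by
      rw [Matrix.mul_assoc, Matrix.mul_assoc, ← Matrix.mul_assoc N, hN.mul_compl, Matrix.zero_mul])).trans ?_
    refine mul_le_mul_of_nonneg_left ?_ hβ1
    rw [← fsq_transpose, ← fsq_transpose ((1 - N) * X * (1 - M)), transpose_mul, transpose_transpose]
    refine h₂.mean_bias _ ?_
    rw [transpose_mul, hM.compl.symm, ← Matrix.mul_assoc, hM.mul_compl, Matrix.zero_mul]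
  refine (minkowski_fsq _ _).trans ?_
  refine (add_le_add_left (minkowski_fsq _ _) _).trans ?_
  rw [fsq_transpose]
  have u1 : β₁ * √(fsq ((1 - N) * X * M)) ≤ β₁ * √L := mul_le_mul_of_nonneg_left s1 hβ1
  have u2 : β₂ * √(fsq ((1 - M) * Xᵀ * Nᵀ)) ≤ β₂ * √L := mul_le_mul_of_nonneg_left s2 hβ2
  have u3 : β₁ * (β₂ * √(fsq ((1 - N) * X * (1 - M)))) ≤ β₁ * (β₂ * √L) :=
    mul_le_mul_of_nonneg_left (mul_le_mul_of_nonneg_left s3 hβ2) hβ1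
  rw [← hA, ← hB] at *
  linarith

/-- Crude second-moment bound. -/
lemma SketchBounds.var_crude (h : SketchBounds N ζ₁ w₁ a d₁ β₁ κ₁) {q : ℕ} (Y : Matrix (Fin n) (Fin q) ℝ)
    (hY : N * Y = 0) : ∑ ω ∈ ζ₁, w₁ ω * fsq (a ω * Y) ≤ (1 + K₁) ^ 2 * κ₁ * fsq Y := by
  have hκ := h.κ_nonneg
  have hK := K₁_pos
  have hf := fsq_nonneg Y
  have h1 := h.var Y hY
  have h2 : √(wsum d₁ Y) ≤ √κ₁ * √(fsq Y) := by
    rw [← Real.sqrt_mul hκ]; exact Real.sqrt_le_sqrt (h.d_le Y hY)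
  have h3 : κ₁ ≤ √κ₁ := Real.le_sqrt_of_sq_le (by nlinarith [h.κ_le])
  have h4 : √(∑ ω ∈ ζ₁, w₁ ω * fsq (a ω * Y)) ≤ (1 + K₁) * √κ₁ * √(fsq Y) := by
    have : K₁ * κ₁ * √(fsq Y) ≤ K₁ * √κ₁ * √(fsq Y) := by gcongr
    linarith
  have h5 : 0 ≤ ∑ ω ∈ ζ₁, w₁ ω * fsq (a ω * Y) :=
    sum_nonneg fun ω hω => mul_nonneg (h.w_nonneg ω hω) (fsq_nonneg _)
  have h6 := pow_le_pow_left₀ (Real.sqrt_nonneg _) h4 2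
  rw [Real.sq_sqrt h5, mul_pow, mul_pow, Real.sq_sqrt hκ, Real.sq_sqrt hf] at h6
  exact h6

/-- Root mean square error of the two-sided sketch. The one-sided pieces give the weighted norms; the
doubly projected piece is a product of two independent fluctuations and costs only
`√(κ₁ κ₂) ≤ κ₁ + κ₂`. -/
lemma var_combine (h₁ : SketchBounds N ζ₁ w₁ a d₁ β₁ κ₁) (h₂ : SketchBounds M ζ₂ w₂ b d₂ β₂ κ₂)
    (X : Matrix (Fin n) (Fin p) ℝ) :
    √(∑ ω ∈ ζ₁ ×ˢ ζ₂, w₁ ω.1 * w₂ ω.2 * fsq (a ω.1 * X * (b ω.2)ᵀ - N * X * M)) ≤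
      √(wsum d₁ ((1 - N) * X)) + √(wsum d₂ ((1 - M) * Xᵀ)) +
        (K₁ + (1 + K₁) ^ 2) * (κ₁ + κ₂) * √(fsq (N * X * M - X)) := by
  obtain ⟨r1, r2, r3⟩ := residual_bounds h₁.proj h₂.proj X
  have hN := h₁.proj
  have hM := h₂.proj
  have hκ1 := h₁.κ_nonneg
  have hκ2 := h₂.κ_nonneg
  have hK := K₁_pos
  have hw : ∀ ω ∈ ζ₁ ×ˢ ζ₂, 0 ≤ w₁ ω.1 * w₂ ω.2 := fun ω hω => by
    rw [mem_product] at hω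
    exact mul_nonneg (h₁.w_nonneg _ hω.1) (h₂.w_nonneg _ hω.2)
  have e : ∑ ω ∈ ζ₁ ×ˢ ζ₂, w₁ ω.1 * w₂ ω.2 * fsq (a ω.1 * X * (b ω.2)ᵀ - N * X * M) =
      ∑ ω ∈ ζ₁ ×ˢ ζ₂, w₁ ω.1 * w₂ ω.2 * fsq (a ω.1 * ((1 - N) * X * M) +
        (b ω.2 * ((1 - M) * Xᵀ * Nᵀ))ᵀ + a ω.1 * ((1 - N) * X * (1 - M)) * (b ω.2)ᵀ) :=
    sum_congr rfl fun ω hω => by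
      rw [mem_product] at hω
      rw [error_split hM (h₁.fix _ hω.1) (h₂.fix _ hω.2)]
  rw [e]
  refine (minkowski _ hw _ _).trans ?_
  refine (add_le_add_left (minkowski _ hw _ _) _).trans ?_
  set L := fsq (N * X * M - X)
  have hL : 0 ≤ L := fsq_nonneg _
  have t1 : √(∑ ω ∈ ζ₁ ×ˢ ζ₂, w₁ ω.1 * w₂ ω.2 * fsq (a ω.1 * ((1 - N) * X * M))) ≤
      √(wsum d₁ ((1 - N) * X)) + K₁ * κ₁ * √L := by
    have : ∑ ω ∈ ζ₁ ×ˢ ζ₂, w₁ ω.1 * w₂ ω.2 * fsq (a ω.1 * ((1 - N) * X * M)) =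
        ∑ ω ∈ ζ₁, w₁ ω * fsq (a ω * ((1 - N) * X * M)) := by
      rw [sum_product]
      refine sum_congr rfl fun ω _ => ?_
      simp only
      rw [← sum_mul, ← mul_sum, h₂.w_sum, mul_one]
    rw [this]
    refine (h₁.var _ (by
      rw [Matrix.mul_assoc, ← Matrix.mul_assoc N, hN.mul_compl, Matrix.zero_mul])).trans ?_
    have := wsum_mul_le h₁.d_nonneg ((1 - N) * X) hM
    gcongr
  have t2 : √(∑ ω ∈ ζ₁ ×ˢ ζ₂, w₁ ω.1 * w₂ ω.2 * fsq (b ω.2 * ((1 - M) * Xᵀ * Nᵀ))ᵀ) ≤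
      √(wsum d₂ ((1 - M) * Xᵀ)) + K₁ * κ₂ * √L := by
    have : ∑ ω ∈ ζ₁ ×ˢ ζ₂, w₁ ω.1 * w₂ ω.2 * fsq (b ω.2 * ((1 - M) * Xᵀ * Nᵀ))ᵀ =
        ∑ ω ∈ ζ₂, w₂ ω * fsq (b ω * ((1 - M) * Xᵀ * Nᵀ)) := by
      rw [sum_product_right]
      refine sum_congr rfl fun ω _ => ?_
      simp only [fsq_transpose]
      rw [← sum_mul, ← sum_mul, h₁.w_sum, one_mul]
    rw [this]
    refine (h₂.var _ (by
      rw [Matrix.mul_assoc, ← Matrix.mul_assoc M, hM.mul_compl, Matrix.zero_mul])).trans ?_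
    have := wsum_mul_le h₂.d_nonneg ((1 - M) * Xᵀ) (M := Nᵀ) (by rw [hN.symm]; exact hN)
    gcongr
  have t3 : √(∑ ω ∈ ζ₁ ×ˢ ζ₂, w₁ ω.1 * w₂ ω.2 * fsq (a ω.1 * ((1 - N) * X * (1 - M)) * (b ω.2)ᵀ)) ≤
      (1 + K₁) ^ 2 * (κ₁ + κ₂) * √L := by
    have h3 : ∑ ω ∈ ζ₁ ×ˢ ζ₂, w₁ ω.1 * w₂ ω.2 * fsq (a ω.1 * ((1 - N) * X * (1 - M)) * (b ω.2)ᵀ) ≤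
        (1 + K₁) ^ 2 * κ₂ * ((1 + K₁) ^ 2 * κ₁ * L) := by
      calc _ = ∑ ω ∈ ζ₁, w₁ ω * ∑ η ∈ ζ₂, w₂ η * fsq (b η * (a ω * ((1 - N) * X * (1 - M)))ᵀ) := by
            rw [sum_product]
            refine sum_congr rfl fun ω _ => ?_
            rw [mul_sum]
            refine sum_congr rfl fun η _ => ?_
            rw [← fsq_transpose, transpose_mul, transpose_transpose]
            simp only; ring
        _ ≤ ∑ ω ∈ ζ₁, w₁ ω * ((1 + K₁) ^ 2 * κ₂ * fsq (a ω * ((1 - N) * X * (1 - M)))) := by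
            refine sum_le_sum fun ω hω => mul_le_mul_of_nonneg_left ?_ (h₁.w_nonneg ω hω)
            rw [← fsq_transpose (a ω * _)]
            refine h₂.var_crude _ ?_
            rw [transpose_mul, transpose_mul, hM.compl.symm, Matrix.mul_assoc, ← Matrix.mul_assoc M,
              hM.mul_compl, Matrix.zero_mul]
        _ = (1 + K₁) ^ 2 * κ₂ * ∑ ω ∈ ζ₁, w₁ ω * fsq (a ω * ((1 - N) * X * (1 - M))) := by
            rw [mul_sum]; exact sum_congr rfl fun ω _ => by ring
        _ ≤ (1 + K₁) ^ 2 * κ₂ * ((1 + K₁) ^ 2 * κ₁ * fsq ((1 - N) * X * (1 - M))) := by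
            refine mul_le_mul_of_nonneg_left (h₁.var_crude _ ?_) (by positivity)
            rw [Matrix.mul_assoc, ← Matrix.mul_assoc N, hN.mul_compl, Matrix.zero_mul]
        _ ≤ _ := by gcongr
    refine Real.sqrt_le_iff.2 ⟨by positivity, h3.trans ?_⟩
    rw [mul_pow, mul_pow, Real.sq_sqrt hL]
    calc _ = ((1 + K₁) ^ 2) ^ 2 * (κ₁ * κ₂) * L := by ring
      _ ≤ _ := by gcongr; nlinarith
  nlinarith [mul_nonneg hκ1 (Real.sqrt_nonneg L), mul_nonneg hκ2 (Real.sqrt_nonneg L)]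

end combine

/-! ### Fast CUR -/

/-- The orthogonal projector onto the column space of `C`. -/
def colProj {n c : ℕ} (C : Matrix (Fin n) (Fin c) ℝ) : Matrix (Fin n) (Fin n) ℝ := C * (Cᵀ * C)⁻¹ * Cᵀ

lemma colProj_isProj {n c : ℕ} {C : Matrix (Fin n) (Fin c) ℝ} (h : IsUnit (Cᵀ * C).det) :
    IsProj (colProj C) where
  symm := by
    unfold colProj
    simp only [transpose_mul, transpose_nonsing_inv, transpose_transpose, Matrix.mul_assoc]
  idem := by
    unfold colProj
    have : C * (Cᵀ * C)⁻¹ * Cᵀ * (C * (Cᵀ * C)⁻¹ * Cᵀ) = C * ((Cᵀ * C)⁻¹ * (Cᵀ * C)) * (Cᵀ * C)⁻¹ * Cᵀ := by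
      simp only [Matrix.mul_assoc]
    rw [this, nonsing_inv_mul _ h, Matrix.mul_one]

lemma colProj_mul {n c : ℕ} {C : Matrix (Fin n) (Fin c) ℝ} (h : IsUnit (Cᵀ * C).det) : colProj C * C = C := by
  unfold colProj
  rw [Matrix.mul_assoc, Matrix.mul_assoc, nonsing_inv_mul _ h, Matrix.mul_one]

lemma mul_colProj {n c : ℕ} {C : Matrix (Fin n) (Fin c) ℝ} (h : IsUnit (Cᵀ * C).det) :
    Cᵀ * colProj C = Cᵀ := by
  have := congrArg Matrix.transpose (colProj_mul h)
  rwa [transpose_mul, (colProj_isProj h).symm] at this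

lemma obl_fix {n c m : ℕ} {C : Matrix (Fin n) (Fin c) ℝ} {π : Fin n → ℝ} {ω : Fin m → Fin n}
    (h : IsUnit ((samplingS π ω * C)ᵀ * (samplingS π ω * C)).det) : obl C π ω * C = C := by
  unfold obl
  rw [Matrix.mul_assoc, Matrix.mul_assoc, Matrix.mul_assoc, nonsing_inv_mul _ h, Matrix.mul_one]

/-- Approximate leverage sampling produces an oblique projector with the moment bounds of `SketchBounds`. -/
lemma LevSampling.sketch {n c m : ℕ} {C : Matrix (Fin n) (Fin c) ℝ} {π : Fin n → ℝ} {θm θp δ : ℝ}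
    (h : LevSampling C π m θm θp δ) :
    0 ≤ epsθ θm θp ∧ ∃ ζ : Finset (Fin m → Fin n), 1 - δ / 2 ≤ eventProb (samplingP π) ζ ∧
      (∀ ω ∈ ζ, IsUnit ((samplingS π ω * C)ᵀ * (samplingS π ω * C)).det) ∧
      SketchBounds (colProj C) ζ (fun ω => (eventProb (samplingP π) ζ)⁻¹ * samplingP π ω) (obl C π)
        (fun i => lev C i / (m * π i)) (K₁ * (√((θp * c / m) ^ 3) + epsθ θm θp * (θp * c / m)))
        (θp * c / m) := by
  obtain ⟨hκ, hκ1, hε, ζ, hP, hU, hY⟩ := h.one_sided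
  refine ⟨hε, ζ, hP, hU, ?_⟩
  have hC : ∀ {q : ℕ} (Y : Matrix (Fin n) (Fin q) ℝ), colProj C * Y = 0 → Cᵀ * Y = 0 := by
    intro q Y hN
    rw [← mul_colProj h.unit, Matrix.mul_assoc, hN, Matrix.mul_zero]
  have hδ := h.δ_le
  have hP0 : 0 < eventProb (samplingP π) ζ := by linarith
  have hK := K₁_pos
  have hPn : ∀ ω : Fin m → Fin n, 0 ≤ samplingP π ω := samplingP_nonneg h.nonneg
  refine ⟨colProj_isProj h.unit, fun ω _ => mul_nonneg (inv_nonneg.2 hP0.le) (hPn ω), ?_, ?_, ?_,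
    by positivity, hκ.le, hκ1, ?_, ?_, ?_⟩
  · rw [← mul_sum]; exact inv_mul_cancel₀ hP0.ne'
  · intro ω hω
    unfold colProj
    rw [← Matrix.mul_assoc, ← Matrix.mul_assoc, obl_fix (hU ω hω)]
  · intro i
    have h1 := (h.nonneg i).trans (h.approx i).2
    have hc : (1 : ℝ) ≤ c := by exact_mod_cast h.c_pos
    have hcm : 0 < c * θm := mul_pos (by linarith) (by linarith [h.hm])
    have h2 : 0 ≤ lev C i := by
      rw [le_div_iff₀ hcm, zero_mul] at h1; exact h1
    exact div_nonneg h2 (mul_nonneg (Nat.cast_nonneg _) (h.nonneg i))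
  · intro q Y hN
    have := (hY Y (hC Y hN)).1
    unfold condExp at this
    rw [smul_sum] at this
    simpa only [smul_smul] using this
  · intro q Y hN
    have := (hY Y (hC Y hN)).2.1
    unfold condExp at this
    rw [smul_sum] at this
    simp only [smul_eq_mul, ← mul_assoc] at this
    exact this
  · intro q Y hN
    exact (hY Y (hC Y hN)).2.2

lemma eventProb_prod {Ω₁ Ω₂ : Type*} (ζ₁ : Finset Ω₁) (ζ₂ : Finset Ω₂) (P₁ : Ω₁ → ℝ) (P₂ : Ω₂ → ℝ) :
    eventProb (fun ω : Ω₁ × Ω₂ => P₁ ω.1 * P₂ ω.2) (ζ₁ ×ˢ ζ₂) = eventProb P₁ ζ₁ * eventProb P₂ ζ₂ := by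
  unfold eventProb
  rw [sum_product, sum_mul_sum]

lemma condExp_prod {Ω₁ Ω₂ V : Type*} [AddCommMonoid V] [Module ℝ V] (ζ₁ : Finset Ω₁) (ζ₂ : Finset Ω₂)
    (P₁ : Ω₁ → ℝ) (P₂ : Ω₂ → ℝ) (f : Ω₁ × Ω₂ → V) :
    condExp (fun ω : Ω₁ × Ω₂ => P₁ ω.1 * P₂ ω.2) (ζ₁ ×ˢ ζ₂) f = ∑ ω ∈ ζ₁ ×ˢ ζ₂,
      (((eventProb P₁ ζ₁)⁻¹ * P₁ ω.1) * ((eventProb P₂ ζ₂)⁻¹ * P₂ ω.2)) • f ω := by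
  unfold condExp
  rw [eventProb_prod, smul_sum]
  refine sum_congr rfl fun ω _ => ?_
  rw [smul_smul, mul_inv]
  congr 1; ring

section cur
variable {n p c r mc mr : ℕ} (X : Matrix (Fin n) (Fin p) ℝ) (C : Matrix (Fin n) (Fin c) ℝ)
  (R : Matrix (Fin r) (Fin p) ℝ) {πC : Fin n → ℝ} {πR : Fin p → ℝ}

/-- The optimal CUR reconstruction is the two-sided orthogonal projection of `X`. -/
lemma recon_opt : C * optCUR X C R * R = colProj C * X * colProj Rᵀ := by
  unfold optCUR colProj
  simp only [transpose_transpose, Matrix.mul_assoc]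

/-- The fast CUR reconstruction is the two-sided oblique projection of `X`. -/
lemma recon_fast (ω : (Fin mc → Fin n) × (Fin mr → Fin p)) :
    C * curUtilde X C R πC πR ω * R = obl C πC ω.1 * X * (obl Rᵀ πR ω.2)ᵀ := by
  unfold curUtilde obl
  simp only [transpose_mul, transpose_transpose, transpose_nonsing_inv, Matrix.mul_assoc]

/-- The excess loss is the squared distance between reconstructions. -/
lemma excess_loss (hC : IsUnit (Cᵀ * C).det) (hR : IsUnit (R * Rᵀ).det) (U : Matrix (Fin c) (Fin r) ℝ) :
    lossCUR X C R U - lossCUR X C R (optCUR X C R) =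
      fsq (C * U * R - colProj C * X * colProj Rᵀ) := by
  have hR' : IsUnit (Rᵀᵀ * Rᵀ).det := by rwa [transpose_transpose]
  unfold lossCUR
  rw [frobNorm_sq, frobNorm_sq, recon_opt, excess_eq (colProj_isProj hC) (colProj_isProj hR')]
  · ring
  · have h2 := mul_colProj hR'
    rw [transpose_transpose] at h2
    rw [← Matrix.mul_assoc, ← Matrix.mul_assoc, colProj_mul hC, Matrix.mul_assoc, h2]

lemma curDelta1_eq (m : ℕ) (hd : ∀ i, 0 ≤ lev C i / (m * πC i)) :
    curDelta1 X C πC m = √(wsum (fun i => lev C i / (m * πC i)) ((1 - colProj C) * X)) := by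
  unfold curDelta1
  rw [frobNorm_eq, wsum_eq hd, Matrix.mul_assoc]
  rfl

lemma curDelta2_eq (m : ℕ) (hd : ∀ i, 0 ≤ lev Rᵀ i / (m * πR i)) :
    curDelta2 X R πR m = √(wsum (fun i => lev Rᵀ i / (m * πR i)) ((1 - colProj Rᵀ) * Xᵀ)) := by
  unfold curDelta2
  rw [frobNorm_eq, wsum_eq hd, Matrix.mul_assoc]
  unfold colProj
  rw [transpose_transpose]

end cur

/-- From the root mean square bound `D + t √L` to the variance: the cross term `2 t √L D` is at most
`√(ε L) D` once `4 t² ≤ ε`. -/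
lemma var_final {V D L t ε : ℝ} (hV : 0 ≤ V) (hD : 0 ≤ D) (hL : 0 ≤ L)
    (h : √V ≤ D + t * √L) (hε : 4 * t ^ 2 ≤ ε) : V ≤ D ^ 2 + √(ε * L) * D + ε * L := by
  have h1 := pow_le_pow_left₀ (Real.sqrt_nonneg _) h 2
  rw [Real.sq_sqrt hV] at h1
  have hs := Real.sq_sqrt hL
  have h2 : 2 * t * √L ≤ √(ε * L) := by
    refine Real.le_sqrt_of_sq_le ?_
    rw [mul_pow, hs]
    nlinarith
  have h3 := mul_le_mul_of_nonneg_right h2 hD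
  have h4 : 4 * t ^ 2 * L ≤ ε * L := mul_le_mul_of_nonneg_right hε hL
  have h5 : 0 ≤ t ^ 2 * L := by positivity
  have h6 : (D + t * √L) ^ 2 = D ^ 2 + 2 * t * √L * D + t ^ 2 * (√L) ^ 2 := by ring
  rw [h6, hs] at h1
  linarith

lemma sq_le_sqrt_cube {κ : ℝ} (h0 : 0 ≤ κ) (h1 : κ ≤ 1) : κ ^ 2 ≤ √(κ ^ 3) := by
  refine Real.le_sqrt_of_sq_le ?_
  have : 0 ≤ κ ^ 3 := by positivity
  nlinarith

/-- The factor `log n / log log n` is at least one for `n ≥ 3`. -/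
lemma one_le_log_ratio {n : ℕ} (hn : 3 ≤ n) : 1 ≤ Real.log n / Real.log (Real.log n) := by
  have hn' : (3 : ℝ) ≤ n := by exact_mod_cast hn
  have h1 : 1 < Real.log n := by
    rw [Real.lt_log_iff_exp_lt (by linarith)]
    linarith [Real.exp_one_lt_d9]
  have h2 : 0 < Real.log (Real.log n) := Real.log_pos h1
  rw [le_div_iff₀ h2, one_mul]
  linarith [Real.log_le_sub_one_of_pos (by linarith : 0 < Real.log n)]

lemma epsθ_le {θm θp : ℝ} (hm : 1 / 2 ≤ θm) (hp : 1 ≤ θp) : epsθ θm θp ≤ 1 := by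
  refine max_le ?_ ?_
  · have : θm⁻¹ ≤ 2 := by rw [inv_le_comm₀ (by linarith) (by norm_num)]; linarith
    linarith
  · have : 0 < θp⁻¹ := by positivity
    linarith

/-- The absolute constant `C'`. -/
def K₂ : ℝ := 8 * (K₁ + (1 + K₁) ^ 2) ^ 2

lemma delta_le {n : ℕ} {α δ : ℝ} (hn : 3 ≤ n) (hα : 0 < α) (h : δ ≤ (n : ℝ) ^ (-(3 + α))) : δ ≤ 1 / 27 := by
  have hn' : (3 : ℝ) ≤ n := by exact_mod_cast hn
  calc δ ≤ (n : ℝ) ^ (-(3 + α)) := h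
    _ ≤ (n : ℝ) ^ (-3 : ℝ) := Real.rpow_le_rpow_of_exponent_le (by linarith) (by linarith)
    _ ≤ (3 : ℝ) ^ (-3 : ℝ) := Real.rpow_le_rpow_of_nonpos (by norm_num) hn' (by norm_num)
    _ = 1 / 27 := by
      rw [Real.rpow_neg (by norm_num), show (3 : ℝ) = ((3 : ℕ) : ℝ) by norm_num, Real.rpow_natCast]; norm_num

lemma bias_const {s₁ s₂ b₁ b₂ ε : ℝ} (h1 : b₁ = K₁ * s₁) (h2 : b₂ = K₁ * s₂) (h10 : 0 ≤ s₁) (h20 : 0 ≤ s₂)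
    (h11 : s₁ ≤ 2) (hε : K₂ * (s₁ + s₂) ≤ ε) : b₁ + b₂ + b₁ * b₂ ≤ ε := by
  refine le_trans ?_ hε
  subst h1 h2
  have hK : 1 ≤ K₁ := by unfold K₁; norm_num
  have hK2 : K₁ * (1 + 2 * K₁) ≤ K₂ := by unfold K₂ K₁; norm_num
  have h3 : s₁ * s₂ ≤ 2 * s₂ := mul_le_mul_of_nonneg_right h11 h20
  have h4 : K₁ ^ 2 * (s₁ * s₂) ≤ K₁ ^ 2 * (2 * s₂) := mul_le_mul_of_nonneg_left h3 (by positivity)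
  have h5 : K₁ * (1 + 2 * K₁) * (s₁ + s₂) ≤ K₂ * (s₁ + s₂) := mul_le_mul_of_nonneg_right hK2 (by linarith)
  have h6 : 0 ≤ K₁ ^ 2 * s₁ := by positivity
  nlinarith

lemma var_const {κ₁ κ₂ q₁ q₂ s₁ s₂ ε : ℝ} (hq1 : κ₁ ^ 2 ≤ q₁) (hq2 : κ₂ ^ 2 ≤ q₂) (h1 : q₁ ≤ s₁)
    (h2 : q₂ ≤ s₂) (hε : K₂ * (s₁ + s₂) ≤ ε) :
    4 * ((K₁ + (1 + K₁) ^ 2) * (κ₁ + κ₂)) ^ 2 ≤ ε := by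
  refine le_trans ?_ hε
  have hK : 0 ≤ K₂ := by unfold K₂; positivity
  calc 4 * ((K₁ + (1 + K₁) ^ 2) * (κ₁ + κ₂)) ^ 2
      = 4 * (K₁ + (1 + K₁) ^ 2) ^ 2 * (κ₁ + κ₂) ^ 2 := by ring
    _ ≤ 4 * (K₁ + (1 + K₁) ^ 2) ^ 2 * (2 * (s₁ + s₂)) :=
        mul_le_mul_of_nonneg_left (by nlinarith [sq_nonneg (κ₁ - κ₂)]) (by positivity)
    _ = _ := by unfold K₂; ring

/-- **Bias–variance of standard fast CUR under approximate leverage score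
sampling** (Corollary F.2): there are absolute constants `C₀, C' > 0` such
that, for sampling distributions that are `θ`-approximations of exact leverage
score sampling on both sides, under the row-norm conditions and the sample-size
conditions, there is an event `ζ` of probability at least `1 − δ` on which all
inverted matrices in `Ũ` are invertible and `Bias_ζ(Ũ) ≤ ε² L(U_CUR)` and
`Var_ζ(Ũ) ≤ Δ_CUR + ε L(U_CUR)`. -/
theorem fast_cur_leverage_bias_variance :
    ∃ C₀ C' : ℝ, 0 < C₀ ∧ 0 < C' ∧
      ∀ (n p c r mc mr : ℕ) (X : Matrix (Fin n) (Fin p) ℝ)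
        (Cm : Matrix (Fin n) (Fin c) ℝ) (Rm : Matrix (Fin r) (Fin p) ℝ)
        (g : Fin c → Fin p) (f : Fin r → Fin n)
        (πC : Fin n → ℝ) (πR : Fin p → ℝ)
        (αc αr θmC θpC θmR θpR : ℝ),
        3 ≤ n → 3 ≤ p →
        Function.Injective g → Cm = X.submatrix id g →
        Function.Injective f → Rm = X.submatrix f id →
        IsUnit (Cmᵀ * Cm).det → IsUnit (Rm * Rmᵀ).det →
        0 < αc → 0 < αr →
        (∀ i, Cm i ≠ 0 → (n : ℝ) ^ (-αc) ≤ (Cm i ⬝ᵥ Cm i) / frobNorm Cm ^ 2) →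
        (∀ j, Rmᵀ j ≠ 0 →
          (p : ℝ) ^ (-αr) ≤ (Rmᵀ j ⬝ᵥ Rmᵀ j) / frobNorm Rmᵀ ^ 2) →
        1 / 2 ≤ θmC → θmC ≤ 1 → 1 ≤ θpC →
        1 / 2 ≤ θmR → θmR ≤ 1 → 1 ≤ θpR →
        (∀ i, 0 ≤ πC i) → (∑ i, πC i = 1) →
        (∀ j, 0 ≤ πR j) → (∑ j, πR j = 1) →
        (∀ i, lev Cm i / (c * θpC) ≤ πC i ∧ πC i ≤ lev Cm i / (c * θmC)) →
        (∀ j, lev Rmᵀ j / (r * θpR) ≤ πR j ∧ πR j ≤ lev Rmᵀ j / (r * θmR)) →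
        ∀ δ : ℝ, 0 < δ →
          δ ≤ (n : ℝ) ^ (-(3 + αc)) → δ ≤ (p : ℝ) ^ (-(3 + αr)) →
        C₀ * θpC * c * Real.log (c / δ) ≤ mc →
        C₀ * θpR * r * Real.log (r / δ) ≤ mr →
        ∃ ζ : Finset ((Fin mc → Fin n) × (Fin mr → Fin p)),
          1 - δ ≤ eventProb (curP πC πR) ζ ∧
          (∀ ω ∈ ζ,
            IsUnit ((samplingS πC ω.1 * Cm)ᵀ * (samplingS πC ω.1 * Cm)).det ∧
            IsUnit (Rm * (samplingS πR ω.2)ᵀ * samplingS πR ω.2 * Rmᵀ).det) ∧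
          (let ε : ℝ := C' *
              ((Real.log n / Real.log (Real.log n)) *
                  Real.sqrt (θpC ^ 3 * c ^ 3 / mc ^ 3) +
                max (θmC⁻¹ - 1) (1 - θpC⁻¹) * θpC * c / mc +
                (Real.log p / Real.log (Real.log p)) *
                  Real.sqrt (θpR ^ 3 * r ^ 3 / mr ^ 3) +
                max (θmR⁻¹ - 1) (1 - θpR⁻¹) * θpR * r / mr);
            lossCUR X Cm Rm (condExp (curP πC πR) ζ (curUtilde X Cm Rm πC πR)) -
                lossCUR X Cm Rm (optCUR X Cm Rm)
              ≤ ε ^ 2 * lossCUR X Cm Rm (optCUR X Cm Rm) ∧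
            condExp (curP πC πR) ζ
                (fun ω => lossCUR X Cm Rm (curUtilde X Cm Rm πC πR ω)) -
                lossCUR X Cm Rm (optCUR X Cm Rm)
              ≤ ((curDelta1 X Cm πC mc + curDelta2 X Rm πR mr) ^ 2 +
                  Real.sqrt (ε * lossCUR X Cm Rm (optCUR X Cm Rm)) *
                    (curDelta1 X Cm πC mc + curDelta2 X Rm πR mr)) +
                ε * lossCUR X Cm Rm (optCUR X Cm Rm)) := by
  refine ⟨320, K₂, by norm_num, by unfold K₂ K₁; norm_num, ?_⟩
  intro n p c r mc mr X Cm Rm g f πC πR αc αr θmC θpC θmR θpR hn hp _ _ _ _ hC hR hαc hαr _ _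
    hmC hmC1 hpC hmR hmR1 hpR hπC hπC1 hπR hπR1 hlC hlR δ hδ hδn hδp hmc hmr
  have hδ27 : δ ≤ 1 / 27 := delta_le hn hαc hδn
  have hR' : IsUnit (Rmᵀᵀ * Rmᵀ).det := by rwa [transpose_transpose]
  have LC : LevSampling Cm πC mc θmC θpC δ := ⟨hC, hmC, hmC1, hpC, hπC, hπC1, hlC, hδ, hδ27, hmc⟩
  have LR : LevSampling Rmᵀ πR mr θmR θpR δ := ⟨hR', hmR, hmR1, hpR, hπR, hπR1, hlR, hδ, hδ27, hmr⟩
  obtain ⟨hεC, ζ₁, hP1, hU1, B1⟩ := LC.sketch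
  obtain ⟨hεR, ζ₂, hP2, hU2, B2⟩ := LR.sketch
  have hcurP : (curP πC πR : (Fin mc → Fin n) × (Fin mr → Fin p) → ℝ) =
      fun ω => samplingP πC ω.1 * samplingP πR ω.2 := rfl
  refine ⟨ζ₁ ×ˢ ζ₂, ?_, ?_, ?_⟩
  · rw [hcurP, eventProb_prod]
    nlinarith [mul_le_mul hP1 hP2 (by linarith) (by linarith)]
  · intro ω hω
    rw [mem_product] at hω
    refine ⟨hU1 _ hω.1, ?_⟩
    have := hU2 _ hω.2
    simpa only [transpose_mul, transpose_transpose, Matrix.mul_assoc] using this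
  intro ε
  -- Comparison of `ε` with the one-sided error parameters.
  set κ₁ := θpC * c / mc with hκ₁
  set κ₂ := θpR * r / mr with hκ₂
  set s₁ := √(κ₁ ^ 3) + epsθ θmC θpC * κ₁ with hs₁
  set s₂ := √(κ₂ ^ 3) + epsθ θmR θpR * κ₂ with hs₂
  have hκ10 := B1.κ_nonneg
  have hκ20 := B2.κ_nonneg
  have hq1 := Real.sqrt_nonneg (κ₁ ^ 3)
  have hq2 := Real.sqrt_nonneg (κ₂ ^ 3)
  have he1 : 0 ≤ epsθ θmC θpC * κ₁ := mul_nonneg hεC hκ10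
  have he2 : 0 ≤ epsθ θmR θpR * κ₂ := mul_nonneg hεR hκ20
  have hs10 : 0 ≤ s₁ := add_nonneg hq1 he1
  have hs20 : 0 ≤ s₂ := add_nonneg hq2 he2
  have hs11 : s₁ ≤ 2 := by
    have h1 : √(κ₁ ^ 3) ≤ 1 := Real.sqrt_le_one.2 (pow_le_one₀ hκ10 B1.κ_le)
    have h2 : epsθ θmC θpC * κ₁ ≤ 1 * 1 := mul_le_mul (epsθ_le hmC hpC) B1.κ_le hκ10 (by norm_num)
    linarith
  have hK2 : 0 ≤ K₂ := by unfold K₂; positivity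
  have hε : K₂ * (s₁ + s₂) ≤ ε := by
    refine mul_le_mul_of_nonneg_left ?_ hK2
    have e1 : θpC ^ 3 * c ^ 3 / mc ^ 3 = κ₁ ^ 3 := by rw [hκ₁, div_pow, mul_pow]
    have e2 : θpR ^ 3 * r ^ 3 / mr ^ 3 = κ₂ ^ 3 := by rw [hκ₂, div_pow, mul_pow]
    have e3 : max (θmC⁻¹ - 1) (1 - θpC⁻¹) * θpC * c / mc = epsθ θmC θpC * κ₁ := by
      rw [hκ₁]; unfold epsθ; ring
    have e4 : max (θmR⁻¹ - 1) (1 - θpR⁻¹) * θpR * r / mr = epsθ θmR θpR * κ₂ := by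
      rw [hκ₂]; unfold epsθ; ring
    rw [e1, e2, e3, e4]
    have h1 := mul_le_mul_of_nonneg_right (one_le_log_ratio hn) hq1
    have h2 := mul_le_mul_of_nonneg_right (one_le_log_ratio hp) hq2
    linarith
  have hε0 : 0 ≤ ε := le_trans (mul_nonneg hK2 (add_nonneg hs10 hs20)) hε
  clear_value ε
  have hL : lossCUR X Cm Rm (optCUR X Cm Rm) = fsq (colProj Cm * X * colProj Rmᵀ - X) := by
    unfold lossCUR; rw [frobNorm_sq, recon_opt]
  have hL0 := fsq_nonneg (colProj Cm * X * colProj Rmᵀ - X)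
  constructor
  · rw [excess_loss X Cm Rm hC hR, hL]
    have e : Cm * condExp (curP πC πR) (ζ₁ ×ˢ ζ₂) (curUtilde X Cm Rm πC πR) * Rm =
        (∑ ω ∈ ζ₁, ((eventProb (samplingP πC) ζ₁)⁻¹ * samplingP πC ω) • obl Cm πC ω) * X *
          (∑ ω ∈ ζ₂, ((eventProb (samplingP πR) ζ₂)⁻¹ * samplingP πR ω) • obl Rmᵀ πR ω)ᵀ := by
      rw [hcurP, condExp_prod, Matrix.mul_sum, Matrix.sum_mul, sum_product, Matrix.sum_mul, Matrix.sum_mul]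
      refine sum_congr rfl fun ω _ => ?_
      rw [transpose_sum, Matrix.mul_sum]
      refine sum_congr rfl fun η _ => ?_
      rw [Matrix.mul_smul, Matrix.smul_mul, recon_fast, transpose_smul, Matrix.mul_smul,
        Matrix.smul_mul, Matrix.smul_mul, smul_smul]
      congr 1
      ring
    have hb := bias_combine B1 B2 X
    rw [← e] at hb
    have hb' := hb.trans (mul_le_mul_of_nonneg_right
      (bias_const rfl rfl hs10 hs20 hs11 hε) (Real.sqrt_nonneg _))
    have := pow_le_pow_left₀ (Real.sqrt_nonneg _) hb' 2
    rwa [Real.sq_sqrt (fsq_nonneg _), mul_pow, Real.sq_sqrt hL0] at this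
  · have hv := var_combine B1 B2 X
    rw [← curDelta1_eq X Cm mc B1.d_nonneg, ← curDelta2_eq X Rm mr B2.d_nonneg] at hv
    have e : condExp (curP πC πR) (ζ₁ ×ˢ ζ₂) (fun ω => lossCUR X Cm Rm (curUtilde X Cm Rm πC πR ω)) -
        lossCUR X Cm Rm (optCUR X Cm Rm) =
        ∑ ω ∈ ζ₁ ×ˢ ζ₂, ((eventProb (samplingP πC) ζ₁)⁻¹ * samplingP πC ω.1) *
          ((eventProb (samplingP πR) ζ₂)⁻¹ * samplingP πR ω.2) *
          fsq (obl Cm πC ω.1 * X * (obl Rmᵀ πR ω.2)ᵀ - colProj Cm * X * colProj Rmᵀ) := by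
      have hw : ∑ ω ∈ ζ₁ ×ˢ ζ₂, ((eventProb (samplingP πC) ζ₁)⁻¹ * samplingP πC ω.1) *
          ((eventProb (samplingP πR) ζ₂)⁻¹ * samplingP πR ω.2) = 1 := by
        have := sum_mul_sum ζ₁ ζ₂ (fun ω => (eventProb (samplingP πC) ζ₁)⁻¹ * samplingP πC ω)
          (fun ω => (eventProb (samplingP πR) ζ₂)⁻¹ * samplingP πR ω)
        rw [B1.w_sum, B2.w_sum, one_mul] at this
        rw [sum_product]; exact this.symm
      have hw' : lossCUR X Cm Rm (optCUR X Cm Rm) = ∑ ω ∈ ζ₁ ×ˢ ζ₂,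
          ((eventProb (samplingP πC) ζ₁)⁻¹ * samplingP πC ω.1) *
          ((eventProb (samplingP πR) ζ₂)⁻¹ * samplingP πR ω.2) * lossCUR X Cm Rm (optCUR X Cm Rm) := by
        rw [← sum_mul, hw, one_mul]
      rw [hcurP, condExp_prod, hw', ← sum_sub_distrib]
      refine sum_congr rfl fun ω _ => ?_
      rw [smul_eq_mul, ← mul_sub, excess_loss X Cm Rm hC hR, recon_fast]
    have hV0 : 0 ≤ ∑ ω ∈ ζ₁ ×ˢ ζ₂, ((eventProb (samplingP πC) ζ₁)⁻¹ * samplingP πC ω.1) *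
          ((eventProb (samplingP πR) ζ₂)⁻¹ * samplingP πR ω.2) *
          fsq (obl Cm πC ω.1 * X * (obl Rmᵀ πR ω.2)ᵀ - colProj Cm * X * colProj Rmᵀ) :=
      sum_nonneg fun ω hω => by
        rw [mem_product] at hω
        exact mul_nonneg (mul_nonneg (B1.w_nonneg _ hω.1) (B2.w_nonneg _ hω.2)) (fsq_nonneg _)
    rw [e, hL]
    refine var_final hV0 (add_nonneg (Real.sqrt_nonneg _) (Real.sqrt_nonneg _)) hL0 hv ?_
    exact var_const (sq_le_sqrt_cube hκ10 B1.κ_le) (sq_le_sqrt_cube hκ20 B2.κ_le)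
      (le_add_of_nonneg_right he1) (le_add_of_nonneg_right he2) hε

end
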